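/- Let k be an algebraically closed field of characteristic 0 and k_q = k[q,q^{-1}]. For each (m,n) there is a (unique) k_q-algebra homomorphism ρ^q_{(m,n)} : k_q[b]_{m,n} → k_q[b]_{m,n} ⊗_{k_q} k_q[SL_{m,0}] with ρ^q_{(m,n)}(b_{i,j}) = Σ_{k=-m}^{-1} b_{i,k} ⊗ g_{k,j}, and for every compatible family x = (x_{(m,n)}) ∈ k_q[M_∞] the following are equivalent: (i) ρ^q_{(m,n)}(x_{(m,n)}) = x_{(m,n)} ⊗ 1 for all (m,n); (ii) x_{(m,n)} ∈ k_q[Δ_{m,n}] for all (m,n). In other words, the ring of coinvariants k_q[M_∞]^{k_q[SL_{∞,0}]} equals the quantum infinite dimensional grassmannian k̂_q[Δ_∞], viewed inside k_q[M_∞] as the subring of families with all components in the quantum grassmannians k_q[Δ_{m,n}]. -/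

import Mathlib

set_option maxHeartbeats 2000000
set_option synthInstance.maxHeartbeats 400000

noncomputable section

open TensorProduct

/-- `k_q = k[q, q⁻¹]`, the ring of Laurent polynomials over `k`. -/
abbrev kq (k : Type) [Field k] : Type := LaurentPolynomial k

/-- The parameter `q ∈ k_q`. -/
def qParam (k : Type) [Field k] : kq k := LaurentPolynomial.T 1

/-- The inverse parameter `q⁻¹ ∈ k_q`. -/
def qInv (k : Type) [Field k] : kq k := LaurentPolynomial.T (-1)

/-- Row indices of the generic `(m+n) × m` quantum matrix: integers `-m, ..., n-1`. -/
abbrev RowI (m n : ℕ) : Type := ↥(Finset.Icc (-(m : ℤ)) ((n : ℤ) - 1))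

/-- Column indices: integers `-m, ..., -1`. -/
abbrev ColI (m : ℕ) : Type := ↥(Finset.Icc (-(m : ℤ)) (-1 : ℤ))

/-- The defining relations of a quantum matrix algebra, with rows indexed by `R` and
columns indexed by `C`. -/
inductive QMRel (k : Type) [Field k] (R C : Type) [LinearOrder R] [LinearOrder C] :
    FreeAlgebra (kq k) (R × C) → FreeAlgebra (kq k) (R × C) → Prop
  | col (i i' : R) (j : C) (h : i < i') :
      QMRel k R C (FreeAlgebra.ι (kq k) (i, j) * FreeAlgebra.ι (kq k) (i', j))
        (qInv k • (FreeAlgebra.ι (kq k) (i', j) * FreeAlgebra.ι (kq k) (i, j)))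
  | row (i : R) (j j' : C) (h : j < j') :
      QMRel k R C (FreeAlgebra.ι (kq k) (i, j) * FreeAlgebra.ι (kq k) (i, j'))
        (qInv k • (FreeAlgebra.ι (kq k) (i, j') * FreeAlgebra.ι (kq k) (i, j)))
  | comm (i i' : R) (j j' : C) (h1 : i < i') (h2 : j' < j) :
      QMRel k R C (FreeAlgebra.ι (kq k) (i, j) * FreeAlgebra.ι (kq k) (i', j'))
        (FreeAlgebra.ι (kq k) (i', j') * FreeAlgebra.ι (kq k) (i, j))
  | qcomm (i i' : R) (j j' : C) (h1 : i < i') (h2 : j < j') :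
      QMRel k R C
        (FreeAlgebra.ι (kq k) (i, j) * FreeAlgebra.ι (kq k) (i', j') -
          FreeAlgebra.ι (kq k) (i', j') * FreeAlgebra.ι (kq k) (i, j))
        ((qInv k - qParam k) • (FreeAlgebra.ι (kq k) (i', j) * FreeAlgebra.ι (kq k) (i, j')))

/-- The quantum matrix algebra with rows indexed by `R` and columns indexed by `C`. -/
abbrev QMatG (k : Type) [Field k] (R C : Type) [LinearOrder R] [LinearOrder C] : Type :=
  RingQuot (QMRel k R C)

/-- The generator `a_{r,c}` of the quantum matrix algebra. -/
def qgen (k : Type) [Field k] (R C : Type) [LinearOrder R] [LinearOrder C] (r : R) (c : C) :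
    QMatG k R C :=
  RingQuot.mkAlgHom (kq k) (QMRel k R C) (FreeAlgebra.ι (kq k) (r, c))

/-- The rectangular quantum matrix algebra `k_q[a]_{m,n}`. -/
abbrev QMat (k : Type) [Field k] (m n : ℕ) : Type := QMatG k (RowI m n) (ColI m)

/-- The generator `a_{i,j}` of `k_q[a]_{m,n}`. -/
def av (k : Type) [Field k] (m n : ℕ) (i : RowI m n) (j : ColI m) : QMat k m n :=
  qgen k (RowI m n) (ColI m) i j

/-- The number of inversions of a map between finite linearly ordered sets. -/
def inversions {a b : ℕ} (f : Fin a → Fin b) : ℕ :=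
  ((Finset.univ : Finset (Fin a × Fin a)).filter fun p => p.1 < p.2 ∧ f p.2 < f p.1).card

/-- The coefficient `(-q)^{-ℓ}`. -/
def qCoeff (k : Type) [Field k] (l : ℕ) : kq k :=
  (-1 : kq k) ^ l * LaurentPolynomial.T (-(l : ℤ))

/-- The general quantum minor on rows `row 0 < row 1 < ⋯` and columns
`col 0 < col 1 < ⋯`:
`Σ_σ (-q)^{-ℓ(σ)} a_{row 0, col (σ 0)} ⋯ a_{row (s-1), col (σ (s-1))}`. -/
def qMinorG (k : Type) [Field k] (R C : Type) [LinearOrder R] [LinearOrder C]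
    (s : ℕ) (row : Fin s → R) (col : Fin s → C) : QMatG k R C :=
  ∑ σ : Equiv.Perm (Fin s),
    qCoeff k (inversions ⇑σ) •
      (List.ofFn fun t : Fin s => qgen k R C (row t) (col (σ t))).prod

/-- The quantum minor `D_{i_0 … i_{m-1}}` of `k_q[a]_{m,n}` on the rows in `I`. -/
def qMinor (k : Type) [Field k] (m n : ℕ) (I : Finset ℤ) (hI : I.card = m)
    (hsub : I ⊆ Finset.Icc (-(m : ℤ)) ((n : ℤ) - 1)) : QMat k m n :=
  qMinorG k (RowI m n) (ColI m) m
    (fun s => ⟨I.orderEmbOfFin hI s, hsub (Finset.orderEmbOfFin_mem I hI s)⟩)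
    (fun t => ⟨-(m : ℤ) + (t : ℕ), by
      have := t.2
      simp only [Finset.mem_Icc]
      omega⟩)

/-- The quantum grassmannian `k_q[Δ_{m,n}]`: the subalgebra of `k_q[a]_{m,n}` generated
by the quantum minors. -/
def QDeltaSub (k : Type) [Field k] (m n : ℕ) : Subalgebra (kq k) (QMat k m n) :=
  Algebra.adjoin (kq k) {x | ∃ I hI hsub, x = qMinor k m n I hI hsub}

/-- The square quantum matrix algebra on the indices `-m, ..., n-1`. -/
abbrev SqMat (k : Type) [Field k] (m n : ℕ) : Type := QMatG k (RowI m n) (RowI m n)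

/-- `N = m + n`, the size of the square generic quantum matrix, as the cardinality of
the index set. -/
def NN (m n : ℕ) : ℕ := (Finset.Icc (-(m : ℤ)) ((n : ℤ) - 1)).card

/-- The quantum determinant of the generic square quantum matrix. -/
def sqDet (k : Type) [Field k] (m n : ℕ) : SqMat k m n :=
  qMinorG k (RowI m n) (RowI m n) (NN m n)
    (fun t => (Finset.Icc (-(m : ℤ)) ((n : ℤ) - 1)).orderIsoOfFin rfl t)
    (fun t => (Finset.Icc (-(m : ℤ)) ((n : ℤ) - 1)).orderIsoOfFin rfl t)

/-- The quantum special linear group ring `k_q[SL_{m,n}]`: the quotient of the square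
quantum matrix algebra by the two-sided ideal generated by `(quantum determinant) − 1`. -/
abbrev QSL (k : Type) [Field k] (m n : ℕ) : Type :=
  RingQuot (fun x y : SqMat k m n => x = sqDet k m n ∧ y = 1)

/-- The quotient map onto `k_q[SL_{m,n}]`. -/
def qslMk (k : Type) [Field k] (m n : ℕ) : SqMat k m n →ₐ[kq k] QSL k m n :=
  RingQuot.mkAlgHom (kq k) _

/-- The generator `g_{i,j}` of `k_q[SL_{m,n}]`. -/
def qgSL (k : Type) [Field k] (m n : ℕ) (i j : RowI m n) : QSL k m n :=
  qslMk k m n (qgen k (RowI m n) (RowI m n) i j)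

/-- `(-q)^z` for an integer exponent `z`. -/
def negqPow (k : Type) [Field k] (z : ℤ) : kq k :=
  (if Even z then 1 else -1) * LaurentPolynomial.T z

lemma card_erase_univ (m n : ℕ) (i : RowI m n) :
    ((Finset.univ : Finset (RowI m n)).erase i).card = NN m n - 1 := by
  simp [Finset.card_erase_of_mem, Finset.card_univ, NN]

/-- The inverse limit of an inverse system of rings, realized concretely as the
subring of the product consisting of the compatible families. -/
def ringInvLim {ι : Type*} [Preorder ι] (G : ι → Type*) [∀ i, Ring (G i)]
    (f : ∀ i j : ι, i ≤ j → (G j →+* G i)) : Subring (∀ i, G i) where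
  carrier := {x | ∀ (i j : ι) (h : i ≤ j), f i j h (x j) = x i}
  zero_mem' := by intro i j h; simp
  one_mem' := by intro i j h; simp
  add_mem' := by
    intro a b ha hb i j h
    simp only [Pi.add_apply, map_add, ha i j h, hb i j h]
  mul_mem' := by
    intro a b ha hb i j h
    simp only [Pi.mul_apply, map_mul, ha i j h, hb i j h]
  neg_mem' := by
    intro a ha i j h
    simp only [Pi.neg_apply, map_neg, ha i j h]

/-- The index set: pairs of positive integers, ordered componentwise. -/
abbrev PIdx : Type := {p : ℕ × ℕ // 0 < p.1 ∧ 0 < p.2}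

/-- The defining property of the quantum coaction
`ρ^q_{(m,n)} : k_q[b]_{m,n} → k_q[b]_{m,n} ⊗ k_q[SL_{m,0}]` on the generators:
`b_{i,j} ↦ Σ_l b_{i,l} ⊗ g_{l,j}`. -/
def rhoqProp (k : Type) [Field k] (m n : ℕ)
    (ρ : QMat k m n →ₐ[kq k] QMat k m n ⊗[kq k] QSL k m 0) : Prop :=
  ∀ (i : RowI m n) (j : ColI m),
    ρ (av k m n i j) =
      ∑ l : RowI m 0,
        av k m n i ⟨l.1, by
          have hl := Finset.mem_Icc.mp l.2
          exact Finset.mem_Icc.mpr ⟨hl.1, by omega⟩⟩ ⊗ₜ[kq k]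
          qgSL k m 0 l ⟨j.1, by
            have hj := Finset.mem_Icc.mp j.2
            exact Finset.mem_Icc.mpr ⟨hj.1, by omega⟩⟩

/-- The defining property of the system of maps `E^q` on the generators. -/
def EqSysProp (k : Type) [Field k]
    (E : ∀ p q : PIdx, p ≤ q →
      (QMat k q.1.1 q.1.2 →ₐ[kq k] QMat k p.1.1 p.1.2)) : Prop :=
  ∀ (p q : PIdx) (h : p ≤ q) (i : RowI q.1.1 q.1.2) (j : ColI q.1.1),
    E p q h (av k q.1.1 q.1.2 i j) =
      if h2 : (i.1 ∈ Finset.Icc (-(p.1.1 : ℤ)) ((p.1.2 : ℤ) - 1)) ∧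
          (j.1 ∈ Finset.Icc (-(p.1.1 : ℤ)) (-1 : ℤ)) then
        av k p.1.1 p.1.2 ⟨i.1, h2.1⟩ ⟨j.1, h2.2⟩
      else if i.1 = j.1 then 1 else 0

set_option linter.all false
set_option linter.unusedSectionVars false
set_option linter.unusedSimpArgs false
set_option linter.unusedVariables false
namespace QG

/-- The relations of a quantum matrix, abstractly. -/
structure IsQM {K A : Type*} [CommRing K] [Ring A] [Algebra K A] (q qi : K)
    {R C : Type*} [LT R] [LT C] (X : R → C → A) : Prop where
  col : ∀ i i' j, i < i' → X i j * X i' j = qi • (X i' j * X i j)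
  row : ∀ i j j', j < j' → X i j * X i j' = qi • (X i j' * X i j)
  comm : ∀ i i' j j', i < i' → j' < j → X i j * X i' j' = X i' j' * X i j
  qcomm : ∀ i i' j j', i < i' → j < j' →
    X i j * X i' j' = X i' j' * X i j + (qi - q) • (X i' j * X i j')

theorem sum_pair_symm {A L : Type*} [AddCommGroup A] [LinearOrder L] (S : Finset L)
    (F : L → L → A) (hd : ∀ l, F l l = 0) (ho : ∀ l l', l < l' → F l l' + F l' l = 0) :
    ∑ l ∈ S, ∑ l' ∈ S, F l l' = 0 := by
  rw [← Finset.sum_product']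
  refine Finset.sum_involution (fun p _ => (p.2, p.1)) ?_ ?_ ?_ ?_
  · rintro ⟨a, b⟩ _
    rcases lt_trichotomy a b with h | h | h
    · exact ho _ _ h
    · subst h; simp [hd]
    · rw [add_comm]; exact ho _ _ h
  · rintro ⟨a, b⟩ _ hne h
    simp only [Prod.mk.injEq] at h
    apply hne
    obtain ⟨h1, _⟩ := h
    subst h1
    exact hd _
  · rintro ⟨a, b⟩ h
    simp only [Finset.mem_product] at h ⊢
    exact ⟨h.2, h.1⟩
  · rintro ⟨a, b⟩ _
    rfl

section general
variable {K A : Type*} [CommRing K] [Ring A] [Algebra K A] {q qi : K}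
variable {R C L : Type*} [LinearOrder R] [LinearOrder C] [LinearOrder L]

theorem sum_mul_pair (S : Finset L) (f g h k : L → A) (hc : ∀ l l', g l * h l' = h l' * g l) :
    (∑ l ∈ S, f l * g l) * (∑ l ∈ S, h l * k l) =
      ∑ l ∈ S, ∑ l' ∈ S, (f l * h l') * (g l * k l') := by
  rw [Finset.sum_mul_sum]
  refine Finset.sum_congr rfl fun l _ => Finset.sum_congr rfl fun l' _ => ?_
  rw [mul_assoc, ← mul_assoc (g l), hc, mul_assoc, mul_assoc]

theorem IsQM.mul (hq : q * qi = 1) {X : R → L → A} {Y : L → C → A} (hX : IsQM q qi X)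
    (hY : IsQM q qi Y) (hc : ∀ i l l' j, X i l * Y l' j = Y l' j * X i l) (S : Finset L) :
    IsQM q qi (fun i j => ∑ l ∈ S, X i l * Y l j) := by
  have key : ∀ i j i' j', (∑ l ∈ S, X i l * Y l j) * (∑ l ∈ S, X i' l * Y l j') =
      ∑ l ∈ S, ∑ l' ∈ S, (X i l * X i' l') * (Y l j * Y l' j') := fun i j i' j' =>
    sum_mul_pair S _ _ _ _ fun l l' => (hc _ _ _ _).symm
  refine ⟨?_, ?_, ?_, ?_⟩
  · intro i i' j h
    simp only [key]
    rw [Finset.sum_comm (f := fun l l' => (X i' l * X i l') * (Y l j * Y l' j)), ← sub_eq_zero]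
    simp only [Finset.smul_sum, ← Finset.sum_sub_distrib]
    apply sum_pair_symm
    · intro l
      rw [hX.col i i' l h, smul_mul_assoc, sub_self]
    · intro l l' hl
      rw [hX.qcomm _ _ _ _ h hl, hX.comm _ _ _ _ h hl, hY.col _ _ _ hl]
      simp only [smul_mul_assoc, mul_smul_comm, add_mul]
      linear_combination (norm := module) (-hq) • (X i' l * X i l' * (Y l' j * Y l j))
  · intro i j j' h
    simp only [key]
    rw [Finset.sum_comm (f := fun l l' => (X i l * X i l') * (Y l j' * Y l' j)), ← sub_eq_zero]
    simp only [Finset.smul_sum, ← Finset.sum_sub_distrib]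
    apply sum_pair_symm
    · intro l
      rw [hY.row _ _ _ h, mul_smul_comm, sub_self]
    · intro l l' hl
      rw [hY.qcomm _ _ _ _ hl h, hX.row _ _ _ hl, hY.comm _ _ _ _ hl h]
      simp only [smul_mul_assoc, mul_smul_comm, mul_add, smul_add, smul_smul, mul_sub, sub_smul,
        smul_sub]
      simp only [mul_comm qi q, hq, one_smul]
      abel
  · intro i i' j j' h h'
    simp only [key]
    rw [Finset.sum_comm (f := fun l l' => (X i' l * X i l') * (Y l j' * Y l' j)), ← sub_eq_zero]
    simp only [← Finset.sum_sub_distrib]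
    apply sum_pair_symm
    · intro l
      rw [hX.col _ _ _ h, hY.row _ _ _ h']
      simp only [smul_mul_assoc, mul_smul_comm]
      abel
    · intro l l' hl
      rw [hX.qcomm _ _ _ _ h hl, hX.comm _ _ _ _ h hl, hY.qcomm _ _ _ _ hl h',
        hY.comm _ _ _ _ hl h']
      simp only [smul_mul_assoc, mul_smul_comm, mul_add, add_mul, smul_add, smul_smul]
      abel
  · intro i i' j j' h h'
    simp only [key]
    rw [Finset.sum_comm (f := fun l l' => (X i' l * X i l') * (Y l j' * Y l' j)), ← sub_eq_zero]
    simp only [Finset.smul_sum, ← Finset.sum_sub_distrib, ← Finset.sum_add_distrib]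
    apply sum_pair_symm
    · intro l
      rw [hX.col _ _ _ h, hY.row _ _ _ h']
      simp only [smul_mul_assoc, mul_smul_comm, smul_smul, mul_sub, sub_smul, smul_sub, sub_mul]
      linear_combination (norm := module) (hq) • (X i' l * X i l * (Y l j' * Y l j))
    · intro l l' hl
      rw [hX.qcomm _ _ _ _ h hl, hX.comm _ _ _ _ h hl, hY.qcomm _ _ _ _ hl h',
        hY.comm _ _ _ _ hl h']
      simp only [smul_mul_assoc, mul_smul_comm, mul_add, add_mul]
      module

theorem IsQM.comp {X : R → C → A} (hX : IsQM q qi X) {R' C' : Type*} [LinearOrder R']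
    [LinearOrder C'] {f : R' → R} {g : C' → C} (hf : StrictMono f) (hg : StrictMono g) :
    IsQM q qi (fun i j => X (f i) (g j)) :=
  ⟨fun i i' j h => hX.col _ _ _ (hf h), fun i j j' h => hX.row _ _ _ (hg h),
    fun i i' j j' h h' => hX.comm _ _ _ _ (hf h) (hg h'),
    fun i i' j j' h h' => hX.qcomm _ _ _ _ (hf h) (hg h')⟩

theorem IsQM.map {B : Type*} [Ring B] [Algebra K B] {X : R → C → A} (hX : IsQM q qi X)
    (φ : A →ₐ[K] B) : IsQM q qi (fun i j => φ (X i j)) := by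
  refine ⟨fun i i' j h => ?_, fun i j j' h => ?_, fun i i' j j' h h' => ?_,
    fun i i' j j' h h' => ?_⟩
  · simp only [← map_mul, ← map_smul, ← map_add, hX.col _ _ _ h]
  · simp only [← map_mul, ← map_smul, ← map_add, hX.row _ _ _ h]
  · simp only [← map_mul, ← map_smul, ← map_add, hX.comm _ _ _ _ h h']
  · simp only [← map_mul, ← map_smul, ← map_add, hX.qcomm _ _ _ _ h h']

/-- identity matrix with a 2x2 block at `s, s+1`. -/
def blk (s : ℕ) (a b c d : A) (i j : ℕ) : A :=
  if i = s then (if j = s then a else if j = s + 1 then b else 0)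
  else if i = s + 1 then (if j = s then c else if j = s + 1 then d else 0)
  else if i = j then 1 else 0

theorem blk_isQM (s : ℕ) {a b c d : A} (hab : a * b = qi • (b * a)) (hcd : c * d = qi • (d * c))
    (hac : a * c = qi • (c * a)) (hbd : b * d = qi • (d * b)) (hbc : b * c = c * b)
    (had : a * d = d * a + (qi - q) • (c * b)) : IsQM q qi (blk s a b c d) := by
  refine ⟨fun i i' j h => ?_, fun i j j' h => ?_, fun i i' j j' h h' => ?_,
    fun i i' j j' h h' => ?_⟩
  all_goals
    unfold blk
    split_ifs <;> first | (exfalso; omega) | (simp [*]; done) | skip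

end general

variable {k : Type} [Field k]

theorem qq : (qParam k) * (qInv k) = 1 := by
  rw [qParam, qInv, ← LaurentPolynomial.T_add]; simp

/-- universal property of quantum matrices. -/
def qlift {A R C : Type} [Ring A] [Algebra (kq k) A] [LinearOrder R] [LinearOrder C]
    (X : R → C → A) (hX : IsQM (qParam k) (qInv k) X) : QMatG k R C →ₐ[kq k] A :=
  RingQuot.liftAlgHom (kq k) ⟨FreeAlgebra.lift (kq k) (fun p : R × C => X p.1 p.2), by
    intro x y h
    induction h with
    | col i i' j h => simp [hX.col _ _ _ h]
    | row i j j' h => simp [hX.row _ _ _ h]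
    | comm i i' j j' h h' => simp [hX.comm _ _ _ _ h h']
    | qcomm i i' j j' h h' => simp [hX.qcomm _ _ _ _ h h']⟩

@[simp] theorem qlift_qgen {A R C : Type} [Ring A] [Algebra (kq k) A] [LinearOrder R]
    [LinearOrder C] (X : R → C → A) (hX : IsQM (qParam k) (qInv k) X) (i : R) (j : C) :
    qlift X hX (qgen k R C i j) = X i j := by
  simp [qlift, qgen]

theorem qgen_isQM (R C : Type) [LinearOrder R] [LinearOrder C] :
    IsQM (qParam k) (qInv k) (qgen k R C) := by
  refine ⟨fun i i' j h => ?_, fun i j j' h => ?_, fun i i' j j' h h' => ?_,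
    fun i i' j j' h h' => ?_⟩
  · have := RingQuot.mkAlgHom_rel (kq k) (QMRel.col (k := k) (R := R) (C := C) i i' j h)
    simpa [qgen] using this
  · have := RingQuot.mkAlgHom_rel (kq k) (QMRel.row (k := k) (R := R) (C := C) i j j' h)
    simpa [qgen] using this
  · have := RingQuot.mkAlgHom_rel (kq k) (QMRel.comm (k := k) (R := R) (C := C) i i' j j' h h')
    simpa [qgen] using this
  · have := RingQuot.mkAlgHom_rel (kq k) (QMRel.qcomm (k := k) (R := R) (C := C) i i' j j' h h')
    simp only [map_sub, map_mul, map_smul] at this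
    rw [sub_eq_iff_eq_add'] at this
    simpa [qgen] using this

theorem qhom_ext {A R C : Type} [Ring A] [Algebra (kq k) A] [LinearOrder R] [LinearOrder C]
    {f g : QMatG k R C →ₐ[kq k] A} (h : ∀ i j, f (qgen k R C i j) = g (qgen k R C i j)) :
    f = g := by
  apply RingQuot.ringQuot_ext'
  apply FreeAlgebra.hom_ext
  funext p
  exact h p.1 p.2

/-- columns as square indices -/
def c2r {m : ℕ} (j : ColI m) : RowI m 0 := ⟨j.1, by
            have hj := Finset.mem_Icc.mp j.2
            exact Finset.mem_Icc.mpr ⟨hj.1, by omega⟩⟩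

/-- square indices as columns -/
def r2c {m : ℕ} (l : RowI m 0) : ColI m := ⟨l.1, by
          have hl := Finset.mem_Icc.mp l.2
          exact Finset.mem_Icc.mpr ⟨hl.1, by omega⟩⟩

/-- ring structure on the tensor product. -/
@[reducible] def tRing (m n : ℕ) : Ring (QMat k m n ⊗[kq k] QSL k m 0) :=
  Algebra.semiringToRing (kq k)

attribute [local instance] tRing

theorem rho_exists (m n : ℕ) :
    ∃ ρ : QMat k m n →ₐ[kq k] QMat k m n ⊗[kq k] QSL k m 0, rhoqProp k m n ρ := by
  have h1 : IsQM (qParam k) (qInv k) (fun (i : RowI m n) (l : RowI m 0) =>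
      (av k m n i (r2c l)) ⊗ₜ[kq k] (1 : QSL k m 0)) :=
    ((qgen_isQM (k := k) (RowI m n) (ColI m)).comp (f := id) (g := r2c) strictMono_id
      (fun a b h => h)).map
      (Algebra.TensorProduct.includeLeft : QMat k m n →ₐ[kq k] QMat k m n ⊗[kq k] QSL k m 0)
  have h2 : IsQM (qParam k) (qInv k) (fun (l : RowI m 0) (j : ColI m) =>
      (1 : QMat k m n) ⊗ₜ[kq k] (qgSL k m 0 l (c2r j))) :=
    ((qgen_isQM (k := k) (RowI m 0) (RowI m 0)).comp (f := id) (g := c2r) strictMono_id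
      (fun a b h => h)).map
      ((Algebra.TensorProduct.includeRight : QSL k m 0 →ₐ[kq k] QMat k m n ⊗[kq k] QSL k m 0).comp
        (qslMk k m 0))
  have h3 := IsQM.mul qq h1 h2 (by intro i l l' j; simp) Finset.univ
  refine ⟨qlift _ h3, ?_⟩
  intro i j
  rw [av, qlift_qgen]
  refine Finset.sum_congr rfl fun l _ => ?_
  simp [r2c, c2r]

theorem rho_unique (m n : ℕ) (ρ ρ' : QMat k m n →ₐ[kq k] QMat k m n ⊗[kq k] QSL k m 0)
    (h : rhoqProp k m n ρ) (h' : rhoqProp k m n ρ') : ρ = ρ' := by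
  apply qhom_ext
  intro i j
  exact (h i j).trans (h' i j).symm

end QG

namespace QG

section invs
theorem inversions_swap {n b : ℕ} (f : Fin (n+1) → Fin b) (t : Fin n)
    (h : f t.castSucc < f t.succ) :
    inversions (f ∘ Equiv.swap t.castSucc t.succ) = inversions f + 1 := by
  unfold inversions
  set τ := Equiv.swap t.castSucc t.succ with hτ
  have hττ : ∀ x, τ (τ x) = x := fun x => Equiv.swap_apply_self _ _ _
  have hord : ∀ p r, p < r → (p, r) ≠ (t.castSucc, t.succ) → τ p < τ r := by
    intro p r hpr hne
    have : ¬ (p = t.castSucc ∧ r = t.succ) := fun hh => hne (by rw [hh.1, hh.2])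
    simp only [hτ, Equiv.swap_apply_def]
    split_ifs <;> simp only [Fin.lt_def, Fin.ext_iff, Fin.val_castSucc, Fin.val_succ] at * <;> omega
  have hmem : (t.castSucc, t.succ) ∈ (Finset.univ : Finset (Fin (n+1) × Fin (n+1))).filter
      (fun p => p.1 < p.2 ∧ (f ∘ τ) p.2 < (f ∘ τ) p.1) := by
    simp [hτ, h]
  rw [← Finset.card_erase_add_one hmem]
  congr 1
  refine Finset.card_nbij' (fun p => (τ p.1, τ p.2)) (fun p => (τ p.1, τ p.2)) ?_ ?_ ?_ ?_
  · rintro ⟨p, r⟩ hp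
    simp only [Finset.coe_erase, Finset.coe_filter, Finset.mem_univ, true_and, Set.mem_diff, Set.mem_setOf_eq,
      Set.mem_singleton_iff, Function.comp] at hp ⊢
    exact ⟨hord _ _ hp.1.1 hp.2, hp.1.2⟩
  · rintro ⟨p, r⟩ hp
    simp only [Finset.coe_erase, Finset.coe_filter, Finset.mem_univ, true_and, Set.mem_diff, Set.mem_setOf_eq,
      Set.mem_singleton_iff, Function.comp, hττ] at hp ⊢
    have hne : (p, r) ≠ (t.castSucc, t.succ) := by
      rintro hh
      simp only [Prod.mk.injEq] at hh
      rw [hh.1, hh.2] at hp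
      exact lt_asymm hp.2 h
    refine ⟨⟨hord _ _ hp.1 hne, hp.2⟩, ?_⟩
    intro hh
    simp only [Prod.mk.injEq] at hh
    have h1 := congrArg τ hh.1
    have h2 := congrArg τ hh.2
    rw [hττ] at h1 h2
    rw [hτ, Equiv.swap_apply_left] at h1
    rw [hτ, Equiv.swap_apply_right] at h2
    rw [h1, h2] at hp
    exact absurd hp.1 (by simp [Fin.lt_def])
  · rintro ⟨p, r⟩ _
    simp [hττ]
  · rintro ⟨p, r⟩ _
    simp [hττ]
end invs

theorem ofFn_split {A : Type*} [Monoid A] (n : ℕ) (t : Fin n) :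
    ∃ pre post : (Fin (n+1) → A) → A,
      (∀ x, (List.ofFn x).prod = pre x * (x t.castSucc * x t.succ) * post x) ∧
      (∀ x y, (∀ u, u ≠ t.castSucc → u ≠ t.succ → x u = y u) →
        pre x = pre y ∧ post x = post y) := by
  induction n with
  | zero => exact t.elim0
  | succ n ih =>
    refine Fin.cases ?_ (fun t' => ?_) t
    · refine ⟨fun _ => 1, fun x => (List.ofFn fun i : Fin n => x i.succ.succ).prod, ?_, ?_⟩
      · intro x
        rw [List.ofFn_succ, List.ofFn_succ]
        simp [mul_assoc]
      · intro x y h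
        refine ⟨rfl, ?_⟩
        show List.prod _ = List.prod _
        congr 2
        funext i
        apply h <;> simp [Fin.ext_iff]
    · obtain ⟨pre, post, h1, h2⟩ := ih t'
      refine ⟨fun x => x 0 * pre (fun i => x i.succ), fun x => post (fun i => x i.succ), ?_, ?_⟩
      · intro x
        rw [List.ofFn_succ, List.prod_cons, h1]
        simp only [mul_assoc]
        rfl
      · intro x y h
        have hh := h2 (fun i => x i.succ) (fun i => y i.succ) (fun u hu hu' => h _ (by
          simpa [Fin.ext_iff] using hu) (by simpa [Fin.ext_iff] using hu'))
        refine ⟨?_, hh.2⟩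
        show x 0 * _ = y 0 * _
        rw [hh.1, h 0 (by simp [Fin.ext_iff]) (by simp [Fin.ext_iff])]

section Dt
variable {k : Type} [Field k]

theorem qCoeff_succ (l : ℕ) : qCoeff k (l+1) = -(qInv k * qCoeff k l) := by
  unfold qCoeff qInv
  rw [pow_succ, show (-((l+1 : ℕ) : ℤ)) = -1 + -(l : ℤ) by push_cast; ring, LaurentPolynomial.T_add]
  ring

variable {B L : Type} [Ring B] [Algebra (kq k) B] [LinearOrder L]

/-- Determinant with arbitrary rows. -/
def Dt {m : ℕ} (G : L → Fin m → B) (f : Fin m → L) : B :=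
  ∑ σ : Equiv.Perm (Fin m), qCoeff k (inversions ⇑σ) • (List.ofFn fun t => G (f t) (σ t)).prod

theorem Dt_aux {n : ℕ} (t : Fin n) (h : Equiv.Perm (Fin (n+1)) → B)
    (H : ∀ σ, σ t.castSucc < σ t.succ →
      h σ + h (σ * Equiv.swap t.castSucc t.succ) = 0) :
    ∑ σ, h σ = 0 := by
  have hne : t.castSucc ≠ t.succ := by simp [Fin.ext_iff]
  refine Finset.sum_involution (fun σ _ => σ * Equiv.swap t.castSucc t.succ) ?_ ?_ ?_ ?_
  · intro σ _
    rcases lt_or_gt_of_ne (σ.injective.ne hne) with h1 | h1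
    · exact H σ h1
    · have := H (σ * Equiv.swap t.castSucc t.succ) (by simpa using h1)
      rw [mul_assoc, Equiv.swap_mul_self, mul_one] at this
      rw [add_comm]; exact this
  · intro σ _ _ hh
    rw [mul_eq_left] at hh
    have := congrArg (fun e => e t.castSucc) hh
    simp only [Equiv.swap_apply_left, Equiv.Perm.coe_one, id] at this
    exact hne this.symm
  · intros; simp
  · intro σ _
    rw [mul_assoc, Equiv.swap_mul_self, mul_one]

theorem Dt_eq {n : ℕ} {G : L → Fin (n+1) → B} (hG : IsQM (qParam k) (qInv k) G)
    (f : Fin (n+1) → L) (t : Fin n) (h : f t.castSucc = f t.succ) : Dt (k := k) G f = 0 := by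
  obtain ⟨pre, post, h1, h2⟩ := ofFn_split (A := B) n t
  apply Dt_aux t
  intro σ hσ
  have hne : t.castSucc ≠ t.succ := by simp [Fin.ext_iff]
  rw [Equiv.Perm.coe_mul, inversions_swap _ _ hσ, qCoeff_succ, h1, h1]
  obtain ⟨e1, e2⟩ := h2 (fun u => G (f u) ((σ ∘ Equiv.swap t.castSucc t.succ) u))
    (fun u => G (f u) (σ u)) (by
      intro u hu hu'
      simp [Equiv.swap_apply_of_ne_of_ne hu hu'])
  rw [e1, e2]
  simp only [Function.comp, Equiv.swap_apply_left, Equiv.swap_apply_right]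
  rw [h, hG.row _ _ _ hσ]
  simp only [mul_smul_comm, smul_mul_assoc]
  module

theorem Dt_swap {n : ℕ} {G : L → Fin (n+1) → B} (hG : IsQM (qParam k) (qInv k) G)
    (f : Fin (n+1) → L) (t : Fin n) (h : f t.castSucc < f t.succ) :
    Dt (k := k) G (f ∘ Equiv.swap t.castSucc t.succ) = - (qInv k • Dt (k := k) G f) := by
  obtain ⟨pre, post, h1, h2⟩ := ofFn_split (A := B) n t
  rw [eq_neg_iff_add_eq_zero, Dt, Dt, Finset.smul_sum, ← Finset.sum_add_distrib]
  apply Dt_aux t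
  intro σ hσ
  have hne : t.castSucc ≠ t.succ := by simp [Fin.ext_iff]
  rw [Equiv.Perm.coe_mul, inversions_swap _ _ hσ, qCoeff_succ, h1, h1, h1, h1]
  have e := fun (F1 : Fin (n+1) → L) (F2 : Fin (n+1) → Fin (n+1))
    (H1 : ∀ u, u ≠ t.castSucc → u ≠ t.succ → F1 u = f u)
    (H2 : ∀ u, u ≠ t.castSucc → u ≠ t.succ → F2 u = σ u) =>
      h2 (fun u => G (F1 u) (F2 u)) (fun u => G (f u) (σ u)) (by
        intro u hu hu'
        show G (F1 u) (F2 u) = G (f u) (σ u)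
        rw [H1 u hu hu', H2 u hu hu'])
  have s : ∀ {X : Type} (F : Fin (n+1) → X) u, u ≠ t.castSucc → u ≠ t.succ →
      (F ∘ Equiv.swap t.castSucc t.succ) u = F u := by
    intro X F u hu hu'
    simp [Equiv.swap_apply_of_ne_of_ne hu hu']
  rw [(e (f ∘ Equiv.swap t.castSucc t.succ) σ (s f) (fun _ _ _ => rfl)).1,
    (e (f ∘ Equiv.swap t.castSucc t.succ) σ (s f) (fun _ _ _ => rfl)).2,
    (e (f ∘ Equiv.swap t.castSucc t.succ) (σ ∘ Equiv.swap t.castSucc t.succ) (s f) (s σ)).1,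
    (e (f ∘ Equiv.swap t.castSucc t.succ) (σ ∘ Equiv.swap t.castSucc t.succ) (s f) (s σ)).2,
    (e f (σ ∘ Equiv.swap t.castSucc t.succ) (fun _ _ _ => rfl) (s σ)).1,
    (e f (σ ∘ Equiv.swap t.castSucc t.succ) (fun _ _ _ => rfl) (s σ)).2]
  simp only [Function.comp, Equiv.swap_apply_left, Equiv.swap_apply_right]
  rw [hG.qcomm _ _ _ _ h hσ, hG.comm _ _ _ _ h hσ]
  simp only [mul_smul_comm, smul_mul_assoc, mul_add, add_mul]
  linear_combination (norm := module) (-(qCoeff k (inversions σ)) • qq (k := k)) •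
    (pre (fun u => G (f u) (σ u)) * (G (f t.succ) (σ t.castSucc) * G (f t.castSucc) (σ t.succ)) *
      post (fun u => G (f u) (σ u)))

theorem Dt_all {m : ℕ} {G : Fin m → Fin m → B} (hG : IsQM (qParam k) (qInv k) G) :
    ∀ (N : ℕ) (f : Fin m → Fin m), inversions f ≤ N →
    (Function.Injective f → Dt (k := k) G f = qCoeff k (inversions f) • Dt (k := k) G id) ∧
    (¬ Function.Injective f → Dt (k := k) G f = 0) := by
  cases m with
  | zero =>
    intro N f _
    have : f = id := Subsingleton.elim _ _
    subst this
    refine ⟨fun _ => ?_, fun h => (h Function.injective_id).elim⟩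
    simp [inversions, qCoeff]
  | succ n =>
    intro N
    induction N with
    | zero =>
      intro f hf
      by_cases hm : StrictMono f
      · have : f = id := by
          have := Finset.orderEmbOfFin_unique (s := (Finset.univ : Finset (Fin (n+1))))
            (k := n+1) (by simp) (f := f) (by simp) hm
          have h2 := Finset.orderEmbOfFin_unique (s := (Finset.univ : Finset (Fin (n+1))))
            (k := n+1) (by simp) (f := id) (by simp) strictMono_id
          rw [this, ← h2]
        subst this
        refine ⟨fun _ => ?_, fun h => (h Function.injective_id).elim⟩
        rw [Nat.le_zero.mp hf]
        simp [qCoeff]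
      · rw [Fin.strictMono_iff_lt_succ] at hm
        push Not at hm
        obtain ⟨t, ht⟩ := hm
        rcases ht.lt_or_eq with h | h
        · exfalso
          have := inversions_swap (f ∘ Equiv.swap t.castSucc t.succ) t (by simpa using h)
          rw [Function.comp_assoc, ← Equiv.Perm.coe_mul, Equiv.swap_mul_self, Equiv.Perm.coe_one,
            Function.comp_id] at this
          omega
        · refine ⟨fun hi => ?_, fun _ => Dt_eq hG f t h.symm⟩
          have := hi h
          simp [Fin.ext_iff] at this
    | succ N ih =>
      intro f hf
      by_cases hm : StrictMono f
      · have : f = id := by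
          have := Finset.orderEmbOfFin_unique (s := (Finset.univ : Finset (Fin (n+1))))
            (k := n+1) (by simp) (f := f) (by simp) hm
          have h2 := Finset.orderEmbOfFin_unique (s := (Finset.univ : Finset (Fin (n+1))))
            (k := n+1) (by simp) (f := id) (by simp) strictMono_id
          rw [this, ← h2]
        subst this
        refine ⟨fun _ => ?_, fun h => (h Function.injective_id).elim⟩
        have : inversions (id : Fin (n+1) → Fin (n+1)) = 0 := by
          unfold inversions
          rw [Finset.card_eq_zero, Finset.filter_eq_empty_iff]
          rintro ⟨a, b⟩ _ ⟨h1, h2⟩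
          exact lt_asymm h1 h2
        rw [this]
        simp [qCoeff]
      · rw [Fin.strictMono_iff_lt_succ] at hm
        push Not at hm
        obtain ⟨t, ht⟩ := hm
        rcases ht.lt_or_eq with h | h
        · set f' := f ∘ Equiv.swap t.castSucc t.succ with hf'
          have hff : f = f' ∘ Equiv.swap t.castSucc t.succ := by
            rw [hf', Function.comp_assoc, ← Equiv.Perm.coe_mul, Equiv.swap_mul_self,
              Equiv.Perm.coe_one, Function.comp_id]
          have h' : f' t.castSucc < f' t.succ := by simpa [hf'] using h
          have hinv := inversions_swap f' t h'
          rw [← hff] at hinv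
          have hD := Dt_swap hG f' t h'
          rw [← hff] at hD
          obtain ⟨i1, i2⟩ := ih f' (by omega)
          rw [hD, hinv]
          refine ⟨fun hi => ?_, fun hi => ?_⟩
          · rw [i1 (hi.comp (Equiv.injective _)), qCoeff_succ]
            module
          · rw [i2 (fun hh => hi ?_), smul_zero, neg_zero]
            rw [hff]
            exact hh.comp (Equiv.injective _)
        · refine ⟨fun hi => ?_, fun _ => Dt_eq hG f t h.symm⟩
          have := hi h
          simp [Fin.ext_iff] at this
end Dt

theorem ofFn_tensor {R A B : Type*} [CommSemiring R] [Semiring A] [Semiring B] [Algebra R A]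
    [Algebra R B] {m : ℕ} (n : ℕ) (x : Fin n → Fin m → A) (y : Fin n → Fin m → B) :
    (List.ofFn fun t => ∑ l, x t l ⊗ₜ[R] y t l).prod =
      ∑ f : Fin n → Fin m, (List.ofFn fun t => x t (f t)).prod ⊗ₜ[R]
        (List.ofFn fun t => y t (f t)).prod := by
  induction n with
  | zero => simp [Algebra.TensorProduct.one_def]
  | succ n ih =>
    rw [List.ofFn_succ, List.prod_cons, ih (fun t => x t.succ) (fun t => y t.succ),
      Finset.sum_mul_sum, ← Fintype.sum_prod_type',
      ← Equiv.sum_comp (Fin.consEquiv (fun _ => Fin m))]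
    refine Finset.sum_congr rfl fun p _ => ?_
    rw [Algebra.TensorProduct.tmul_mul_tmul]
    simp [List.ofFn_succ, Fin.consEquiv]

end QG

namespace QG
variable {k : Type} [Field k]

/-- index embedding -/
def colE (m : ℕ) (t : Fin m) : ColI m := ⟨-(m : ℤ) + (t : ℕ), by
      have := t.2
      simp only [Finset.mem_Icc]
      omega⟩

/-- index embedding -/
def sqE (m : ℕ) (t : Fin m) : RowI m 0 := ⟨-(m : ℤ) + (t : ℕ), by
      have := t.2
      simp only [Finset.mem_Icc]
      omega⟩

theorem sqE_mono (m : ℕ) : StrictMono (sqE m) := by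
  intro a b h
  have : (a : ℕ) < b := h
  show -(m : ℤ) + (a : ℕ) < -(m : ℤ) + (b : ℕ)
  omega

theorem sqE_bij (m : ℕ) : Function.Bijective (sqE m) := by
  refine ⟨(sqE_mono m).injective, ?_⟩
  rintro ⟨l, hl⟩
  have := Finset.mem_Icc.mp hl
  refine ⟨⟨(l + m).toNat, by omega⟩, ?_⟩
  apply Subtype.ext
  show -(m : ℤ) + (((l + m).toNat : ℕ) : ℤ) = l
  omega

theorem NN_zero (m : ℕ) : NN m 0 = m := by simp [NN]

theorem qMinorG_cast {R : Type} [LinearOrder R] {s m : ℕ} (h : s = m) (row : Fin s → R)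
    (row' : Fin m → R) (hr : ∀ t, row t = row' (Fin.cast h t)) :
    qMinorG k R R s row row = qMinorG k R R m row' row' := by
  subst h
  have : row = row' := funext hr
  rw [this]

theorem sqDet_eq (m : ℕ) : sqDet k m 0 = qMinorG k (RowI m 0) (RowI m 0) m (sqE m) (sqE m) := by
  unfold sqDet
  apply qMinorG_cast (NN_zero m)
  intro t
  apply Subtype.ext
  have := Finset.orderEmbOfFin_unique (s := Finset.Icc (-(m : ℤ)) (((0 : ℕ) : ℤ) - 1)) rfl
    (f := fun t => (sqE m (Fin.cast (NN_zero m) t)).1) (fun x => (sqE m _).2) (fun a b h =>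
      sqE_mono m h)
  exact (Finset.coe_orderIsoOfFin_apply _ _ _).trans (congrFun this t).symm

/-- ring structure on the SL algebra. -/
@[reducible] def slRing (m : ℕ) : Ring (QSL k m 0) :=
  Algebra.semiringToRing (kq k)

attribute [local instance] slRing

/-- the generic SL matrix -/
def gF (k : Type) [Field k] (m : ℕ) (i j : Fin m) : QSL k m 0 := qgSL k m 0 (sqE m i) (sqE m j)

theorem gF_isQM (m : ℕ) : IsQM (qParam k) (qInv k) (gF k m) :=
  ((qgen_isQM (k := k) (RowI m 0) (RowI m 0)).comp (sqE_mono m) (sqE_mono m)).map (qslMk k m 0)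

theorem Dt_id (m : ℕ) : Dt (k := k) (gF k m) id = 1 := by
  have h : qslMk k m 0 (sqDet k m 0) = 1 := by
    have := RingQuot.mkAlgHom_rel (kq k) (A := SqMat k m 0)
      (s := fun x y : SqMat k m 0 => x = sqDet k m 0 ∧ y = 1) ⟨rfl, rfl⟩
    rw [map_one] at this
    exact this
  refine Eq.trans ?_ ((congrArg (qslMk k m 0) (sqDet_eq m)).symm.trans h)
  rw [qMinorG, Dt, map_sum]
  refine Finset.sum_congr rfl fun σ _ => ?_
  rw [map_smul, map_list_prod, List.map_ofFn]
  rfl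

theorem rho_gen {m n : ℕ} {ρ : QMat k m n →ₐ[kq k] QMat k m n ⊗[kq k] QSL k m 0}
    (hρ : rhoqProp k m n ρ) (i : RowI m n) (j : Fin m) :
    ρ (av k m n i (colE m j)) =
      ∑ l : Fin m, av k m n i (colE m l) ⊗ₜ[kq k] gF k m l j := by
  rw [hρ]
  exact (Function.Bijective.sum_comp (sqE_bij m) (fun l : RowI m 0 =>
    av k m n i (r2c l) ⊗ₜ[kq k] qgSL k m 0 l (sqE m j))).symm

theorem minor_coinv {m n : ℕ} {ρ : QMat k m n →ₐ[kq k] QMat k m n ⊗[kq k] QSL k m 0}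
    (hρ : rhoqProp k m n ρ) (row : Fin m → RowI m n) :
    ρ (qMinorG k (RowI m n) (ColI m) m row (colE m)) =
      (qMinorG k (RowI m n) (ColI m) m row (colE m)) ⊗ₜ[kq k] (1 : QSL k m 0) := by
  have h1 : ρ (qMinorG k (RowI m n) (ColI m) m row (colE m)) =
      ∑ f : Fin m → Fin m, (List.ofFn fun t => av k m n (row t) (colE m (f t))).prod ⊗ₜ[kq k]
        Dt (k := k) (gF k m) f := by
    rw [qMinorG, map_sum]
    simp only [Dt, TensorProduct.tmul_sum]
    rw [Finset.sum_comm]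
    refine Finset.sum_congr rfl fun σ _ => ?_
    rw [map_smul, map_list_prod, List.map_ofFn]
    have : (⇑ρ ∘ fun t => qgen k (RowI m n) (ColI m) (row t) (colE m (σ t))) =
        fun t => ∑ l : Fin m, av k m n (row t) (colE m l) ⊗ₜ[kq k] gF k m l (σ t) := by
      funext t
      exact rho_gen hρ _ _
    rw [this, ofFn_tensor, Finset.smul_sum]
    refine Finset.sum_congr rfl fun f _ => ?_
    rw [TensorProduct.tmul_smul]
  rw [h1, qMinorG, TensorProduct.sum_tmul]
  symm
  refine Finset.sum_of_injOn (fun σ : Equiv.Perm (Fin m) => (σ : Fin m → Fin m)) ?_ ?_ ?_ ?_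
  · intro a _ b _ h
    exact DFunLike.coe_injective h
  · intro a _; simp
  · intro f _ hf
    rw [(Dt_all (gF_isQM m) _ f le_rfl).2, TensorProduct.tmul_zero]
    intro hi
    apply hf
    have hb := Finite.injective_iff_bijective.mp hi
    exact ⟨Equiv.ofBijective f hb, by simp, rfl⟩
  · intro σ _
    rw [(Dt_all (gF_isQM m) _ σ le_rfl).1 σ.injective, Dt_id, TensorProduct.tmul_smul,
      TensorProduct.smul_tmul']
    rfl

theorem delta_coinv {m n : ℕ} {ρ : QMat k m n →ₐ[kq k] QMat k m n ⊗[kq k] QSL k m 0}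
    (hρ : rhoqProp k m n ρ) {x : QMat k m n} (hx : x ∈ QDeltaSub k m n) :
    ρ x = x ⊗ₜ[kq k] (1 : QSL k m 0) := by
  unfold QDeltaSub at hx
  refine Algebra.adjoin_induction (p := fun x _ => ρ x = x ⊗ₜ[kq k] (1 : QSL k m 0))
    ?_ ?_ ?_ ?_ hx
  · rintro x ⟨I, hI, hsub, rfl⟩
    exact minor_coinv hρ _
  · intro r
    rw [AlgHom.commutes]
    exact Algebra.TensorProduct.algebraMap_apply r
  · intro x y _ _ h1 h2
    rw [map_add, h1, h2, TensorProduct.add_tmul]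
  · intro x y _ _ h1 h2
    rw [map_mul, h1, h2, Algebra.TensorProduct.tmul_mul_tmul, one_mul]

end QG

namespace QG
variable (k : Type) [Field k]

/-- exponents -/
abbrev Ex : Type := ℕ × ℕ → ℕ
/-- Fock space -/
abbrev VV : Type := Ex →₀ kq k
/-- operators on Fock space -/
abbrev EV : Type := Module.End (kq k) (VV k)

variable {k}

/-- one-site operator -/
def op (p : ℕ × ℕ) (u : ℕ → ℕ) (c : ℕ → kq k) : EV k :=
  Finsupp.linearCombination (kq k)
    (fun e : Ex => Finsupp.single (Function.update e p (u (e p))) (c (e p)))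

theorem op_single (p : ℕ × ℕ) (u : ℕ → ℕ) (c : ℕ → kq k) (e : Ex) (a : kq k) :
    op p u c (Finsupp.single e a) =
      Finsupp.single (Function.update e p (u (e p))) (a * c (e p)) := by
  rw [op, Finsupp.linearCombination_single, Finsupp.smul_single, smul_eq_mul]

theorem EV_ext {x y : EV k} (h : ∀ e a, x (Finsupp.single e a) = y (Finsupp.single e a)) :
    x = y := by
  apply Finsupp.lhom_ext
  exact h

theorem op_comm {p r : ℕ × ℕ} (h : p ≠ r) (u u' : ℕ → ℕ) (c c' : ℕ → kq k) :
    Commute (op p u c) (op r u' c') := by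
  apply EV_ext
  intro e a
  simp only [Module.End.mul_apply, op_single]
  rw [Function.update_of_ne h, Function.update_of_ne h.symm, Function.update_comm h,
    mul_right_comm]

open LaurentPolynomial (T)

/-- derivative coefficients -/
def dn (n : ℕ) : kq k := T (-1) * (T (2 * (n : ℤ)) - 1)

/-- creation -/
def zo (p : ℕ × ℕ) : EV k := op p (· + 1) (fun _ => 1)
/-- Cartan -/
def Ko (p : ℕ × ℕ) : EV k := op p id (fun n => T (n : ℤ))
/-- annihilation -/
def Do (p : ℕ × ℕ) : EV k := op p (· - 1) dn

theorem dn_zero : dn (k := k) 0 = 0 := by simp [dn]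

theorem TT (a b c : ℤ) (h : c = a + b) : (T a : kq k) * T b = T c := by
  rw [h, LaurentPolynomial.T_add]

theorem dn_succ (n : ℕ) : dn (k := k) n = dn (n + 1) + (T (-1) - T 1) * T (2 * (n : ℤ)) := by
  unfold dn
  rw [mul_sub, mul_sub, sub_mul, TT _ _ (2 * (n : ℤ) - 1) (by ring),
    TT (-1) (2 * ((n + 1 : ℕ) : ℤ)) (2 * (n : ℤ) + 1) (by push_cast; ring),
    TT 1 (2 * (n : ℤ)) (2 * (n : ℤ) + 1) (by ring)]
  ring

theorem zo_Ko (p : ℕ × ℕ) : zo (k := k) p * Ko p = qInv k • (Ko p * zo p) := by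
  apply EV_ext
  intro e a
  simp only [Module.End.mul_apply, LinearMap.smul_apply, zo, Ko, op_single, Finsupp.smul_single,
    Function.update_self, Function.update_idem, qInv, id, mul_one, smul_eq_mul]
  congr 1
  rw [mul_left_comm, TT (-1) _ (e p : ℤ) (by push_cast; ring)]

theorem Ko_Do (p : ℕ × ℕ) : Ko (k := k) p * Do p = qInv k • (Do p * Ko p) := by
  apply EV_ext
  intro e a
  simp only [Module.End.mul_apply, LinearMap.smul_apply, Do, Ko, op_single, Finsupp.smul_single,
    Function.update_self, Function.update_idem, qInv, id, mul_one, smul_eq_mul]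
  congr 1
  rcases Nat.eq_zero_or_pos (e p) with h | h
  · rw [h, dn_zero]; simp
  · rw [show ((e p - 1 : ℕ) : ℤ) = -1 + (e p : ℤ) by omega, LaurentPolynomial.T_add]
    ring

theorem zo_Do (p : ℕ × ℕ) : zo (k := k) p * Do p = Do p * zo p +
    (qInv k - qParam k) • (Ko p * Ko p) := by
  apply EV_ext
  intro e a
  simp only [Module.End.mul_apply, LinearMap.smul_apply, Do, Ko, zo, op_single, Finsupp.smul_single,
    Function.update_self, Function.update_idem, qInv, qParam, id, mul_one, smul_eq_mul,
    LinearMap.add_apply, Nat.add_sub_cancel, Function.update_eq_self]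
  rw [← Finsupp.single_add]
  rcases Nat.eq_zero_or_pos (e p) with h | h
  · rw [h, dn_zero, dn]
    simp only [mul_zero, Finsupp.single_zero]
    symm
    rw [Finsupp.single_eq_zero, mul_sub, TT _ _ 1 (by norm_num)]
    simp only [Nat.cast_zero, LaurentPolynomial.T_zero]
    ring
  · rw [Nat.sub_add_cancel h, Function.update_eq_self, dn_succ (e p)]
    congr 1
    rw [show (2 * (e p : ℤ)) = e p + e p by ring, LaurentPolynomial.T_add]
    ring

theorem osc_blk (s : ℕ) (p : ℕ × ℕ) :
    IsQM (qParam k) (qInv k) (blk s (zo (k := k) p) (Ko p) (Ko p) (Do p)) :=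
  blk_isQM s (zo_Ko p) (Ko_Do p) (zo_Ko p) (Ko_Do p) rfl (zo_Do p)

/-- freshness: commuting with all operators at a site -/
def Fr (p : ℕ × ℕ) (x : EV k) : Prop := ∀ u c, Commute (op p u c) x

theorem Fr.add {p : ℕ × ℕ} {x y : EV k} (hx : Fr p x) (hy : Fr p y) : Fr p (x + y) :=
  fun u c => (hx u c).add_right (hy u c)
theorem Fr.mul {p : ℕ × ℕ} {x y : EV k} (hx : Fr p x) (hy : Fr p y) : Fr p (x * y) :=
  fun u c => (hx u c).mul_right (hy u c)
theorem Fr.zero {p : ℕ × ℕ} : Fr p (0 : EV k) := fun u c => Commute.zero_right _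
theorem Fr.one {p : ℕ × ℕ} : Fr p (1 : EV k) := fun u c => Commute.one_right _
theorem Fr.op {p r : ℕ × ℕ} (h : p ≠ r) (u c) : Fr p (op (k := k) r u c) :=
  fun u' c' => op_comm h u' u c' c

theorem Fr.preserve {p : ℕ × ℕ} {x : EV k} (hx : Fr p x) (e e' : Ex) (a : kq k)
    (h : (x (Finsupp.single e a)) e' ≠ 0) : e' p = e p := by
  by_contra hne
  have h1 := congrArg (fun y : EV k => y (Finsupp.single e a) e')
    (hx id (fun n => if n = e p then 1 else 0)).eq
  simp only [Module.End.mul_apply, op_single, id, Function.update_eq_self, if_true, mul_one] at h1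
  apply h
  rw [← h1]
  generalize x (Finsupp.single e a) = v
  induction v using Finsupp.induction_linear with
  | zero => simp
  | add f g hf hg => rw [map_add, Finsupp.add_apply, hf, hg, add_zero]
  | single e1 b =>
    rw [op_single]
    simp only [id, Function.update_eq_self]
    split_ifs with h2
    · rw [Finsupp.single_eq_of_ne]
      rintro rfl
      exact hne h2
    · simp

/-- carry, indexed from the right end -/
def cAux (m : ℕ) (P : ℕ → ℕ → EV k) (i c : ℕ) : ℕ → EV k
  | 0 => 0
  | t+1 => zo (i, m-(t+1)) * P (m-(t+1)) c + Ko (i, m-(t+1)) * cAux m P i c t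

/-- the P operators -/
def PP (m : ℕ) : ℕ → ℕ → ℕ → EV k
  | 0 => fun s c => if s = c then 1 else 0
  | i+1 => fun s c => Ko (i, s) * PP m i s c + Do (i, s) * cAux m (PP m i) i c (m-(s+1))

/-- the carry operators -/
def ca (m i s c : ℕ) : EV k := cAux m (PP m i) i c (m - s)

theorem ca_end {m i s c : ℕ} (h : m ≤ s) : ca (k := k) m i s c = 0 := by
  rw [ca, Nat.sub_eq_zero_of_le h, cAux]

theorem ca_rec {m i s c : ℕ} (h : s < m) : ca (k := k) m i s c =
    zo (i, s) * PP m i s c + Ko (i, s) * ca m i (s+1) c := by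
  rw [ca, show m - s = (m - (s+1)) + 1 by omega, cAux, show m - (m - (s+1) + 1) = s by omega]
  rfl

theorem PP_succ (m i s c : ℕ) : PP (k := k) m (i+1) s c =
    Ko (i, s) * PP m i s c + Do (i, s) * ca m i (s+1) c := rfl

theorem ca_ind {m : ℕ} {i : ℕ} {Q : ℕ → Prop} (h0 : ∀ s, m ≤ s → Q s)
    (h1 : ∀ s, s < m → Q (s+1) → Q s) (s : ℕ) : Q s := by
  by_cases h : m ≤ s
  · exact h0 s h
  · push Not at h
    exact Nat.decreasingInduction' (P := Q) (m := s) (n := m)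
      (fun j hj _ hq => h1 j hj hq) h.le (h0 m le_rfl)

theorem ca_fresh {m i c : ℕ} {p : ℕ × ℕ} (hP : ∀ s, Fr p (PP (k := k) m i s c)) (s : ℕ)
    (hp : p.1 ≠ i ∨ p.2 < s) : Fr p (ca (k := k) m i s c) := by
  revert hp
  refine ca_ind (m := m) (i := i) (Q := fun s => (p.1 ≠ i ∨ p.2 < s) → Fr p (ca (k := k) m i s c))
    ?_ ?_ s
  · intro s h _
    rw [ca_end h]; exact Fr.zero
  · intro s h ih hp
    have hne : p ≠ (i, s) := by
      rintro rfl
      simp at hp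
    rw [ca_rec h]
    refine ((Fr.op hne _ _).mul (hP s)).add ((Fr.op hne _ _).mul (ih ?_))
    omega

theorem PP_fresh {m : ℕ} (i : ℕ) : ∀ (s c : ℕ) (p : ℕ × ℕ), i ≤ p.1 →
    Fr p (PP (k := k) m i s c) := by
  induction i with
  | zero =>
    intro s c p _
    unfold PP
    split_ifs
    · exact Fr.one
    · exact Fr.zero
  | succ i ih =>
    intro s c p hp
    have hne : p ≠ (i, s) := by
      rintro rfl
      simp at hp
    rw [PP_succ]
    exact ((Fr.op hne _ _).mul (ih _ _ _ (by omega))).add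
      ((Fr.op hne _ _).mul (ca_fresh (fun s => ih _ _ _ (by omega)) _ (by omega)))

theorem PP_fresh' {m i s c : ℕ} {p : ℕ × ℕ} (h1 : p.1 = i) (h2 : p.2 < s) :
    Fr p (PP (k := k) m (i+1) s c) := by
  have hne : p ≠ (i, s) := by
    rintro rfl
    simp at h2
  rw [PP_succ]
  exact ((Fr.op hne _ _).mul (PP_fresh _ _ _ _ (by omega))).add
    ((Fr.op hne _ _).mul (ca_fresh (fun s => PP_fresh _ _ _ _ (by omega)) _ (by omega)))

/-- the generators acting on Fock space -/
def bo (m i c : ℕ) : EV k := ca m i 0 c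

theorem bo_fresh {m i c : ℕ} {p : ℕ × ℕ} (h : i < p.1) : Fr p (bo (k := k) m i c) :=
  ca_fresh (fun s => PP_fresh _ _ _ _ h.le) _ (by omega)

/-- the stacked matrices -/
def ZZ (m i s r c : ℕ) : EV k :=
  if r < i then bo m r c
  else if r < i + s then PP m i (r - i) c
  else if r = i + s then ca m i s c
  else if r ≤ i + m then PP m (i+1) (r - i - 1) c
  else 0

theorem ZZ_step {m i s : ℕ} (hs : s < m) (r c : ℕ) : ZZ (k := k) m i s r c =
    ∑ l ∈ Finset.range (i+m+1), blk (i+s) (zo (i,s)) (Ko (i,s)) (Ko (i,s)) (Do (i,s)) r l *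
      ZZ m i (s+1) l c := by
  have hz1 : ZZ (k := k) m i (s+1) (i+s) c = PP m i s c := by
    rw [ZZ, if_neg (by omega), if_pos (by omega)]
    congr 1; omega
  have hz2 : ZZ (k := k) m i (s+1) (i+s+1) c = ca m i (s+1) c := by
    rw [ZZ, if_neg (by omega), if_neg (by omega), if_pos (by omega)]
  have hmem : ({i+s, i+s+1} : Finset ℕ) ⊆ Finset.range (i+m+1) := by
    intro x hx
    simp only [Finset.mem_insert, Finset.mem_singleton] at hx
    rw [Finset.mem_range]; omega
  by_cases h1 : r = i + s
  · rw [← Finset.sum_subset hmem, Finset.sum_pair (by omega), hz1, hz2]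
    · simp [blk, h1]
      rw [ZZ, if_neg (by omega), if_neg (by omega), if_pos rfl, ca_rec hs]
    · intro x _ hx
      simp only [Finset.mem_insert, Finset.mem_singleton, not_or] at hx
      simp [blk, h1, hx.1, hx.2]
  · by_cases h2 : r = i + s + 1
    · rw [← Finset.sum_subset hmem, Finset.sum_pair (by omega), hz1, hz2]
      · simp [blk, h2]
        rw [ZZ, if_neg (by omega), if_neg (by omega), if_neg (by omega), if_pos (by omega),
          ← PP_succ]
        congr 1; omega
      · intro x _ hx
        simp only [Finset.mem_insert, Finset.mem_singleton, not_or] at hx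
        simp [blk, h2, hx.1, hx.2]
    · have : ∀ l, blk (i+s) (zo (k := k) (i,s)) (Ko (i,s)) (Ko (i,s)) (Do (i,s)) r l *
        ZZ m i (s+1) l c = if l = r then ZZ m i (s+1) r c else 0 := by
        intro l
        rw [blk, if_neg h1, if_neg h2]
        by_cases h : r = l
        · subst h; simp
        · rw [if_neg h, if_neg (Ne.symm h), zero_mul]
      simp only [this]
      rw [Finset.sum_ite_eq']
      simp only [Finset.mem_range, ZZ]
      split_ifs <;> first | (exfalso; omega) | rfl

theorem ZZ_fresh {m i s l c : ℕ} (hs : s < m) : Fr (i, s) (ZZ (k := k) m i (s+1) l c) := by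
  unfold ZZ
  split_ifs
  · apply bo_fresh; assumption
  · apply PP_fresh; simp
  · exact ca_fresh (fun s => PP_fresh _ _ _ _ (by simp)) _ (by right; simp)
  · exact PP_fresh' rfl (by show s < _; omega)
  · exact Fr.zero

theorem ZZ_isQM (m : ℕ) : ∀ i, IsQM (qParam k) (qInv k) (ZZ (k := k) m i m) := by
  have step : ∀ i, IsQM (qParam k) (qInv k) (ZZ (k := k) m i m) →
      IsQM (qParam k) (qInv k) (ZZ (k := k) m i 0) := by
    intro i h
    refine Nat.decreasingInduction' (P := fun s => IsQM (qParam k) (qInv k) (ZZ (k := k) m i s))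
      (m := 0) (n := m) ?_ (Nat.zero_le _) h
    intro s hs _ ih
    have : ZZ (k := k) m i s = fun r c => ∑ l ∈ Finset.range (i+m+1),
        blk (i+s) (zo (i,s)) (Ko (i,s)) (Ko (i,s)) (Do (i,s)) r l * ZZ m i (s+1) l c := by
      funext r c
      exact ZZ_step hs r c
    rw [this]
    refine IsQM.mul qq (osc_blk _ _) ih ?_ _
    intro a l l' j
    have hf := ZZ_fresh (k := k) (i := i) (l := l') (c := j) hs
    unfold blk
    split_ifs <;> first | exact (hf _ _).eq | simp
  intro i
  induction i with
  | zero =>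
    have : ZZ (k := k) m 0 m = fun r c => if r < m ∧ r = c then 1 else 0 := by
      funext r c
      rw [ZZ, if_neg (by omega)]
      by_cases h : r < m
      · rw [if_pos (by omega)]
        simp [PP, h]
      · rw [if_neg (show ¬ (r < 0 + m) by omega), if_neg (show ¬ (r < m ∧ r = c) from fun hh => h hh.1)]
        by_cases h2 : r = 0 + m
        · rw [if_pos h2, ca_end le_rfl]
        · rw [if_neg h2, if_neg (by omega)]
    rw [this]
    refine ⟨fun i i' j h => ?_, fun i j j' h => ?_, fun i i' j j' h h' => ?_,
      fun i i' j j' h h' => ?_⟩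
    all_goals
      split_ifs <;> first | (exfalso; omega) | simp
  | succ i ih =>
    have : ZZ (k := k) m (i+1) m = ZZ m i 0 := by
      funext r c
      simp only [ZZ]
      split_ifs <;> first | (exfalso; omega) | rfl | skip
      · have : r = i := by omega
        subst this; rfl
      · rw [ca_end le_rfl]
    rw [this]
    exact step i ih

theorem bo_isQM (m : ℕ) : IsQM (qParam k) (qInv k) (bo (k := k) m) := by
  have key : ∀ i r c, r < i → ZZ (k := k) m i m r c = bo m r c := by
    intro i r c h
    rw [ZZ, if_pos h]
  refine ⟨fun i i' j h => ?_, fun i j j' h => ?_, fun i i' j j' h h' => ?_,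
      fun i i' j j' h h' => ?_⟩
  · have := (ZZ_isQM (k := k) m (i'+1)).col i i' j h
    rwa [key _ _ _ (by omega), key _ _ _ (by omega)] at this
  · have := (ZZ_isQM (k := k) m (i+1)).row i j j' h
    rwa [key _ _ _ (by omega), key _ _ _ (by omega)] at this
  · have := (ZZ_isQM (k := k) m (i'+1)).comm i i' j j' h h'
    rwa [key _ _ _ (by omega), key _ _ _ (by omega)] at this
  · have := (ZZ_isQM (k := k) m (i'+1)).qcomm i i' j j' h h'
    rwa [key _ _ _ (by omega), key _ _ _ (by omega), key _ _ _ (by omega),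
      key _ _ _ (by omega)] at this

end QG

namespace QG
variable {k : Type} [Field k]
open LaurentPolynomial (T)

theorem PP_upper {m : ℕ} (i : ℕ) : ∀ c, (∀ l, c < l → PP (k := k) m i l c = 0) ∧
    (∀ s, c < s → ca (k := k) m i s c = 0) := by
  have step : ∀ i c, (∀ l, c < l → PP (k := k) m i l c = 0) →
      (∀ s, c < s → ca (k := k) m i s c = 0) := by
    intro i c h s
    refine ca_ind (m := m) (i := i) (Q := fun s => c < s → ca (k := k) m i s c = 0) ?_ ?_ s
    · intro s hs _; exact ca_end hs
    · intro s hs ih hc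
      rw [ca_rec hs, h s hc, ih (by omega)]; simp
  induction i with
  | zero =>
    intro c
    have : ∀ l, c < l → PP (k := k) m 0 l c = 0 := by
      intro l h
      simp [PP, h.ne']
    exact ⟨this, step _ _ this⟩
  | succ i ih =>
    intro c
    have : ∀ l, c < l → PP (k := k) m (i+1) l c = 0 := by
      intro l h
      rw [PP_succ, (ih c).1 l h, (ih c).2 (l+1) (by omega)]; simp
    exact ⟨this, step _ _ this⟩

theorem Ko_single (p : ℕ × ℕ) (e : Ex) (a : kq k) :
    Ko p (Finsupp.single e a) = Finsupp.single e (a * T (e p : ℤ)) := by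
  rw [Ko, op_single, id, Function.update_eq_self]

theorem PP_diag {m : ℕ} (i l : ℕ) : ∃ u : Ex → ℤ, ∀ e a,
    PP (k := k) m i l l (Finsupp.single e a) = Finsupp.single e (a * T (u e)) := by
  induction i with
  | zero => exact ⟨fun _ => 0, fun e a => by simp [PP]⟩
  | succ i ih =>
    obtain ⟨u, hu⟩ := ih
    refine ⟨fun e => u e + e (i, l), fun e a => ?_⟩
    rw [PP_succ, (PP_upper i l).2 (l+1) (by omega), mul_zero, add_zero, Module.End.mul_apply, hu,
      Ko_single, LaurentPolynomial.T_add, mul_assoc]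

theorem PP_vac {m : ℕ} (i l c : ℕ) (e : Ex) (a : kq k) (he : ∀ p : ℕ × ℕ, p.1 < i → e p = 0) :
    PP (k := k) m i l c (Finsupp.single e a) = if l = c then Finsupp.single e a else 0 := by
  induction i with
  | zero =>
    simp only [PP]
    split_ifs <;> simp
  | succ i ih =>
    have hD : (Do (i, l) * ca m i (l+1) c : EV k) (Finsupp.single e a) = 0 := by
      have hf := ca_fresh (k := k) (m := m) (i := i) (c := c) (p := (i,l))
        (fun s => PP_fresh _ _ _ _ (by simp)) (l+1) (by right; simp)
      rw [Do, (hf _ _).eq, Module.End.mul_apply, op_single, he (i, l) (by simp), dn_zero]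
      simp
    rw [PP_succ, LinearMap.add_apply, hD, add_zero, Module.End.mul_apply,
      ih (fun p hp => he p (by omega))]
    split_ifs
    · rw [Ko_single, he (i, l) (by simp)]
      simp
    · simp

theorem ca_vac {m : ℕ} (i c : ℕ) (hc : c < m) (e : Ex) (a : kq k)
    (he : ∀ p : ℕ × ℕ, p.1 < i → e p = 0) (he2 : ∀ l < c, e (i, l) = 0) :
    ∀ s ≤ c, ca (k := k) m i s c (Finsupp.single e a) =
      Finsupp.single (Function.update e (i, c) (e (i, c) + 1)) a := by
  intro s hs
  refine Nat.decreasingInduction' (P := fun s => ca (k := k) m i s c (Finsupp.single e a) =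
      Finsupp.single (Function.update e (i, c) (e (i, c) + 1)) a) (m := s) (n := c) ?_ hs ?_
  · intro s' h1 _ ih
    rw [ca_rec (by omega), LinearMap.add_apply, Module.End.mul_apply, Module.End.mul_apply, ih,
      PP_vac _ _ _ _ _ he, if_neg (by omega), map_zero, zero_add, Ko_single]
    have h : Function.update e (i, c) (e (i, c) + 1) (i, s') = 0 := by
      rw [Function.update_of_ne (by simp; omega), he2 s' h1]
    rw [h]
    simp
  · rw [ca_rec hc, (PP_upper i c).2 (c+1) (by omega), mul_zero, add_zero, Module.End.mul_apply,
      PP_vac _ _ _ _ _ he, if_pos rfl, zo, op_single, mul_one]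

theorem bo_vac {m : ℕ} (i c : ℕ) (hc : c < m) (e : Ex) (a : kq k)
    (he : ∀ p : ℕ × ℕ, p.1 < i → e p = 0) (he2 : ∀ l < c, e (i, l) = 0) :
    bo (k := k) m i c (Finsupp.single e a) =
      Finsupp.single (Function.update e (i, c) (e (i, c) + 1)) a :=
  ca_vac i c hc e a he he2 0 (Nat.zero_le _)

/-- ordered products -/
def ap {A : Type*} [Monoid A] (x : ℕ → A) : ℕ → ℕ → A
  | _, 0 => 1
  | st, n+1 => x st * ap x (st+1) n

/-- ordered monomials -/
def mono {A : Type*} [Monoid A] (X : ℕ → ℕ → A) (m N : ℕ) (e : Ex) : A :=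
  ap (fun i => ap (fun j => X i j ^ e (i, j)) 0 m) 0 N

theorem ap_map {A B F : Type*} [Monoid A] [Monoid B] [FunLike F A B] [MonoidHomClass F A B]
    (φ : F) (x : ℕ → A) (st n : ℕ) : φ (ap x st n) = ap (fun i => φ (x i)) st n := by
  induction n generalizing st with
  | zero => simp [ap]
  | succ n ih => simp [ap, ih]

theorem mono_map {A B F : Type*} [Monoid A] [Monoid B] [FunLike F A B] [MonoidHomClass F A B]
    (φ : F) (X : ℕ → ℕ → A) (m N : ℕ) (e : Ex) :
    φ (mono X m N e) = mono (fun i j => φ (X i j)) m N e := by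
  simp only [mono, ap_map, map_pow]

/-- box restriction of exponents -/
def bx (m N : ℕ) (e : Ex) : Ex := fun p => if p.1 < N ∧ p.2 < m then e p else 0

theorem bo_pow_vac {m : ℕ} (i c : ℕ) (hc : c < m) (a : kq k) (n : ℕ) : ∀ (e : Ex)
    (he : ∀ p : ℕ × ℕ, p.1 < i → e p = 0) (he2 : ∀ l < c, e (i, l) = 0),
    (bo (k := k) m i c ^ n) (Finsupp.single e a) =
      Finsupp.single (Function.update e (i, c) (e (i, c) + n)) a := by
  induction n with
  | zero => intro e _ _; simp
  | succ n ih =>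
    intro e he he2
    rw [pow_succ, Module.End.mul_apply, bo_vac i c hc e a he he2, ih]
    · simp only [Function.update_self, Function.update_idem]
      rw [add_assoc, add_comm 1 n]
    · intro p hp
      rw [Function.update_of_ne, he p hp]
      rintro rfl; simp at hp
    · intro l hl
      rw [Function.update_of_ne, he2 l hl]
      simp; omega

theorem row_vac {m : ℕ} (i : ℕ) (a : kq k) (e f : Ex) (hf : ∀ p : ℕ × ℕ, p.1 ≤ i → f p = 0) :
    ∀ n st, st + n = m →
    (ap (fun j => bo (k := k) m i j ^ e (i, j)) st n) (Finsupp.single f a) =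
      Finsupp.single (fun p => if p.1 = i ∧ st ≤ p.2 ∧ p.2 < m then e p else f p) a := by
  intro n
  induction n with
  | zero =>
    intro st h
    simp only [ap, Module.End.one_apply]
    congr 1
    funext p
    rw [if_neg (by omega)]
  | succ n ih =>
    intro st h
    rw [ap, Module.End.mul_apply, ih (st+1) (by omega), bo_pow_vac i st (by omega)]
    · congr 1
      funext p
      by_cases hp : p = (i, st)
      · subst hp
        rw [Function.update_self, if_neg (by simp), hf _ (by simp), if_pos (by simp; omega)]
        simp
      · rw [Function.update_of_ne hp]
        have : ¬ (p.1 = i ∧ p.2 = st) := fun hh => hp (Prod.ext hh.1 hh.2)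
        congr 1
        simp only [eq_iff_iff]; omega
    · intro p hp
      rw [if_neg (by omega), hf p hp.le]
    · intro l hl
      rw [if_neg (by simp; omega), hf _ (by simp)]

theorem mono_vac {m : ℕ} (N : ℕ) (e : Ex) :
    (mono (bo (k := k) m) m N e) (Finsupp.single 0 1) = Finsupp.single (bx m N e) 1 := by
  have key : ∀ n st, st + n = N →
      (ap (fun i => ap (fun j => bo (k := k) m i j ^ e (i, j)) 0 m) st n) (Finsupp.single 0 1) =
      Finsupp.single (fun p => if st ≤ p.1 ∧ p.1 < N ∧ p.2 < m then e p else 0) 1 := by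
    intro n
    induction n with
    | zero =>
      intro st h
      simp only [ap, Module.End.one_apply]
      congr 1
      funext p
      rw [if_neg (by omega)]; rfl
    | succ n ih =>
      intro st h
      rw [ap, Module.End.mul_apply, ih (st+1) (by omega), row_vac st _ e _ _ m 0 (by simp)]
      · congr 1
        funext p
        split_ifs <;> first | rfl | (exfalso; omega)
      · intro p hp
        rw [if_neg (by omega)]
  have := key N 0 (by simp)
  rw [mono, this]
  simp [bx]
  rfl

/-- order on positions -/
def plt (p r : ℕ × ℕ) : Prop := p.1 < r.1 ∨ (p.1 = r.1 ∧ p.2 < r.2)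

theorem plt_trans {p r s : ℕ × ℕ} (h : plt p r) (h' : plt r s) : plt p s := by
  unfold plt at *; omega
theorem plt_tri (p r : ℕ × ℕ) : plt p r ∨ p = r ∨ plt r p := by
  by_cases h : p = r
  · exact Or.inr (Or.inl h)
  · have : ¬ (p.1 = r.1 ∧ p.2 = r.2) := fun hh => h (Prod.ext hh.1 hh.2)
    unfold plt; omega

/-- order on exponents -/
def elt (e e' : Ex) : Prop := ∃ p, e p < e' p ∧ ∀ r, plt p r → e r = e' r

theorem elt_irrefl (e : Ex) : ¬ elt e e := by
  rintro ⟨p, h, _⟩; exact lt_irrefl _ h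

theorem elt_trans {a b c : Ex} (h : elt a b) (h' : elt b c) : elt a c := by
  obtain ⟨p, h1, h2⟩ := h
  obtain ⟨r, h3, h4⟩ := h'
  rcases plt_tri p r with h | h | h
  · exact ⟨r, by rw [h2 r h]; exact h3, fun s hs => (h2 s (plt_trans h hs)).trans (h4 s hs)⟩
  · subst h
    exact ⟨p, h1.trans h3, fun s hs => (h2 s hs).trans (h4 s hs)⟩
  · exact ⟨p, by rw [← h4 p h]; exact h1, fun s hs => (h2 s hs).trans (h4 s (plt_trans h hs))⟩

theorem elt_add {a b : Ex} (d : Ex) (h : elt a b) : elt (a + d) (b + d) := by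
  obtain ⟨p, h1, h2⟩ := h
  exact ⟨p, by simpa using h1, fun s hs => by simp [h2 s hs]⟩

theorem elt_add' {a b : Ex} (d : Ex) (h : elt a b) : elt (d + a) (d + b) := by
  rw [add_comm d, add_comm d]; exact elt_add d h

/-- operator with leading exponent shift `d` -/
def OL (x : EV k) (d : Ex) : Prop := ∀ e, IsUnit ((x (Finsupp.single e 1)) (e + d)) ∧
  ∀ e', (x (Finsupp.single e 1)) e' ≠ 0 → e' = e + d ∨ elt e' (e + d)

/-- operator with shift strictly lower than `d` -/
def OLt (x : EV k) (d : Ex) : Prop := ∀ e e', (x (Finsupp.single e 1)) e' ≠ 0 → elt e' (e + d)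

theorem op_apply (x : EV k) (v : VV k) (e' : Ex) :
    (x v) e' = v.sum fun e a => a * (x (Finsupp.single e 1)) e' := by
  induction v using Finsupp.induction_linear with
  | zero => simp
  | add f g hf hg =>
    rw [map_add, Finsupp.add_apply, hf, hg, Finsupp.sum_add_index']
    · intro; simp
    · intros; rw [add_mul]
  | single e1 b =>
    rw [Finsupp.sum_single_index (by simp), ← mul_one b, ← smul_eq_mul, ← Finsupp.smul_single,
      map_smul]
    simp

theorem op_apply_ne (x : EV k) (v : VV k) (e' : Ex) (h : (x v) e' ≠ 0) :
    ∃ e, v e ≠ 0 ∧ (x (Finsupp.single e 1)) e' ≠ 0 := by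
  rw [op_apply, Finsupp.sum] at h
  obtain ⟨e, he, h2⟩ := Finset.exists_ne_zero_of_sum_ne_zero h
  exact ⟨e, left_ne_zero_of_mul h2, right_ne_zero_of_mul h2⟩

/-- Leading term of a vector image. -/
theorem OL.lead {x : EV k} {d : Ex} (hx : OL x d) {v : VV k} {e : Ex}
    (hv : ∀ e', v e' ≠ 0 → e' = e ∨ elt e' e) :
    (∃ u : kq k, IsUnit u ∧ (x v) (e + d) = v e * u) ∧
      ∀ e', (x v) e' ≠ 0 → e' = e + d ∨ elt e' (e + d) := by
  constructor
  · refine ⟨_, (hx e).1, ?_⟩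
    rw [op_apply, Finsupp.sum]
    rw [Finset.sum_eq_single e]
    · intro b hb hne
      have hb' : v b ≠ 0 := by simpa using hb
      by_contra h0
      have hr := right_ne_zero_of_mul h0
      rcases hv b hb' with h | h
      · exact hne h
      · have h3 := elt_add d h
        rcases (hx b).2 _ hr with h4 | h4
        · rw [h4] at h3; exact elt_irrefl _ h3
        · exact elt_irrefl _ (elt_trans h3 h4)
    · intro h
      have : v e = 0 := by simpa using h
      rw [this, zero_mul]
  · intro e' h
    obtain ⟨b, hb, hr⟩ := op_apply_ne x v e' h
    rcases hv b hb with h1 | h1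
    · subst h1; exact (hx b).2 _ hr
    · right
      rcases (hx b).2 _ hr with h4 | h4
      · subst h4; exact elt_add d h1
      · exact elt_trans h4 (elt_add d h1)

theorem OL.mul {x y : EV k} {d d' : Ex} (hx : OL x d) (hy : OL y d') : OL (x * y) (d' + d) := by
  intro e
  obtain ⟨⟨u, hu, h1⟩, h2⟩ := hx.lead (v := y (Finsupp.single e 1)) (hy e).2
  rw [Module.End.mul_apply, ← add_assoc]
  refine ⟨?_, h2⟩
  rw [h1]
  exact (hy e).1.mul hu

theorem OL.add {x y : EV k} {d : Ex} (hx : OL x d) (hy : OLt y d) : OL (x + y) d := by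
  intro e
  have h0 : (y (Finsupp.single e 1)) (e + d) = 0 := by
    by_contra h
    exact elt_irrefl _ (hy e _ h)
  rw [LinearMap.add_apply]
  refine ⟨?_, ?_⟩
  · rw [Finsupp.add_apply, h0, add_zero]; exact (hx e).1
  · intro e' h
    by_cases h1 : (x (Finsupp.single e 1)) e' = 0
    · right
      apply hy
      rw [Finsupp.add_apply, h1, zero_add] at h
      exact h
    · exact (hx e).2 _ h1

theorem OLt.sum {ι : Type*} (S : Finset ι) (y : ι → EV k) {d : Ex} (h : ∀ i ∈ S, OLt (y i) d) :
    OLt (∑ i ∈ S, y i) d := by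
  intro e e' h0
  rw [LinearMap.sum_apply, Finsupp.finset_sum_apply] at h0
  obtain ⟨i, hi, h2⟩ := Finset.exists_ne_zero_of_sum_ne_zero h0
  exact h i hi _ _ h2

theorem OL.lt_smul {x : EV k} {d d' : Ex} (hx : OL x d) (h : elt d d') (c : kq k) :
    OLt (c • x) d' := by
  intro e e' h0
  rw [LinearMap.smul_apply, Finsupp.smul_apply] at h0
  have := right_ne_zero_of_smul h0
  rcases (hx e).2 _ this with h1 | h1
  · subst h1; exact elt_add' _ h
  · exact elt_trans h1 (elt_add' _ h)

theorem OL.one : OL (1 : EV k) 0 := by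
  intro e
  simp only [Module.End.one_apply, add_zero]
  refine ⟨by simp, fun e' h => ?_⟩
  left
  by_contra hne
  exact h (Finsupp.single_eq_of_ne hne)

theorem upd_add (e : Ex) (p : ℕ × ℕ) (n : ℕ) : Function.update e p (e p + n) = e + Pi.single p n := by
  funext r
  by_cases h : r = p
  · subst h; simp
  · simp [h]

theorem OL_of_single {x : EV k} {d : Ex} (u : Ex → ℤ)
    (h : ∀ e a, x (Finsupp.single e a) = Finsupp.single (e + d) (a * T (u e))) : OL x d := by
  intro e
  rw [h]
  refine ⟨by simpa using LaurentPolynomial.isUnit_T _, fun e' h => ?_⟩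
  left
  by_contra hne
  exact h (Finsupp.single_eq_of_ne hne)

theorem zo_OL (p : ℕ × ℕ) : OL (zo (k := k) p) (Pi.single p 1) :=
  OL_of_single (fun _ => 0) fun e a => by rw [zo, op_single, upd_add]; simp
theorem Ko_OL (p : ℕ × ℕ) : OL (Ko (k := k) p) 0 :=
  OL_of_single (fun e => e p) fun e a => by rw [Ko, op_single]; simp

theorem bo_OL {m : ℕ} (i c : ℕ) (hc : c < m) : OL (bo (k := k) m i c) (Pi.single (i, c) 1) := by
  refine Nat.decreasingInduction' (P := fun s => OL (ca (k := k) m i s c) (Pi.single (i, c) 1))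
    (m := 0) (n := c) ?_ (Nat.zero_le _) ?_
  · intro s h1 _ ih
    rw [ca_rec (by omega), add_comm]
    refine OL.add ?_ ?_
    · have := (Ko_OL (k := k) (i, s)).mul ih
      simpa using this
    · intro e e' h
      rw [Module.End.mul_apply] at h
      obtain ⟨e'', h2, h3⟩ := op_apply_ne _ _ _ h
      have hp : ∀ p : ℕ × ℕ, i ≤ p.1 → e'' p = e p := fun p hp =>
        (PP_fresh i s c p hp).preserve _ _ _ h2
      have h4 : e' = e'' + Pi.single (i, s) 1 := by
        rw [zo, op_single, upd_add] at h3
        by_contra hne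
        exact h3 (Finsupp.single_eq_of_ne hne)
      subst h4
      refine ⟨(i, c), ?_, ?_⟩
      · have : (i, c) ≠ (i, s) := by simp; omega
        simp [hp (i, c) le_rfl, this]
      · intro r hr
        have h5 : r ≠ (i, c) := by rintro rfl; simp [plt] at hr
        have h6 : r ≠ (i, s) := by rintro rfl; simp [plt] at hr; omega
        have h7 : i ≤ r.1 := by simp [plt] at hr; omega
        simp [hp r h7, h5, h6]
  · rw [ca_rec hc, (PP_upper i c).2 (c+1) (by omega), mul_zero, add_zero]
    obtain ⟨u, hu⟩ := PP_diag (k := k) (m := m) i c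
    have : OL (PP (k := k) m i c c) 0 := OL_of_single u (by simpa using hu)
    have h2 := (zo_OL (k := k) (i, c)).mul this
    simpa using h2

end QG

namespace QG

section span
variable {K A : Type*} [CommRing K] [Ring A] [Algebra K A] {q qi : K}

theorem ap_congr {A : Type*} [Monoid A] {x y : ℕ → A} {st n : ℕ}
    (h : ∀ i, st ≤ i → i < st + n → x i = y i) : ap x st n = ap y st n := by
  induction n generalizing st with
  | zero => rfl
  | succ n ih =>
    rw [ap, ap, h st le_rfl (by omega), ih (fun i h1 h2 => h i (by omega) (by omega))]

theorem smll {P Q S : Submodule K A} (h : P ≤ Q) : P * S ≤ Q * S := mul_le_mul' h le_rfl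
theorem smlr {P Q S : Submodule K A} (h : P ≤ Q) : S * P ≤ S * Q := mul_le_mul' le_rfl h

/-- row span -/
def Rw (K : Type*) {A : Type*} [CommRing K] [Ring A] [Algebra K A] (X : ℕ → ℕ → A) (m i : ℕ) :
    Submodule K A := Submodule.span K {y | ∃ j < m, y = X i j}
/-- row monomial span -/
def Sw (K : Type*) {A : Type*} [CommRing K] [Ring A] [Algebra K A] (X : ℕ → ℕ → A) (m i : ℕ) :
    Submodule K A :=
  Submodule.span K {y | ∃ f : ℕ → ℕ, y = ap (fun j => X i j ^ f j) 0 m}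

variable {X : ℕ → ℕ → A} {m : ℕ}

theorem one_mem_Sw (i : ℕ) : (1 : A) ∈ Sw K X m i := by
  apply Submodule.subset_span
  refine ⟨fun _ => 0, ?_⟩
  simp only [pow_zero]
  generalize (0:ℕ) = st
  induction m generalizing st with
  | zero => rfl
  | succ n ih => rw [ap, ← ih, one_mul]

theorem RR (hX : IsQM q qi X) (hq : q * qi = 1) (i i' : ℕ) (h : i' < i) : Rw K X m i * Rw K X m i' ≤ Rw K X m i' * Rw K X m i := by
  have mem : ∀ j < m, ∀ j' < m, X i' j' * X i j ∈ Rw K X m i' * Rw K X m i := fun j hj j' hj' =>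
    Submodule.mul_mem_mul (Submodule.subset_span ⟨j', hj', rfl⟩)
      (Submodule.subset_span ⟨j, hj, rfl⟩)
  unfold Rw
  rw [Submodule.span_mul_span, Submodule.span_le]
  rintro _ ⟨_, ⟨j, hj, rfl⟩, _, ⟨j', hj', rfl⟩, rfl⟩
  show X i j * X i' j' ∈ Rw K X m i' * Rw K X m i
  rcases lt_trichotomy j' j with hl | hl | hl
  · have h1 := hX.qcomm i' i j' j h hl
    rw [← hX.comm i' i j j' h hl] at h1
    rw [← sub_eq_iff_eq_add.mpr h1]
    exact sub_mem (mem _ hj _ hj') (Submodule.smul_mem _ _ (mem _ hj' _ hj))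
  · subst hl
    have h1 := hX.col i' i j' h
    have h2 : X i j' * X i' j' = q • (X i' j' * X i j') := by
      rw [h1, smul_smul, hq, one_smul]
    rw [h2]
    exact Submodule.smul_mem _ _ (mem _ hj _ hj')
  · rw [← hX.comm i' i j' j h hl]
    exact mem _ hj _ hj'

theorem row_mul (hX : IsQM q qi X) (hq : q * qi = 1) (i j : ℕ) : ∀ n st, st ≤ j → j < st + n → ∀ f : ℕ → ℕ, ∃ c : K,
    X i j * ap (fun l => X i l ^ f l) st n =
      c • ap (fun l => X i l ^ (Function.update f j (f j + 1)) l) st n := by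
  intro n
  induction n with
  | zero => intro st h1 h2; omega
  | succ n ih =>
    intro st h1 h2 f
    by_cases h : j = st
    · subst h
      refine ⟨1, ?_⟩
      rw [ap, ap, one_smul, ← mul_assoc, ← pow_succ', Function.update_self]
      congr 1
      apply ap_congr
      intro l hl _
      rw [Function.update_of_ne (by omega)]
    · obtain ⟨c, hc⟩ := ih (st+1) (by omega) (by omega) f
      have hcm : ∀ a, X i j * X i st ^ a = q ^ a • (X i st ^ a * X i j) := by
        intro a
        induction a with
        | zero => simp
        | succ a iha =>
          have h3 : X i j * X i st = q • (X i st * X i j) := by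
            rw [hX.row i st j (by omega), smul_smul, hq, one_smul]
          rw [pow_succ, ← mul_assoc, iha, smul_mul_assoc, mul_assoc (X i st ^ a), h3,
            mul_smul_comm, smul_smul, ← mul_assoc, pow_succ]
      refine ⟨q ^ f st * c, ?_⟩
      rw [ap, ap, ← mul_assoc, hcm, smul_mul_assoc, mul_assoc, hc,
        Function.update_of_ne (Ne.symm h), mul_smul_comm, smul_smul]

theorem RS (hX : IsQM q qi X) (hq : q * qi = 1) (i : ℕ) : Rw K X m i * Sw K X m i ≤ Sw K X m i := by
  conv_lhs => unfold Rw Sw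
  rw [Submodule.span_mul_span, Submodule.span_le]
  rintro _ ⟨_, ⟨j, hj, rfl⟩, _, ⟨f, rfl⟩, rfl⟩
  obtain ⟨c, hc⟩ := row_mul hX hq i j m 0 (Nat.zero_le _) (by simpa using hj) f
  show X i j * _ ∈ _
  rw [hc]
  exact Submodule.smul_mem _ _ (Submodule.subset_span ⟨_, rfl⟩)

theorem RS' (hX : IsQM q qi X) (hq : q * qi = 1) (i i' : ℕ) (h : i' < i) : Rw K X m i * Sw K X m i' ≤ Sw K X m i' * Rw K X m i := by
  have base : ∀ r ∈ Rw K X m i, r ∈ Sw K X m i' * Rw K X m i := fun r hr => by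
    have := Submodule.mul_mem_mul (one_mem_Sw (K := K) (X := X) (m := m) i') hr
    rwa [one_mul] at this
  have step : ∀ j < m, ∀ y, (∀ r ∈ Rw K X m i, r * y ∈ Sw K X m i' * Rw K X m i) →
      (∀ r ∈ Rw K X m i, r * (X i' j * y) ∈ Sw K X m i' * Rw K X m i) := by
    intro j hj y hy r hr
    have h1 : r * X i' j ∈ Rw K X m i' * Rw K X m i :=
      RR hX hq i i' h (Submodule.mul_mem_mul hr (Submodule.subset_span ⟨j, hj, rfl⟩))
    rw [← mul_assoc]
    refine Submodule.mul_induction_on h1 (C := fun x => x * y ∈ Sw K X m i' * Rw K X m i) ?_ ?_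
    · intro a ha b hb
      have h2 := Submodule.mul_mem_mul ha (hy b hb)
      rw [← mul_assoc] at h2
      rw [mul_assoc]
      rw [mul_assoc] at h2
      exact (smll (RS hX hq i')) (by rw [mul_assoc]; exact Submodule.mul_mem_mul ha (hy b hb))
    · intro a b ha hb
      rw [add_mul]; exact add_mem ha hb
  have steps : ∀ j < m, ∀ y, (∀ r ∈ Rw K X m i, r * y ∈ Sw K X m i' * Rw K X m i) → ∀ a : ℕ,
      (∀ r ∈ Rw K X m i, r * (X i' j ^ a * y) ∈ Sw K X m i' * Rw K X m i) := by
    intro j hj y hy a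
    induction a with
    | zero => simpa using hy
    | succ a ih =>
      rw [pow_succ', mul_assoc]
      exact step j hj _ ih
  have aps : ∀ f : ℕ → ℕ, ∀ n st, st + n ≤ m → (∀ r ∈ Rw K X m i,
      r * ap (fun j => X i' j ^ f j) st n ∈ Sw K X m i' * Rw K X m i) := by
    intro f n
    induction n with
    | zero => intro st _ r hr; rw [ap, mul_one]; exact base r hr
    | succ n ih =>
      intro st hst
      exact steps st (by omega) _ (ih (st+1) (by omega)) _
  rw [Submodule.mul_le]
  intro r hr s hs
  refine Submodule.span_induction (p := fun s _ => r * s ∈ Sw K X m i' * Rw K X m i) ?_ ?_ ?_ ?_ hs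
  · rintro _ ⟨f, rfl⟩
    exact aps f m 0 (by simp) r hr
  · simp
  · intro x y _ _ hx hy; rw [mul_add]; exact add_mem hx hy
  · intro c x _ hx; rw [mul_smul_comm]; exact Submodule.smul_mem _ _ hx

theorem RT (hX : IsQM q qi X) (hq : q * qi = 1) (i : ℕ) : ∀ n st, st ≤ i → i < st + n →
    Rw K X m i * ap (Sw K X m) st n ≤ ap (Sw K X m) st n := by
  intro n
  induction n with
  | zero => intro st h1 h2; omega
  | succ n ih =>
    intro st h1 h2
    rw [ap, ← mul_assoc]
    by_cases h : i = st
    · subst h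
      exact smll (RS hX hq i)
    · refine (smll (RS' hX hq i st (by omega))).trans ?_
      rw [mul_assoc]
      exact smlr (ih (st+1) (by omega) (by omega))

theorem one_mem_ap : ∀ n st, (1 : A) ∈ ap (Sw K X m) st n := by
  intro n
  induction n with
  | zero => intro st; exact Submodule.one_le.mp le_rfl
  | succ n ih =>
    intro st
    have := Submodule.mul_mem_mul (one_mem_Sw (K := K) (X := X) (m := m) st) (ih (st+1))
    rwa [one_mul] at this

theorem ap_le : ∀ n st, ap (Sw K X m) st n ≤
    Submodule.span K {y | ∃ e : Ex, y = ap (fun i => ap (fun j => X i j ^ e (i, j)) 0 m) st n} := by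
  intro n
  induction n with
  | zero =>
    intro st
    rw [ap, Submodule.one_le]
    exact Submodule.subset_span ⟨0, rfl⟩
  | succ n ih =>
    intro st
    rw [ap]
    refine (smlr (ih (st+1))).trans ?_
    unfold Sw
    rw [Submodule.span_mul_span, Submodule.span_le]
    rintro _ ⟨_, ⟨f, rfl⟩, _, ⟨e, rfl⟩, rfl⟩
    apply Submodule.subset_span
    refine ⟨fun p => if p.1 = st then f p.2 else e p, ?_⟩
    rw [ap]
    congr 1
    · apply ap_congr
      intro j _ _
      simp
    · apply ap_congr
      intro i hi _
      apply ap_congr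
      intro j _ _
      show _ = X i j ^ (if i = st then f j else e (i, j))
      rw [if_neg (by omega)]

theorem mono_span (hX : IsQM q qi X) (hq : q * qi = 1) (N : ℕ) (hgen : Algebra.adjoin K {y | ∃ i < N, ∃ j < m, y = X i j} = ⊤) :
    Submodule.span K (Set.range (mono X m N)) = ⊤ := by
  rw [eq_top_iff]
  intro x _
  have hx : x ∈ Algebra.adjoin K {y | ∃ i < N, ∃ j < m, y = X i j} := by rw [hgen]; trivial
  have key : ∀ t ∈ ap (Sw K X m) 0 N, x * t ∈ ap (Sw K X m) 0 N := by
    refine Algebra.adjoin_induction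
      (p := fun x _ => ∀ t ∈ ap (Sw K X m) 0 N, x * t ∈ ap (Sw K X m) 0 N) ?_ ?_ ?_ ?_ hx
    · rintro _ ⟨i, hi, j, hj, rfl⟩ t ht
      exact RT hX hq i N 0 (Nat.zero_le _) (by simpa using hi)
        (Submodule.mul_mem_mul (Submodule.subset_span ⟨j, hj, rfl⟩) ht)
    · intro r t ht
      rw [← Algebra.smul_def]; exact Submodule.smul_mem _ _ ht
    · intro x y _ _ h1 h2 t ht
      rw [add_mul]; exact add_mem (h1 t ht) (h2 t ht)
    · intro x y _ _ h1 h2 t ht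
      rw [mul_assoc]; exact h1 _ (h2 t ht)
  have h1 := key 1 (one_mem_ap N 0)
  rw [mul_one] at h1
  have h2 := ap_le N 0 h1
  refine Submodule.span_mono ?_ h2
  rintro _ ⟨e, rfl⟩
  exact ⟨e, rfl⟩
end span

end QG

namespace QG
variable {k : Type} [Field k]
open LaurentPolynomial (T)

/-- row embedding -/
def rowE (m n : ℕ) (i : ℕ) (h : i < m + n) : RowI m n := ⟨(i : ℤ) - m, by
  simp only [Finset.mem_Icc]; omega⟩

/-- generators indexed by natural numbers -/
def gX (k : Type) [Field k] (m n i j : ℕ) : QMat k m n :=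
  if h : i < m + n ∧ j < m then av k m n (rowE m n i h.1) (colE m ⟨j, h.2⟩) else 0

theorem gX_pos {m n i j : ℕ} (h : i < m + n) (h' : j < m) :
    gX k m n i j = qgen k (RowI m n) (ColI m) (rowE m n i h) (colE m ⟨j, h'⟩) := by
  rw [gX, dif_pos ⟨h, h'⟩, av]

theorem gX_neg {m n i j : ℕ} (h : ¬ (i < m + n ∧ j < m)) :
    gX k m n i j = 0 := by
  rw [gX, dif_neg h]

theorem gX_isQM (m n : ℕ) : IsQM (qParam k) (qInv k) (gX k m n) := by
  have hg := qgen_isQM (k := k) (RowI m n) (ColI m)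
  have hr : ∀ i i' h h', i < i' → rowE m n i h < rowE m n i' h' := by
    intro i i' h h' hi
    show (i : ℤ) - m < (i' : ℤ) - m
    omega
  have hc : ∀ j j' h h', j < j' → colE m ⟨j, h⟩ < colE m ⟨j', h'⟩ := by
    intro i i' h h' hi
    show -(m:ℤ) + (i : ℤ) < -(m:ℤ) + (i' : ℤ)
    omega
  refine ⟨fun i i' j h => ?_, fun i j j' h => ?_, fun i i' j j' h h' => ?_,
    fun i i' j j' h h' => ?_⟩
  · by_cases hi : i' < m + n ∧ j < m
    · rw [gX_pos (i := i) (by omega) hi.2, gX_pos hi.1 hi.2]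
      exact hg.col _ _ _ (hr _ _ _ _ h)
    · rw [gX_neg hi]; simp
  · by_cases hi : i < m + n ∧ j' < m
    · rw [gX_pos (j := j) hi.1 (by omega), gX_pos hi.1 hi.2]
      exact hg.row _ _ _ (hc _ _ _ _ h)
    · rw [gX_neg hi]; simp
  · by_cases hi : i' < m + n ∧ j < m
    · rw [gX_pos (i := i) (by omega) hi.2, gX_pos (j := j') hi.1 (by omega)]
      exact hg.comm _ _ _ _ (hr _ _ _ _ h) (hc _ _ _ _ h')
    · by_cases hi1 : i' < m + n
      · rw [gX_neg (i := i) (j := j) (by omega)]; simp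
      · rw [gX_neg (i := i') (j := j') (by omega)]; simp
  · by_cases hi : i' < m + n ∧ j' < m
    · rw [gX_pos (i := i) (j := j) (by omega) (by omega), gX_pos hi.1 hi.2,
        gX_pos (i := i) (j := j') (by omega) (by omega),
        gX_pos (i := i') (j := j) (by omega) (by omega)]
      exact hg.qcomm _ _ _ _ (hr _ _ _ _ h) (hc _ _ _ _ h')
    · rw [gX_neg hi]
      by_cases hi1 : i' < m + n
      · rw [gX_neg (i := i) (j := j') (by omega)]; simp
      · rw [gX_neg (i := i') (j := j) (by omega)]; simp

theorem qgen_eq_gX (m n : ℕ) (i : RowI m n) (j : ColI m) :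
    qgen k (RowI m n) (ColI m) i j = gX k m n (i.1 + m).toNat (j.1 + m).toNat ∧
      (i.1 + m).toNat < m + n ∧ (j.1 + m).toNat < m := by
  have hi := Finset.mem_Icc.mp i.2
  have hj := Finset.mem_Icc.mp j.2
  have h1 : (i.1 + m).toNat < m + n := by omega
  have h2 : (j.1 + m).toNat < m := by omega
  refine ⟨?_, h1, h2⟩
  rw [gX_pos h1 h2]
  congr 1
  · apply Subtype.ext
    show i.1 = ((i.1 + m).toNat : ℤ) - m
    omega
  · apply Subtype.ext
    show j.1 = -(m:ℤ) + ((j.1 + m).toNat : ℤ)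
    omega

theorem gX_adjoin (m n : ℕ) :
    Algebra.adjoin (kq k) {y | ∃ i < m + n, ∃ j < m, y = gX k m n i j} = ⊤ := by
  rw [eq_top_iff]
  intro x _
  obtain ⟨y, rfl⟩ := RingQuot.mkAlgHom_surjective (kq k) (QMRel k (RowI m n) (ColI m)) x
  refine FreeAlgebra.induction (kq k) (RowI m n × ColI m) (motive := fun y =>
    (RingQuot.mkAlgHom (kq k) (QMRel k (RowI m n) (ColI m))) y ∈
      Algebra.adjoin (kq k) {y | ∃ i < m + n, ∃ j < m, y = gX k m n i j}) ?_ ?_ ?_ ?_ y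
  · intro r
    rw [AlgHom.commutes]; exact Subalgebra.algebraMap_mem _ _
  · rintro ⟨i, j⟩
    apply Algebra.subset_adjoin
    obtain ⟨h1, h2, h3⟩ := qgen_eq_gX (k := k) m n i j
    exact ⟨_, h2, _, h3, h1⟩
  · intro a b ha hb
    rw [map_mul]; exact mul_mem ha hb
  · intro a b ha hb
    rw [map_add]; exact add_mem ha hb

/-- the faithful representation -/
def rep (k : Type) [Field k] (m n : ℕ) : QMat k m n →ₐ[kq k] EV k :=
  qlift (fun (i : RowI m n) (j : ColI m) => bo (k := k) m (i.1 + m).toNat (j.1 + m).toNat)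
    ((bo_isQM (k := k) m).comp (f := fun i : RowI m n => (i.1 + m).toNat)
      (g := fun j : ColI m => (j.1 + m).toNat)
      (by
        intro a b h
        have ha := Finset.mem_Icc.mp a.2
        have hb := Finset.mem_Icc.mp b.2
        have : a.1 < b.1 := h
        show (a.1 + m).toNat < (b.1 + m).toNat
        omega)
      (by
        intro a b h
        have ha := Finset.mem_Icc.mp a.2
        have hb := Finset.mem_Icc.mp b.2
        have : a.1 < b.1 := h
        show (a.1 + m).toNat < (b.1 + m).toNat
        omega))

theorem rep_gX {m n i j : ℕ} (h : i < m + n) (h' : j < m) : rep k m n (gX k m n i j) = bo m i j := by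
  rw [gX_pos h h', rep, qlift_qgen]
  congr 1
  · show (((i:ℤ) - m) + m).toNat = i
    omega
  · show ((-(m:ℤ) + (j:ℤ)) + m).toNat = j
    omega

/-- ordered monomials in `QMat` -/
def mon (k : Type) [Field k] (m n : ℕ) (e : Ex) : QMat k m n := mono (gX k m n) m (m+n) e

theorem rep_mon (m n : ℕ) (e : Ex) : rep k m n (mon k m n e) = mono (bo m) m (m+n) e := by
  rw [mon, mono_map]
  unfold mono
  apply ap_congr
  intro i _ hi
  apply ap_congr
  intro j _ hj
  simp only
  rw [rep_gX (by omega) (by omega)]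

/-- coefficients in the monomial basis -/
def cf (k : Type) [Field k] (m n : ℕ) : QMat k m n →ₗ[kq k] VV k :=
  (LinearMap.applyₗ (Finsupp.single 0 1)).comp (rep k m n).toLinearMap

theorem cf_apply (m n : ℕ) (x : QMat k m n) : cf k m n x = rep k m n x (Finsupp.single 0 1) := rfl

theorem cf_mon (m n : ℕ) (e : Ex) : cf k m n (mon k m n e) = Finsupp.single (bx m (m+n) e) 1 := by
  rw [cf_apply, rep_mon, mono_vac]

theorem mono_bx {A : Type*} [Monoid A] (X : ℕ → ℕ → A) (m N : ℕ) (e : Ex) :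
    mono X m N (bx m N e) = mono X m N e := by
  unfold mono
  apply ap_congr
  intro i _ hi
  apply ap_congr
  intro j _ hj
  simp only [bx]
  rw [if_pos (by omega)]

theorem bx_bx (m N : ℕ) (e : Ex) : bx m N (bx m N e) = bx m N e := by
  funext p
  simp only [bx]
  split_ifs <;> rfl

/-- inverse of `cf` -/
def icf (k : Type) [Field k] (m n : ℕ) : VV k →ₗ[kq k] QMat k m n :=
  Finsupp.linearCombination (kq k) (mon k m n)

theorem cf_ind {m n : ℕ} {C : QMat k m n → Prop} (x : QMat k m n) (h0 : C 0)
    (ha : ∀ x y, C x → C y → C (x + y))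
    (hm : ∀ (c : kq k) (e : Ex), bx m (m+n) e = e → C (c • mon k m n e)) : C x := by
  have hx : x ∈ Submodule.span (kq k) (Set.range (mono (gX k m n) m (m+n))) := by
    rw [mono_span (gX_isQM m n) qq (m+n) (gX_adjoin m n)]; trivial
  rw [Finsupp.mem_span_range_iff_exists_finsupp] at hx
  obtain ⟨c, rfl⟩ := hx
  rw [Finsupp.sum]
  refine Finset.sum_induction _ C ha h0 ?_
  intro e _
  have := hm (c e) (bx m (m+n) e) (bx_bx _ _ _)
  rwa [mon, mono_bx] at this

theorem icf_cf {m n : ℕ} (x : QMat k m n) : icf k m n (cf k m n x) = x := by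
  refine cf_ind (C := fun x => icf k m n (cf k m n x) = x) x ?_ ?_ ?_
  · simp
  · intro x y hx hy; simp only [map_add, hx, hy]
  · intro c e he
    rw [map_smul, map_smul, cf_mon, he, icf, Finsupp.linearCombination_single, one_smul]

theorem cf_inj {m n : ℕ} {x y : QMat k m n} (h : cf k m n x = cf k m n y) : x = y := by
  rw [← icf_cf x, h, icf_cf]

theorem cf_box {m n : ℕ} (x : QMat k m n) (e : Ex) (h : cf k m n x e ≠ 0) : bx m (m+n) e = e := by
  revert h
  refine cf_ind (C := fun x => cf k m n x e ≠ 0 → bx m (m+n) e = e) x ?_ ?_ ?_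
  · simp
  · intro x y hx hy h
    rw [map_add, Finsupp.add_apply] at h
    by_cases h1 : cf k m n x e = 0
    · exact hy (fun h2 => h (by rw [h1, h2, add_zero]))
    · exact hx h1
  · intro c e' he h
    rw [map_smul, cf_mon, Finsupp.smul_apply, he] at h
    by_cases h1 : e' = e
    · rw [← h1, he]
    · rw [Finsupp.single_eq_of_ne (by tauto)] at h
      simp at h

/-- box trichotomy -/
theorem elt_tri {m N : ℕ} {e e' : Ex} (h : bx m N e = e) (h' : bx m N e' = e') :
    e = e' ∨ elt e e' ∨ elt e' e := by
  by_cases hne : e = e'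
  · exact Or.inl hne
  right
  have hz : ∀ f : Ex, bx m N f = f → ∀ p : ℕ × ℕ, ¬ (p.1 < N ∧ p.2 < m) → f p = 0 := by
    intro f hf p hp
    rw [← hf]; exact if_neg hp
  let S := ((Finset.range N) ×ˢ (Finset.range m)).filter (fun p => e p ≠ e' p)
  have hS : S.Nonempty := by
    obtain ⟨p, hp⟩ := Function.ne_iff.mp hne
    refine ⟨p, ?_⟩
    by_cases hb : p.1 < N ∧ p.2 < m
    · simp [S, hb.1, hb.2, hp]
    · exact absurd ((hz e h p hb).trans (hz e' h' p hb).symm) hp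
  obtain ⟨p, hp, hmax⟩ := Finset.exists_max_image S (fun p => (toLex p : ℕ ×ₗ ℕ)) hS
  have hagree : ∀ r, plt p r → e r = e' r := by
    intro r hr
    by_contra hc
    have hrS : r ∈ S := by
      by_cases hb : r.1 < N ∧ r.2 < m
      · simp [S, hb.1, hb.2, hc]
      · exact absurd ((hz e h r hb).trans (hz e' h' r hb).symm) hc
    have := hmax r hrS
    rw [Prod.Lex.le_iff] at this
    simp only [ofLex_toLex] at this
    unfold plt at hr
    omega
  have hpne : e p ≠ e' p := by
    simp only [S, Finset.mem_filter] at hp; exact hp.2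
  rcases lt_or_gt_of_ne hpne with hl | hl
  · exact Or.inl ⟨p, hl, hagree⟩
  · exact Or.inr ⟨p, hl, fun r hr => (hagree r hr).symm⟩

/-- box well-foundedness -/
theorem elt_wf (m N : ℕ) : WellFounded (fun e e' : {e : Ex // bx m N e = e} => elt e.1 e'.1) := by
  let r : (Fin N × Fin m) → (Fin N × Fin m) → Prop :=
    fun a b => plt (b.1.1, b.2.1) (a.1.1, a.2.1)
  haveI : IsStrictTotalOrder (Fin N × Fin m) r :=
    { trichotomous := by
        intro a b h1 h2
        rcases plt_tri (a.1.1, a.2.1) (b.1.1, b.2.1) with h | h | h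
        · exact absurd h h2
        · simp only [Prod.mk.injEq] at h
          exact Prod.ext (Fin.ext h.1) (Fin.ext h.2)
        · exact absurd h h1
      irrefl := by
        intro a h
        simp only [r, plt] at h
        omega
      trans := by
        intro a b c h1 h2
        exact plt_trans h2 h1 }
  have hw : WellFounded (Pi.Lex r (fun {_} => (· < · : ℕ → ℕ → Prop))) :=
    Pi.Lex.wellFounded r (fun _ => wellFounded_lt)
  have := InvImage.wf (fun (e : {e : Ex // bx m N e = e}) (p : Fin N × Fin m) => e.1 (p.1.1, p.2.1)) hw
  refine Subrelation.wf ?_ this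
  rintro ⟨e, he⟩ ⟨e', he'⟩ ⟨p, h1, h2⟩
  have hb : p.1 < N ∧ p.2 < m := by
    by_contra hb
    have : e' p = 0 := by rw [← he']; exact if_neg hb
    simp only at h1
    omega
  refine ⟨(⟨p.1, hb.1⟩, ⟨p.2, hb.2⟩), ?_, h1⟩
  intro s hs
  exact h2 _ hs

end QG

namespace QG
variable {k : Type} [Field k]
open LaurentPolynomial (T)

/-- the two by two representation of the generators -/
def gS (k : Type) [Field k] (s : ℕ) : ℕ → ℕ → Matrix (Fin 2) (Fin 2) (kq k) :=
  blk s !![qInv k, 0; 0, 1] !![0, 1; 0, 0] 0 !![qParam k, 0; 0, 1]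

theorem gS_isQM (s : ℕ) : IsQM (qParam k) (qInv k) (gS k s) := by
  have h := qq (k := k)
  have h' : qInv k * qParam k = 1 := by rw [mul_comm]; exact h
  apply blk_isQM
  · ext i j; fin_cases i <;> fin_cases j <;> simp [Matrix.mul_apply, Fin.sum_univ_two]
  · simp
  · simp
  · ext i j; fin_cases i <;> fin_cases j <;> simp [Matrix.mul_apply, Fin.sum_univ_two, h']
  · simp
  · ext i j; fin_cases i <;> fin_cases j <;> simp [Matrix.mul_apply, Fin.sum_univ_two, h, h']

theorem gS_lower {s i j : ℕ} (h : j < i) : gS k s i j = 0 := by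
  unfold gS blk
  split_ifs <;> first | rfl | (exfalso; omega)

theorem gS_diag_prod (s m : ℕ) (hs : s + 1 < m) :
    (List.ofFn fun t : Fin m => gS k s t t).prod = 1 := by
  obtain ⟨n, rfl⟩ : ∃ n, m = n + 1 := ⟨m - 1, by omega⟩
  obtain ⟨pre, post, h1, h2⟩ := ofFn_split (A := Matrix (Fin 2) (Fin 2) (kq k)) n ⟨s, by omega⟩
  have h3 := h2 (fun t : Fin (n+1) => gS k s t t) (fun _ => 1) (by
    intro u hu1 hu2
    have hu1' : (u : ℕ) ≠ s := fun h => hu1 (Fin.ext h)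
    have hu2' : (u : ℕ) ≠ s + 1 := fun h => hu2 (Fin.ext h)
    simp [gS, blk, hu1', hu2'])
  have h4 := h1 (fun _ => 1)
  rw [h1, h3.1, h3.2]
  have h5 : (List.ofFn fun _ : Fin (n+1) => (1 : Matrix (Fin 2) (Fin 2) (kq k))).prod = 1 := by
    apply List.prod_eq_one
    intro x hx
    rw [List.mem_ofFn] at hx
    obtain ⟨_, rfl⟩ := hx
    rfl
  rw [h5] at h4
  have h6 : gS k s s s * gS k s (s+1) (s+1) = 1 := by
    have h := qq (k := k)
    have h' : qInv k * qParam k = 1 := by rw [mul_comm]; exact h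
    ext i j
    fin_cases i <;> fin_cases j <;> simp [gS, blk, Matrix.mul_apply, Fin.sum_univ_two, h']
  show pre _ * (gS k s s s * gS k s (s+1) (s+1)) * post _ = 1
  rw [h6]; rw [mul_one, mul_one] at h4; rw [mul_one]; exact h4.symm

/-- the lift on square matrices -/
def psiM (k : Type) [Field k] (m s : ℕ) : SqMat k m 0 →ₐ[kq k] Matrix (Fin 2) (Fin 2) (kq k) :=
  qlift (fun (i : RowI m 0) (j : RowI m 0) => gS k s (i.1 + m).toNat (j.1 + m).toNat)
    ((gS_isQM (k := k) s).comp (f := fun i : RowI m 0 => (i.1 + m).toNat)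
      (g := fun j : RowI m 0 => (j.1 + m).toNat)
      (by
        intro a b h
        have ha := Finset.mem_Icc.mp a.2
        have hb := Finset.mem_Icc.mp b.2
        have : a.1 < b.1 := h
        show (a.1 + m).toNat < (b.1 + m).toNat
        omega)
      (by
        intro a b h
        have ha := Finset.mem_Icc.mp a.2
        have hb := Finset.mem_Icc.mp b.2
        have : a.1 < b.1 := h
        show (a.1 + m).toNat < (b.1 + m).toNat
        omega))

theorem psiM_gen (m s : ℕ) (i j : Fin m) :
    psiM k m s (qgen k (RowI m 0) (RowI m 0) (sqE m i) (sqE m j)) = gS k s i j := by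
  rw [psiM, qlift_qgen]
  congr 1
  · show (-(m:ℤ) + (i : ℕ) + m).toNat = i
    omega
  · show (-(m:ℤ) + (j : ℕ) + m).toNat = j
    omega

theorem psiM_det (m s : ℕ) (hs : s + 1 < m) : psiM k m s (sqDet k m 0) = 1 := by
  rw [sqDet_eq, qMinorG, map_sum]
  have : ∀ σ : Equiv.Perm (Fin m), psiM k m s (qCoeff k (inversions ⇑σ) •
      (List.ofFn fun t : Fin m => qgen k (RowI m 0) (RowI m 0) (sqE m t) (sqE m (σ t))).prod) =
      qCoeff k (inversions ⇑σ) • (List.ofFn fun t : Fin m => gS k s t (σ t)).prod := by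
    intro σ
    rw [map_smul, map_list_prod, List.map_ofFn]
    congr 3
    funext t
    exact psiM_gen m s _ _
  simp only [this]
  rw [Finset.sum_eq_single (1 : Equiv.Perm (Fin m))]
  · have hi : inversions ⇑(1 : Equiv.Perm (Fin m)) = 0 := by
      unfold inversions
      rw [Finset.card_eq_zero, Finset.filter_eq_empty_iff]
      rintro ⟨a, b⟩ _ ⟨h1, h2⟩
      exact absurd h1 (lt_asymm h2)
    rw [hi]
    simp only [Equiv.Perm.one_apply]
    rw [gS_diag_prod s m hs]
    simp [qCoeff]
  · intro σ _ hσ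
    have : ∃ t, σ t < t := by
      by_contra hc
      push Not at hc
      apply hσ
      have hm : ∀ t, σ t = t := by
        intro t
        have hsum : ∑ t, ((σ t : Fin m) : ℕ) = ∑ t : Fin m, (t : ℕ) :=
          Equiv.sum_comp σ (fun t : Fin m => (t : ℕ))
        have := (Finset.sum_eq_sum_iff_of_le (s := Finset.univ) (f := fun i : Fin m => (i : ℕ)) (g := fun i : Fin m => ((σ i : Fin m) : ℕ)) (fun (i : Fin m) _ => hc i)).mp hsum.symm t
          (Finset.mem_univ _)
        exact Fin.ext this.symm
      exact Equiv.ext hm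
    obtain ⟨t, ht⟩ := this
    rw [List.prod_eq_zero, smul_zero]
    rw [List.mem_ofFn]
    exact ⟨t, gS_lower ht⟩
  · simp

/-- the representation of the SL algebra -/
def psi (k : Type) [Field k] (m s : ℕ) (hs : s + 1 < m) :
    QSL k m 0 →ₐ[kq k] Matrix (Fin 2) (Fin 2) (kq k) :=
  RingQuot.liftAlgHom (kq k) ⟨psiM k m s, by
    rintro x y ⟨rfl, rfl⟩
    rw [psiM_det m s hs, map_one]⟩

theorem psi_gF (m s : ℕ) (hs : s + 1 < m) (i j : Fin m) : psi k m s hs (gF k m i j) = gS k s i j := by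
  rw [gF, qgSL, psi, qslMk, RingQuot.liftAlgHom_mkAlgHom_apply]
  exact psiM_gen m s i j

/-- the combined map -/
def theta (k : Type) [Field k] (m n s : ℕ) (hs : s + 1 < m) :
    QMat k m n ⊗[kq k] QSL k m 0 →ₐ[kq k] Matrix (Fin 2) (Fin 2) (QMat k m n) :=
  Algebra.TensorProduct.lift (Matrix.scalarAlgHom (Fin 2) (kq k))
    ((Algebra.ofId (kq k) (QMat k m n)).mapMatrix.comp (psi k m s hs)) (by
      intro x y
      show _ * _ = _ * _
      ext i j
      simp [Matrix.mul_apply, Algebra.ofId_apply, Matrix.diagonal_apply]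
      exact (Algebra.commutes _ _).symm)

/-- upper triangular matrices -/
def UU {A : Type*} [Ring A] [Algebra (kq k) A] (x : A) (κ : ℤ) (y : A) : Matrix (Fin 2) (Fin 2) A :=
  !![T (R := k) κ • x, y; 0, x]

theorem UU_mul {A : Type*} [Ring A] [Algebra (kq k) A] (x y x' y' : A) (κ κ' : ℤ) :
    UU (k := k) x κ y * UU (k := k) x' κ' y' =
      UU (k := k) (x * x') (κ + κ') (T (R := k) κ • (x * y') + y * x') := by
  unfold UU
  rw [Matrix.mul_fin_two, LaurentPolynomial.T_add, mul_smul]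
  simp only [mul_zero, zero_mul, add_zero, zero_add, smul_mul_assoc, mul_smul_comm]
  rw [smul_comm, smul_zero]

theorem UU_one {A : Type*} [Ring A] [Algebra (kq k) A] : UU (k := k) (1 : A) 0 0 = 1 := by
  unfold UU
  ext i j
  fin_cases i <;> fin_cases j <;> simp

theorem theta_gen {m n : ℕ} {ρ : QMat k m n →ₐ[kq k] QMat k m n ⊗[kq k] QSL k m 0}
    (hρ : rhoqProp k m n ρ) {s : ℕ} (hs : s + 1 < m) (i j : ℕ) :
    theta k m n s hs (ρ (gX k m n i j)) =
      if j = s then UU (k := k) (gX k m n i j) (-1) 0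
      else if j = s + 1 then UU (k := k) (gX k m n i j) 1 (gX k m n i s)
      else UU (k := k) (gX k m n i j) 0 0 := by
  by_cases hb : i < m + n ∧ j < m
  swap
  · rw [gX_neg hb, map_zero, map_zero]
    have hz : UU (k := k) (0 : QMat k m n) 0 0 = 0 := by
      unfold UU
      ext a b
      fin_cases a <;> fin_cases b <;> simp
    have hz' : UU (k := k) (0 : QMat k m n) (-1) 0 = 0 := by
      unfold UU
      ext a b
      fin_cases a <;> fin_cases b <;> simp
    have hz2 : UU (k := k) (0 : QMat k m n) 1 0 = 0 := by
      unfold UU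
      ext a b
      fin_cases a <;> fin_cases b <;> simp
    split_ifs with h1 h2
    · rw [hz']
    · rw [gX_neg (i := i) (j := s) (by omega), hz2]
    · rw [hz]
  have h1 : theta k m n s hs (ρ (gX k m n i j)) = ∑ l : Fin m,
      Matrix.scalarAlgHom (Fin 2) (kq k) (gX k m n i l) *
      (Algebra.ofId (kq k) (QMat k m n)).mapMatrix (gS k s l j) := by
    have h0 := rho_gen hρ (rowE m n i hb.1) ⟨j, hb.2⟩
    have : gX k m n i j = av k m n (rowE m n i hb.1) (colE m ⟨j, hb.2⟩) := gX_pos hb.1 hb.2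
    rw [this, h0, map_sum]
    refine Finset.sum_congr rfl fun l _ => ?_
    rw [theta, Algebra.TensorProduct.lift_tmul, AlgHom.comp_apply, psi_gF, gX_pos hb.1 l.2]
    rfl
  have key : ∀ (S : Finset (Fin m)) , (∀ l ∉ S, gS k s l j = 0) → theta k m n s hs (ρ (gX k m n i j)) = 
      ∑ l ∈ S, Matrix.scalarAlgHom (Fin 2) (kq k) (gX k m n i l) *
      (Algebra.ofId (kq k) (QMat k m n)).mapMatrix (gS k s l j) := by
    intro S hS
    rw [h1]
    symm
    apply Finset.sum_subset (Finset.subset_univ _)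
    intro l _ hl
    rw [hS l hl, map_zero, mul_zero]
  split_ifs with h2 h3
  · subst h2
    rw [key {⟨j, hb.2⟩}, Finset.sum_singleton]
    · ext a b
      fin_cases a <;> fin_cases b <;> simp [UU, gS, blk, Matrix.mul_apply, Fin.sum_univ_two, Matrix.diagonal_apply, Algebra.ofId_apply, Algebra.smul_def, qInv]
      exact (Algebra.commutes _ _).symm
    · intro l hl
      have : (l : ℕ) ≠ j := fun h => hl (by simp [Fin.ext_iff, h])
      unfold gS blk
      split_ifs <;> first | rfl | (exfalso; omega)
  · subst h3
    rw [key {⟨s, by omega⟩, ⟨s+1, hb.2⟩}, Finset.sum_pair (by simp)]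
    · ext a b
      fin_cases a <;> fin_cases b <;> simp [UU, gS, blk, Matrix.mul_apply, Fin.sum_univ_two, Matrix.diagonal_apply, Algebra.ofId_apply, Algebra.smul_def, qParam]
      exact (Algebra.commutes _ _).symm
    · intro l hl
      have h1 : (l : ℕ) ≠ s := fun h => hl (by simp [Fin.ext_iff, h])
      have h2 : (l : ℕ) ≠ s + 1 := fun h => hl (by simp [Fin.ext_iff, h])
      unfold gS blk
      split_ifs <;> first | rfl | (exfalso; omega)
  · rw [key {⟨j, hb.2⟩}, Finset.sum_singleton]
    · ext a b
      fin_cases a <;> fin_cases b <;> simp [UU, gS, blk, Matrix.mul_apply, Fin.sum_univ_two, Matrix.diagonal_apply, Algebra.ofId_apply, Algebra.smul_def, qParam, h2, h3]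
    · intro l hl
      have : (l : ℕ) ≠ j := fun h => hl (by simp [Fin.ext_iff, h])
      unfold gS blk
      split_ifs <;> first | rfl | (exfalso; omega)

theorem theta_coinv {m n : ℕ} {s : ℕ} (hs : s + 1 < m) (x : QMat k m n) :
    theta k m n s hs (x ⊗ₜ 1) = UU (k := k) x 0 0 := by
  rw [theta, Algebra.TensorProduct.lift_tmul, map_one, mul_one]
  ext a b
  fin_cases a <;> fin_cases b <;> simp [UU, Matrix.diagonal_apply]

end QG

namespace QG
variable {k : Type} [Field k]
open LaurentPolynomial (T)

/-- quantum integers -/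
def qn (k : Type) [Field k] : ℕ → kq k
  | 0 => 0
  | n+1 => 1 + T 2 * qn k n

theorem ap_add {A : Type*} [Monoid A] (x : ℕ → A) (a : ℕ) : ∀ st b,
    ap x st (a + b) = ap x st a * ap x (st + a) b := by
  induction a with
  | zero => intro st b; simp [ap]
  | succ a ih =>
    intro st b
    rw [show a + 1 + b = (a + b) + 1 by omega, ap, ap, ih, mul_assoc]
    congr 3
    omega

section
variable {A : Type*} [Ring A] [Algebra (kq k) A]

theorem UU_ap0 (x : ℕ → A) (y : ℕ → Matrix (Fin 2) (Fin 2) A) : ∀ n st,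
    (∀ i, st ≤ i → i < st + n → y i = UU (k := k) (x i) 0 0) →
    ap y st n = UU (k := k) (ap x st n) 0 0 := by
  intro n
  induction n with
  | zero => intro st _; rw [ap, ap, UU_one]
  | succ n ih =>
    intro st h
    rw [ap, ap, h st le_rfl (by omega), ih (st+1) (fun i h1 h2 => h i (by omega) (by omega)), UU_mul]
    simp

theorem UU_ap (x y : ℕ → A) (κ : ℕ → ℤ) : ∀ n st,
    ap (fun i => UU (k := k) (x i) (κ i) (y i)) st n = UU (k := k) (ap x st n)
      (∑ i ∈ Finset.Ico st (st + n), κ i)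
      (∑ i ∈ Finset.Ico st (st + n), T (R := k) (∑ i' ∈ Finset.Ico st i, κ i') •
        ap (Function.update x i (y i)) st n) := by
  intro n
  induction n with
  | zero => intro st; simp [ap, UU_one]
  | succ n ih =>
    intro st
    rw [ap, ih, UU_mul]
    have h1 : Finset.Ico st (st + (n+1)) = insert st (Finset.Ico (st+1) (st + 1 + n)) := by
      ext a; simp only [Finset.mem_Ico, Finset.mem_insert]; omega
    have hn : st ∉ Finset.Ico (st+1) (st + 1 + n) := by simp
    rw [h1, Finset.sum_insert hn, Finset.sum_insert hn]
    congr 1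
    rw [add_comm]
    congr 1
    · simp only [Finset.Ico_self, Finset.sum_empty, LaurentPolynomial.T_zero, one_smul, ap,
        Function.update_self]
      congr 1
      apply ap_congr
      intro i hi _
      rw [Function.update_of_ne (by omega)]
    · rw [Finset.mul_sum, Finset.smul_sum]
      refine Finset.sum_congr rfl fun i hi => ?_
      rw [Finset.mem_Ico] at hi
      have h2 : Finset.Ico st i = insert st (Finset.Ico (st+1) i) := by
        ext a; simp only [Finset.mem_Ico, Finset.mem_insert]; omega
      rw [h2, Finset.sum_insert (by simp), LaurentPolynomial.T_add, mul_smul, mul_smul_comm, ap,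
        Function.update_of_ne (by omega)]

theorem UU_pow_diag (x : A) (κ : ℤ) (n : ℕ) :
    UU (k := k) x κ 0 ^ n = UU (k := k) (x ^ n) (n * κ) 0 := by
  induction n with
  | zero => simp [UU_one]
  | succ n ih =>
    rw [pow_succ, ih, UU_mul, ← pow_succ]
    simp only [mul_zero, smul_zero, zero_mul, add_zero]
    congr 1
    push_cast; ring

theorem UU_pow_E (x y : A) (hxy : x * y = T (R := k) 1 • (y * x)) (n : ℕ) :
    UU (k := k) x 1 y ^ n = UU (k := k) (x ^ n) n (qn k n • (y * x ^ (n-1))) := by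
  induction n with
  | zero => simp [UU_one, qn]
  | succ n ih =>
    rw [pow_succ', ih, UU_mul, ← pow_succ']
    congr 1
    · push_cast; ring
    · cases n with
      | zero => simp [qn]
      | succ n =>
        simp only [Nat.add_sub_cancel]
        rw [mul_smul_comm, ← mul_assoc, hxy, smul_mul_assoc, mul_assoc, ← pow_succ', show qn k (n+1+1) = 1 + T 2 * qn k (n+1) from rfl]
        have : (T (R := k) 2 : kq k) = T 1 * T 1 := by rw [← LaurentPolynomial.T_add]; rfl
        rw [this]
        module
end

/-- move a box left -/
def mv (s : ℕ) (e : Ex) (i : ℕ) : Ex :=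
  Function.update (Function.update e (i, s) (e (i, s) + 1)) (i, s+1) (e (i, s+1) - 1)
/-- move a box right -/
def mv' (s : ℕ) (e : Ex) (i : ℕ) : Ex :=
  Function.update (Function.update e (i, s) (e (i, s) - 1)) (i, s+1) (e (i, s+1) + 1)

theorem theta_row {m n : ℕ} {ρ : QMat k m n →ₐ[kq k] QMat k m n ⊗[kq k] QSL k m 0}
    (hρ : rhoqProp k m n ρ) {s : ℕ} (hs : s + 1 < m) (i : ℕ) (e : Ex) :
    ap (fun j => theta k m n s hs (ρ (gX k m n i j)) ^ e (i, j)) 0 m =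
      UU (k := k) (ap (fun j => gX k m n i j ^ e (i, j)) 0 m) ((e (i, s+1) : ℤ) - e (i, s))
       ((T (-(e (i, s) : ℤ)) * qn k (e (i, s+1))) •
        ap (fun j => gX k m n i j ^ (mv s e i) (i, j)) 0 m) := by
  obtain ⟨r, rfl⟩ : ∃ r, m = s + (r + 2) := ⟨m - s - 2, by omega⟩
  generalize hm : s + (r + 2) = m at *
  have hap : ∀ {B : Type} [Monoid B] (x : ℕ → B), ap x 0 m =
      ap x 0 s * (x s * (x (s+1) * ap x (s+2) r)) := by
    intro B _ x
    rw [← hm, ap_add, zero_add, ap, ap]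
  have other : ∀ j, j ≠ s → j ≠ s + 1 → theta k m n s hs (ρ (gX k m n i j)) ^ e (i, j) =
      UU (k := k) (gX k m n i j ^ e (i, j)) 0 0 := by
    intro j h1 h2
    rw [theta_gen hρ, if_neg h1, if_neg h2, UU_pow_diag, mul_zero]
  rw [hap, hap (fun j => gX k m n i j ^ e (i, j)), hap (fun j => gX k m n i j ^ (mv s e i) (i, j)),
    UU_ap0 (k := k) (fun j => gX k m n i j ^ e (i, j)) _ s 0 (fun j _ h => other j (by omega) (by omega)),
    UU_ap0 (k := k) (fun j => gX k m n i j ^ e (i, j)) _ r (s+2) (fun j h _ => other j (by omega) (by omega))]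
  have e1 : ap (fun j => gX k m n i j ^ (mv s e i) (i, j)) 0 s =
      ap (fun j => gX k m n i j ^ e (i, j)) 0 s := by
    apply ap_congr
    intro j _ hj
    rw [mv, Function.update_of_ne (by simp; omega), Function.update_of_ne (by simp; omega)]
  have e2 : ap (fun j => gX k m n i j ^ (mv s e i) (i, j)) (s+2) r =
      ap (fun j => gX k m n i j ^ e (i, j)) (s+2) r := by
    apply ap_congr
    intro j _ hj
    rw [mv, Function.update_of_ne (by simp; omega), Function.update_of_ne (by simp; omega)]
  rw [e1, e2]
  have e3 : mv s e i (i, s) = e (i, s) + 1 := by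
    rw [mv, Function.update_of_ne (by simp), Function.update_self]
  have e4 : mv s e i (i, s+1) = e (i, s+1) - 1 := by
    rw [mv, Function.update_self]
  simp only [e3, e4]
  have hc : gX k m n i (s+1) * gX k m n i s = T (R := k) 1 • (gX k m n i s * gX k m n i (s+1)) := by
    rw [(gX_isQM m n).row i s (s+1) (by omega), smul_smul]
    show _ = (qParam k * qInv k) • _
    rw [qq, one_smul]
  rw [theta_gen hρ, if_pos rfl, theta_gen hρ, if_neg (by omega), if_pos rfl, UU_pow_diag,
    UU_pow_E _ _ hc, UU_mul, UU_mul, UU_mul]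
  simp only [LaurentPolynomial.T_zero, one_smul, zero_mul, mul_zero, smul_zero, add_zero, zero_add, mul_smul_comm, smul_mul_assoc]
  congr 1
  · ring
  · rw [← mul_smul, pow_succ, mul_neg_one]
    simp only [mul_assoc]

theorem theta_mon {m n : ℕ} {ρ : QMat k m n →ₐ[kq k] QMat k m n ⊗[kq k] QSL k m 0}
    (hρ : rhoqProp k m n ρ) {s : ℕ} (hs : s + 1 < m) (e : Ex) :
    theta k m n s hs (ρ (mon k m n e)) =
      UU (k := k) (mon k m n e) (∑ i ∈ Finset.range (m+n), ((e (i, s+1) : ℤ) - e (i, s)))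
       (∑ i ∈ Finset.range (m+n), (T (∑ i' ∈ Finset.range i, ((e (i', s+1) : ℤ) - e (i', s))) *
          (T (-(e (i, s) : ℤ)) * qn k (e (i, s+1)))) • mon k m n (mv s e i)) := by
  have h0 : theta k m n s hs (ρ (mon k m n e)) = ((theta k m n s hs).comp ρ) (mon k m n e) := rfl
  rw [h0, mon, mono_map]
  unfold mono
  simp only [AlgHom.comp_apply]
  rw [ap_congr (fun i _ _ => theta_row hρ hs i e), UU_ap]
  simp only [zero_add, Nat.Ico_zero_eq_range]
  congr 1
  refine Finset.sum_congr rfl fun i hi => ?_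
  rw [Finset.mem_range] at hi
  have : ∀ (x : ℕ → QMat k m n) (c : kq k) (y : QMat k m n), ∀ N st, st ≤ i → i < st + N →
      ap (Function.update x i (c • y)) st N = c • ap (Function.update x i y) st N := by
    intro x c y N
    induction N with
    | zero => intro st h1 h2; omega
    | succ N ih =>
      intro st h1 h2
      rw [ap, ap]
      by_cases h : i = st
      · subst h
        rw [Function.update_self, Function.update_self, smul_mul_assoc]
        congr 2
        apply ap_congr
        intro j _ _
        rw [Function.update_of_ne (by omega), Function.update_of_ne (by omega)]
      · rw [ih (st+1) (by omega) (by omega), Function.update_of_ne (Ne.symm h),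
          Function.update_of_ne (Ne.symm h), mul_smul_comm]
  rw [this _ _ _ _ _ (Nat.zero_le _) (by omega), smul_smul]
  congr 1
  apply ap_congr
  intro j _ _
  by_cases h : j = i
  · subst h; rw [Function.update_self]
  · rw [Function.update_of_ne h]
    apply ap_congr
    intro l _ _
    rw [mv, Function.update_of_ne (by simp; omega), Function.update_of_ne (by simp; omega)]

theorem T_eq_one {z : ℤ} (h : T (R := k) z = 1) : z = 0 := by
  rw [← LaurentPolynomial.T_zero] at h
  by_contra hz
  have h2 : (T (R := k) z).coeff 0 = (T (R := k) 0).coeff 0 := by rw [h]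
  rw [LaurentPolynomial.T_apply, LaurentPolynomial.T_apply, if_neg hz, if_pos rfl] at h2
  exact zero_ne_one h2

theorem coinv_E {m n : ℕ} {ρ : QMat k m n →ₐ[kq k] QMat k m n ⊗[kq k] QSL k m 0}
    (hρ : rhoqProp k m n ρ) {x : QMat k m n} (hx : ρ x = x ⊗ₜ[kq k] (1 : QSL k m 0))
    {s : ℕ} (hs : s + 1 < m) :
    (∀ e, cf k m n x e ≠ 0 → ∑ i ∈ Finset.range (m+n), ((e (i, s+1) : ℤ) - e (i, s)) = 0) ∧
    ∀ e, ∑ i ∈ Finset.range (m+n), (if 0 < e (i, s) then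
      T (∑ i' ∈ Finset.range i, ((e (i', s+1) : ℤ) - e (i', s))) *
      (T (-((e (i, s) : ℤ) - 1)) * qn k (e (i, s+1) + 1)) * cf k m n x (mv' s e i) else 0) = 0 := by
  set f := cf k m n x with hf
  have h1 : theta k m n s hs (ρ x) = ∑ e ∈ f.support, f e • theta k m n s hs (ρ (mon k m n e)) := by
    conv_lhs => rw [← icf_cf x, ← hf, icf, Finsupp.linearCombination_apply, Finsupp.sum, map_sum, map_sum]
    simp only [map_smul]
  rw [hx, theta_coinv] at h1
  simp only [theta_mon hρ hs] at h1
  have h00 := congrFun (congrFun h1 0) 0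
  have h01 := congrFun (congrFun h1 0) 1
  simp only [Matrix.sum_apply, Matrix.smul_apply] at h00 h01
  simp only [UU, Matrix.of_apply, Matrix.cons_val_zero, Matrix.cons_val_one, LaurentPolynomial.T_zero, one_smul] at h00 h01
  have hbx : ∀ e ∈ f.support, bx m (m+n) e = e := fun e he => cf_box x e (by
    rw [Finsupp.mem_support_iff] at he; exact he)
  constructor
  · intro e he
    have h2 := congrArg (fun y => cf k m n y e) h00
    simp only [map_sum, map_smul, cf_mon, Finsupp.finset_sum_apply, Finsupp.smul_apply, smul_eq_mul] at h2
    rw [Finset.sum_eq_single e] at h2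
    · rw [hbx e (by simpa using he), Finsupp.single_eq_same, mul_one, ← hf] at h2
      apply T_eq_one (k := k)
      have h3 : f e * 1 = f e * T (∑ i ∈ Finset.range (m + n), ((e (i, s + 1) : ℤ) - e (i, s))) := by
        rw [mul_one]; exact h2
      exact (mul_left_cancel₀ he h3).symm
    · intro e' he' hne
      rw [hbx e' he', Finsupp.single_eq_of_ne (Ne.symm hne), mul_zero, mul_zero]
    · intro h; exact absurd (by simpa using he) h
  · intro e
    by_cases hbe : bx m (m+n) e = e
    swap
    · apply Finset.sum_eq_zero
      intro i hi
      rw [Finset.mem_range] at hi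
      split_ifs with h
      · have : f (mv' s e i) = 0 := by
          by_contra hc
          have hb := cf_box x _ hc
          apply hbe
          funext p
          have h5 := congrFun hb p
          simp only [bx, mv'] at h5 ⊢
          split_ifs at h5 ⊢ with hp
          · rfl
          · rw [Function.update_of_ne, Function.update_of_ne] at h5
            · exact h5
            · rintro rfl; simp at hp; omega
            · rintro rfl; simp at hp; omega
        rw [this, mul_zero]
      · rfl
    have h2 := congrArg (fun y => cf k m n y e) h01
    simp only [map_sum, map_smul, cf_mon, Finsupp.finset_sum_apply, Finsupp.smul_apply, smul_eq_mul, map_zero, Finsupp.zero_apply] at h2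
    simp only [Finset.mul_sum] at h2
    rw [Finset.sum_comm] at h2
    refine Eq.trans ?_ h2.symm
    refine Finset.sum_congr rfl fun i hi => ?_
    rw [Finset.mem_range] at hi
    have hmvb : ∀ e' ∈ f.support, bx m (m+n) (mv s e' i) = mv s e' i := by
      intro e' he'
      funext p
      have h5 := congrFun (hbx e' he') p
      simp only [bx, mv] at h5 ⊢
      split_ifs at h5 ⊢ with hp
      · rfl
      · rw [Function.update_of_ne, Function.update_of_ne]
        · exact h5
        · rintro rfl; simp at hp; omega
        · rintro rfl; simp at hp; omega
    have hinv : ∀ e' : Ex, 0 < e' (i, s+1) → mv s e' i = e → e' = mv' s e i ∧ 0 < e (i, s) := by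
      rintro e' h0 rfl
      have a1 : mv s e' i (i, s) = e' (i, s) + 1 := by
        rw [mv, Function.update_of_ne (by simp), Function.update_self]
      have a2 : mv s e' i (i, s+1) = e' (i, s+1) - 1 := by
        rw [mv, Function.update_self]
      refine ⟨?_, by rw [a1]; omega⟩
      funext p
      rw [mv', a1, a2]
      by_cases hp : p = (i, s+1)
      · subst hp; rw [Function.update_self]; omega
      · rw [Function.update_of_ne hp]
        by_cases hp' : p = (i, s)
        · subst hp'; rw [Function.update_self]; omega
        · rw [Function.update_of_ne hp', mv, Function.update_of_ne hp, Function.update_of_ne hp']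
    have b1 : mv' s e i (i, s) = e (i, s) - 1 := by
      rw [mv', Function.update_of_ne (by simp), Function.update_self]
    have b2 : mv' s e i (i, s+1) = e (i, s+1) + 1 := by
      rw [mv', Function.update_self]
    have b3 : 0 < e (i, s) → mv s (mv' s e i) i = e := by
      intro h0
      funext p
      rw [mv, b1, b2]
      by_cases hp : p = (i, s+1)
      · subst hp; rw [Function.update_self]; omega
      · rw [Function.update_of_ne hp]
        by_cases hp' : p = (i, s)
        · subst hp'; rw [Function.update_self]; omega
        · rw [Function.update_of_ne hp', mv', Function.update_of_ne hp, Function.update_of_ne hp']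
    have b4 : ∀ i' < i, mv' s e i (i', s+1) = e (i', s+1) ∧ mv' s e i (i', s) = e (i', s) := by
      intro i' hi'
      have : ¬ i' = i := by omega
      constructor <;> rw [mv', Function.update_of_ne (by simp [this]), Function.update_of_ne (by simp [this])]
    have hzero : ∀ e' ∈ f.support, e' ≠ mv' s e i ∨ ¬ 0 < e (i, s) →
        f e' * ((T (∑ i' ∈ Finset.range i, ((e' (i', s+1) : ℤ) - e' (i', s))) *
          (T (-(e' (i, s) : ℤ)) * qn k (e' (i, s+1)))) * (Finsupp.single (bx m (m+n) (mv s e' i)) (1 : kq k)) e) = 0 := by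
      intro e' he' hor
      rcases Nat.eq_zero_or_pos (e' (i, s+1)) with h0 | h0
      · rw [h0, qn]; simp
      · rw [hmvb e' he', Finsupp.single_eq_of_ne, mul_zero, mul_zero]
        intro hc
        have := hinv e' h0 hc.symm
        tauto
    split_ifs with h0
    · symm
      rw [Finset.sum_eq_single (mv' s e i)]
      · by_cases hfz : f (mv' s e i) = 0
        · rw [hfz]; simp
        rw [hmvb _ (by simpa using hfz), b3 h0, Finsupp.single_eq_same, b1, b2, mul_one, mul_comm (f _)]
        congr 2
        · congr 1
          refine Finset.sum_congr rfl fun i' hi' => ?_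
          rw [Finset.mem_range] at hi'
          rw [(b4 i' hi').1, (b4 i' hi').2]
        · congr 3
          omega
      · intro e' he' hne
        exact hzero e' he' (Or.inl hne)
      · intro hns
        rw [Finsupp.mem_support_iff, not_not] at hns
        rw [hns, zero_mul]
    · symm
      apply Finset.sum_eq_zero
      intro e' he'
      exact hzero e' he' (Or.inr h0)

end QG

namespace QG
variable {k : Type} [Field k]
open LaurentPolynomial (T)

/-- functions of two exponent columns -/
abbrev V2 (k : Type) [Field k] : Type := (ℕ → ℕ) → (ℕ → ℕ) → kq k

/-- coefficients -/
def ct (k : Type) [Field k] (i : ℕ) (a b : ℕ → ℕ) : kq k :=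
  T (∑ i' ∈ Finset.range i, ((b i' : ℤ) - a i')) * (T (-((a i : ℤ) - 1)) * qn k (b i + 1))

/-- the raising operator -/
def En (k : Type) [Field k] (n : ℕ) : Module.End (kq k) (V2 k) where
  toFun g a b := ∑ i ∈ Finset.range n, (if 0 < a i then
    ct k i a b * g (Function.update a i (a i - 1)) (Function.update b i (b i + 1)) else 0)
  map_add' g h := by
    funext a b
    simp only [Pi.add_apply, ← Finset.sum_add_distrib]
    refine Finset.sum_congr rfl fun i _ => ?_
    split_ifs <;> ring
  map_smul' c g := by
    funext a b
    simp only [Pi.smul_apply, smul_eq_mul, RingHom.id_apply, Finset.mul_sum]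
    refine Finset.sum_congr rfl fun i _ => ?_
    split_ifs <;> ring

/-- derivative -/
def dy (k : Type) [Field k] (n : ℕ) : Module.End (kq k) (V2 k) where
  toFun g a b := qn k (b n + 1) * g a (Function.update b n (b n + 1))
  map_add' g h := by funext a b; simp only [Pi.add_apply]; ring
  map_smul' c g := by funext a b; simp only [Pi.smul_apply, smul_eq_mul, RingHom.id_apply]; ring

/-- derivative -/
def dx (k : Type) [Field k] (n : ℕ) : Module.End (kq k) (V2 k) where
  toFun g a b := T (b n : ℤ) * qn k (a n + 1) * g (Function.update a n (a n + 1)) b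
  map_add' g h := by funext a b; simp only [Pi.add_apply]; ring
  map_smul' c g := by funext a b; simp only [Pi.smul_apply, smul_eq_mul, RingHom.id_apply]; ring

/-- weight operator -/
def Kv (k : Type) [Field k] (n : ℕ) : Module.End (kq k) (V2 k) where
  toFun g a b := T (∑ i' ∈ Finset.range n, ((b i' : ℤ) - a i')) * g a b
  map_add' g h := by funext a b; simp only [Pi.add_apply]; ring
  map_smul' c g := by funext a b; simp only [Pi.smul_apply, smul_eq_mul, RingHom.id_apply]; ring

theorem En_apply (n : ℕ) (g : V2 k) (a b : ℕ → ℕ) :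
    En k n g a b = ∑ i ∈ Finset.range n, (if 0 < a i then
    ct k i a b * g (Function.update a i (a i - 1)) (Function.update b i (b i + 1)) else 0) := rfl
theorem dy_apply (n : ℕ) (g : V2 k) (a b : ℕ → ℕ) :
    dy k n g a b = qn k (b n + 1) * g a (Function.update b n (b n + 1)) := rfl
theorem dx_apply (n : ℕ) (g : V2 k) (a b : ℕ → ℕ) :
    dx k n g a b = T (b n : ℤ) * qn k (a n + 1) * g (Function.update a n (a n + 1)) b := rfl
theorem Kv_apply (n : ℕ) (g : V2 k) (a b : ℕ → ℕ) :
    Kv k n g a b = T (∑ i' ∈ Finset.range n, ((b i' : ℤ) - a i')) * g a b := rfl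

theorem sum_updb (n i : ℕ) (a b : ℕ → ℕ) (z : ℕ) (h : i ≤ n) :
    ∑ i' ∈ Finset.range i, (((Function.update b n z) i' : ℤ) - a i') =
    ∑ i' ∈ Finset.range i, ((b i' : ℤ) - a i') := by
  refine Finset.sum_congr rfl fun j hj => ?_
  rw [Finset.mem_range] at hj
  rw [Function.update_of_ne (by omega)]
theorem sum_upda (n i : ℕ) (a b : ℕ → ℕ) (z : ℕ) (h : i ≤ n) :
    ∑ i' ∈ Finset.range i, ((b i' : ℤ) - (Function.update a n z) i') =
    ∑ i' ∈ Finset.range i, ((b i' : ℤ) - a i') := by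
  refine Finset.sum_congr rfl fun j hj => ?_
  rw [Finset.mem_range] at hj
  rw [Function.update_of_ne (by omega)]

theorem sum_upd2 (n i : ℕ) (a b : ℕ → ℕ) (h : i < n) (h0 : 0 < a i) :
    ∑ i' ∈ Finset.range n, (((Function.update b i (b i + 1)) i' : ℤ) -
      (Function.update a i (a i - 1)) i') =
    ∑ i' ∈ Finset.range n, ((b i' : ℤ) - a i') + 2 := by
  rw [← Finset.add_sum_erase _ _ (Finset.mem_range.mpr h),
    ← Finset.add_sum_erase (Finset.range n) (fun i' => ((b i' : ℤ) - a i')) (Finset.mem_range.mpr h)]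
  rw [Function.update_self, Function.update_self]
  have : ∑ i' ∈ (Finset.range n).erase i, (((Function.update b i (b i + 1)) i' : ℤ) -
      (Function.update a i (a i - 1)) i') = ∑ i' ∈ (Finset.range n).erase i, ((b i' : ℤ) - a i') := by
    refine Finset.sum_congr rfl fun j hj => ?_
    have := Finset.ne_of_mem_erase hj
    rw [Function.update_of_ne this, Function.update_of_ne this]
  rw [this]
  push_cast [Nat.cast_sub (show 1 ≤ a i from h0)]
  ring

theorem dyE (n : ℕ) : dy k n * En k (n+1) = En k (n+1) * dy k n := by
  apply LinearMap.ext; intro g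
  funext a b
  rw [Module.End.mul_apply, Module.End.mul_apply, dy_apply, En_apply, En_apply, Finset.mul_sum]
  refine Finset.sum_congr rfl fun i hi => ?_
  rw [Finset.mem_range] at hi
  split_ifs with h0
  · rw [dy_apply, ct, ct, sum_updb _ _ _ _ _ (by omega)]
    by_cases h : i = n
    · subst h
      simp only [Function.update_self, Function.update_idem]
      ring
    · rw [Function.update_of_ne h, Function.update_of_ne (Ne.symm h), Function.update_comm h]
      ring
  · rw [mul_zero]

theorem dxE (n : ℕ) : dx k n * En k (n+1) = En k (n+1) * dx k n + Kv k (n+1) * dy k n := by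
  apply LinearMap.ext; intro g
  funext a b
  rw [LinearMap.add_apply, Pi.add_apply, Pi.add_apply, Module.End.mul_apply, Module.End.mul_apply,
    Module.End.mul_apply, Kv_apply, dy_apply, dx_apply, En_apply, En_apply, Finset.sum_range_succ,
    Finset.sum_range_succ, Finset.sum_range_succ, mul_add, Finset.mul_sum, add_assoc]
  congr 1
  · refine Finset.sum_congr rfl fun i hi => ?_
    rw [Finset.mem_range] at hi
    have h : i ≠ n := by omega
    rw [Function.update_of_ne h]
    split_ifs with h0
    · rw [dx_apply, ct, ct, sum_upda _ _ _ _ _ (by omega), Function.update_of_ne h,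
        Function.update_of_ne (Ne.symm h), Function.update_of_ne (Ne.symm h), Function.update_comm h]
      ring
    · rw [mul_zero]
  · rw [Function.update_self, if_pos (Nat.succ_pos _), ct, sum_upda _ _ _ _ _ le_rfl]
    rw [dx_apply, ct, LaurentPolynomial.T_add]
    simp only [Function.update_self, Function.update_idem, Nat.add_sub_cancel,
      Function.update_eq_self]
    have q1 : T (R := k) (-(((a n + 1 : ℕ) : ℤ) - 1)) * T (b n : ℤ) = T ((b n : ℤ) - a n) := by
      rw [← LaurentPolynomial.T_add]; congr 1; push_cast; ring
    have q2 : qn k (a n + 1) = 1 + T 2 * qn k (a n) := rfl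
    by_cases h0 : 0 < a n
    · rw [if_pos h0, Nat.sub_add_cancel h0, Function.update_eq_self, q2]
      have q3 : T (R := k) (-((a n : ℤ) - 1)) * T ((b n + 1 : ℕ) : ℤ) = T 2 * T ((b n : ℤ) - a n) := by
        rw [← LaurentPolynomial.T_add, ← LaurentPolynomial.T_add]; congr 1; push_cast; ring
      rw [← q1] at q3 ⊢
      linear_combination (norm := ring_nf) (- T (R := k) (∑ i ∈ Finset.range n, ((b i : ℤ) - a i)) * qn k (b n + 1) * qn k (a n) * g a (Function.update b n (b n + 1))) * q3
    · have : a n = 0 := by omega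
      rw [if_neg h0, ← q1, q2, this]
      simp only [qn]
      ring

theorem EK (n : ℕ) : En k n * Kv k n = T (R := k) 2 • (Kv k n * En k n) := by
  apply LinearMap.ext; intro g
  funext a b
  rw [LinearMap.smul_apply, Pi.smul_apply, Pi.smul_apply, Module.End.mul_apply,
    Module.End.mul_apply, Kv_apply, En_apply, En_apply, smul_eq_mul, Finset.mul_sum, Finset.mul_sum]
  refine Finset.sum_congr rfl fun i hi => ?_
  rw [Finset.mem_range] at hi
  split_ifs with h0
  · rw [Kv_apply, sum_upd2 _ _ _ _ hi h0, LaurentPolynomial.T_add]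
    ring
  · simp

theorem dyEr (n r : ℕ) : dy k n * En k (n+1) ^ r = En k (n+1) ^ r * dy k n :=
  (Commute.pow_right (dyE n) r)

theorem dxEr (n r : ℕ) : dx k n * En k (n+1) ^ (r+1) =
    En k (n+1) ^ (r+1) * dx k n + qn k (r+1) • (Kv k (n+1) * (En k (n+1) ^ r * dy k n)) := by
  induction r with
  | zero => simp [qn, dxE]
  | succ r ih =>
    have h1 : dx k n * En k (n+1) ^ (r+1+1) = (En k (n+1) * dx k n + Kv k (n+1) * dy k n) * En k (n+1) ^ (r+1) := by
      rw [← dxE, pow_succ' _ (r+1), mul_assoc]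
    rw [h1, add_mul, mul_assoc, ih, mul_add, mul_smul_comm, ← mul_assoc (En k (n+1)) (Kv k (n+1)), EK,
      mul_assoc (Kv k (n+1)) (dy k n), dyEr, ← mul_assoc (En k (n+1)) _ (dx k n), ← pow_succ',
      smul_mul_assoc, mul_assoc (Kv k (n+1)) (En k (n+1)), ← mul_assoc (En k (n+1)) _ (dy k n), ← pow_succ',
      show qn k (r+1+1) = 1 + T 2 * qn k (r+1) from rfl]
    module

theorem qn_eval (n : ℕ) : ∃ p : Polynomial k, Polynomial.toLaurent p = qn k n ∧ p.eval 1 = n := by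
  induction n with
  | zero => exact ⟨0, by simp [qn], by simp⟩
  | succ n ih =>
    obtain ⟨p, h1, h2⟩ := ih
    refine ⟨1 + Polynomial.X ^ 2 * p, ?_, ?_⟩
    · rw [map_add, map_mul, h1, map_one, map_pow, Polynomial.toLaurent_X, LaurentPolynomial.T_pow]
      rfl
    · simp [h2, add_comm]

theorem qn_ne [CharZero k] (n : ℕ) : qn k (n+1) ≠ 0 := by
  obtain ⟨p, h1, h2⟩ := qn_eval (k := k) (n+1)
  rw [← h1]
  intro h
  rw [← map_zero (Polynomial.toLaurent (R := k))] at h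
  have := Polynomial.toLaurent_injective h
  rw [this] at h2
  simp at h2
  exact Nat.cast_add_one_ne_zero n h2.symm

end QG

namespace QG
variable {k : Type} [Field k]
open LaurentPolynomial (T)

theorem T_ne (z : ℤ) : T (R := k) z ≠ 0 := (LaurentPolynomial.isUnit_T z).ne_zero

theorem Kv_zero {n : ℕ} {g : V2 k} (h : Kv k n g = 0) : g = 0 := by
  funext a b
  have := congrFun (congrFun h a) b
  rw [Kv_apply] at this
  exact (mul_eq_zero.mp this).resolve_left (T_ne _)

theorem En_low (n : ℕ) (g : V2 k) (h : ∀ a b, g a b ≠ 0 → a n = 0 ∧ b n = 0) :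
    En k (n+1) g = En k n g := by
  funext a b
  rw [En_apply, En_apply, Finset.sum_range_succ, add_eq_left]
  split_ifs
  · have : g (Function.update a n (a n - 1)) (Function.update b n (b n + 1)) = 0 := by
      by_contra h0
      have := (h _ _ h0).2
      rw [Function.update_self] at this
      omega
    rw [this, mul_zero]
  · rfl

theorem En_sup (n : ℕ) (g : V2 k) (h : ∀ a b, g a b ≠ 0 → a n = 0 ∧ b n = 0) :
    ∀ a b, En k n g a b ≠ 0 → a n = 0 ∧ b n = 0 := by
  intro a b h0
  rw [En_apply] at h0
  obtain ⟨i, hi, h1⟩ := Finset.exists_ne_zero_of_sum_ne_zero h0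
  rw [Finset.mem_range] at hi
  split_ifs at h1
  · have := h _ _ (right_ne_zero_of_mul h1)
    rw [Function.update_of_ne (by omega), Function.update_of_ne (by omega)] at this
    exact this
  · exact absurd rfl h1

theorem En_low_pow (n : ℕ) (g : V2 k) (h : ∀ a b, g a b ≠ 0 → a n = 0 ∧ b n = 0) (r : ℕ) :
    (En k (n+1) ^ r) g = (En k n ^ r) g ∧ ∀ a b, (En k n ^ r) g a b ≠ 0 → a n = 0 ∧ b n = 0 := by
  induction r with
  | zero => exact ⟨by simp, by simpa using h⟩
  | succ r ih =>
    rw [pow_succ', pow_succ', Module.End.mul_apply, Module.End.mul_apply, ih.1, En_low _ _ ih.2]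
    exact ⟨rfl, En_sup _ _ ih.2⟩

theorem Lem [CharZero k] (n : ℕ) : ∀ (w : ℕ) (r : ℕ) (l : ℤ) (g : V2 k),
    (∀ a b, g a b ≠ 0 → ∑ i ∈ Finset.range n, (a i + b i) < w ∧
      ∑ i ∈ Finset.range n, ((a i : ℤ) - b i) = l) → g ≠ 0 → (En k n ^ r) g = 0 → - l < r := by
  induction n with
  | zero =>
    intro w r l g hg g0 hE
    have : ∃ a b, g a b ≠ 0 := by
      by_contra h
      push Not at h
      exact g0 (funext fun a => funext fun b => h a b)
    obtain ⟨a, b, hab⟩ := this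
    have h2 := (hg a b hab).2
    simp at h2
    rcases Nat.eq_zero_or_pos r with rfl | hr
    · simp at hE; exact absurd hE g0
    · omega
  | succ n IH =>
    intro w
    induction w with
    | zero =>
      intro r l g hg g0 hE
      have : g = 0 := by
        funext a b
        by_contra h
        have := (hg a b h).1
        omega
      exact absurd this g0
    | succ w ihw =>
      intro r l g hg g0 hE
      rcases r with _ | r
      · simp at hE; exact absurd hE g0
      have hx := congrArg (fun z => z g) (dxEr (k := k) n r)
      have hy := congrArg (fun z => z g) (dyEr (k := k) n (r+1))
      simp only [Module.End.mul_apply, LinearMap.add_apply, LinearMap.smul_apply] at hx hy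
      rw [hE, map_zero] at hx hy
      by_cases h1 : dx k n g = 0
      · by_cases h2 : dy k n g = 0
        · have hs : ∀ a b, g a b ≠ 0 → a n = 0 ∧ b n = 0 := by
            intro a b hab
            constructor
            · by_contra h
              have := congrFun (congrFun h1 (Function.update a n (a n - 1))) b
              rw [dx_apply, Function.update_self, Function.update_idem, Nat.sub_add_cancel (by omega),
                Function.update_eq_self] at this
              obtain ⟨z, hz⟩ := Nat.exists_eq_succ_of_ne_zero h
              rw [hz] at this
              exact mul_ne_zero (mul_ne_zero (T_ne _) (qn_ne z)) hab this
            · by_contra h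
              have := congrFun (congrFun h2 a) (Function.update b n (b n - 1))
              rw [dy_apply, Function.update_self, Function.update_idem, Nat.sub_add_cancel (by omega),
                Function.update_eq_self] at this
              obtain ⟨z, hz⟩ := Nat.exists_eq_succ_of_ne_zero h
              rw [hz] at this
              exact mul_ne_zero (qn_ne z) hab this
          refine IH (w+1) (r+1) l g ?_ g0 ?_
          · intro a b hab
            have h3 := hs a b hab
            have h4 := hg a b hab
            rw [Finset.sum_range_succ, Finset.sum_range_succ, h3.1, h3.2] at h4
            simpa using h4
          · rw [← (En_low_pow n g hs (r+1)).1, hE]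
        · rw [h1, map_zero, zero_add] at hx
          have h3 : (En k (n+1) ^ r) (dy k n g) = 0 := by
            apply Kv_zero (n := n+1)
            exact (smul_eq_zero.mp hx.symm).resolve_left (qn_ne r)
          have := ihw r (l+1) (dy k n g) ?_ h2 h3
          · push_cast; omega
          intro a b hab
          rw [dy_apply] at hab
          have h4 := hg _ _ (right_ne_zero_of_mul hab)
          simp only [Finset.sum_range_succ, Function.update_self] at h4 ⊢
          have e1 : ∑ i ∈ Finset.range n, (a i + Function.update b n (b n + 1) i) = ∑ i ∈ Finset.range n, (a i + b i) := by
            refine Finset.sum_congr rfl fun i hi => ?_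
            rw [Finset.mem_range] at hi
            rw [Function.update_of_ne (by omega)]
          have e2 : ∑ i ∈ Finset.range n, ((a i : ℤ) - Function.update b n (b n + 1) i) = ∑ i ∈ Finset.range n, ((a i : ℤ) - b i) := by
            refine Finset.sum_congr rfl fun i hi => ?_
            rw [Finset.mem_range] at hi
            rw [Function.update_of_ne (by omega)]
          rw [e1, e2] at h4
          push_cast at h4
          omega
      · have h3 : (En k (n+1) ^ (r+1+1)) (dx k n g) = 0 := by
          have h5 : (En k (n+1) ^ (r+1)) (dx k n g) = - (qn k (r+1) • (Kv k (n+1)) ((En k (n+1) ^ r) (dy k n g))) :=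
            eq_neg_of_add_eq_zero_left hx.symm
          rw [pow_succ', Module.End.mul_apply, h5, map_neg, map_smul, ← Module.End.mul_apply (En k (n+1)), EK,
            LinearMap.smul_apply, Module.End.mul_apply, ← Module.End.mul_apply (En k (n+1)), ← pow_succ', ← hy]
          simp
        have := ihw (r+1+1) (l-1) (dx k n g) ?_ h1 h3
        · push_cast at this ⊢; omega
        intro a b hab
        rw [dx_apply] at hab
        have h4 := hg _ _ (right_ne_zero_of_mul hab)
        simp only [Finset.sum_range_succ, Function.update_self] at h4 ⊢
        have e1 : ∑ i ∈ Finset.range n, (Function.update a n (a n + 1) i + b i) = ∑ i ∈ Finset.range n, (a i + b i) := by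
          refine Finset.sum_congr rfl fun i hi => ?_
          rw [Finset.mem_range] at hi
          rw [Function.update_of_ne (by omega)]
        have e2 : ∑ i ∈ Finset.range n, ((Function.update a n (a n + 1) i : ℤ) - b i) = ∑ i ∈ Finset.range n, ((a i : ℤ) - b i) := by
          refine Finset.sum_congr rfl fun i hi => ?_
          rw [Finset.mem_range] at hi
          rw [Function.update_of_ne (by omega)]
        rw [e1, e2] at h4
        push_cast at h4
        omega

/-- gluing -/
def gl (K c : ℕ) (a0 a : ℕ → ℕ) : ℕ → ℕ := fun i => if i < K then a i else if i = K then c else a0 i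

theorem gl_lt {K c : ℕ} {a0 a : ℕ → ℕ} {i : ℕ} (h : i < K) : gl K c a0 a i = a i := if_pos h
theorem gl_eq {K c : ℕ} {a0 a : ℕ → ℕ} : gl K c a0 a K = c := by simp [gl]
theorem gl_gt {K c : ℕ} {a0 a : ℕ → ℕ} {i : ℕ} (h : K < i) : gl K c a0 a i = a0 i := by
  rw [gl, if_neg (by omega), if_neg (by omega)]
theorem gl_upd {K c : ℕ} {a0 a : ℕ → ℕ} {i z : ℕ} (h : i < K) :
    Function.update (gl K c a0 a) i z = gl K c a0 (Function.update a i z) := by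
  funext j
  by_cases hj : j = i
  · subst hj; rw [Function.update_self, gl_lt h, Function.update_self]
  · rw [Function.update_of_ne hj]
    simp only [gl, Function.update_of_ne hj]
theorem gl_upd' {K c : ℕ} {a0 a : ℕ → ℕ} {z : ℕ} :
    Function.update (gl K c a0 a) K z = gl K z a0 a := by
  funext j
  by_cases hj : j = K
  · subst hj; rw [Function.update_self, gl_eq]
  · rw [Function.update_of_ne hj]
    simp only [gl, if_neg hj]
theorem gl_self {K : ℕ} {a0 : ℕ → ℕ} : gl K (a0 K) a0 a0 = a0 := by
  funext j
  simp only [gl]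
  split_ifs with h h'
  · rfl
  · rw [h']
  · rfl

/-- splitting sums at `K` -/
theorem sum_split {A : Type*} [AddCommMonoid A] (f : ℕ → A) {K N : ℕ} (h : K < N) :
    ∑ i ∈ Finset.range N, f i = ∑ i ∈ Finset.range K, f i + f K + ∑ i ∈ Finset.Ico (K+1) N, f i := by
  rw [← Finset.sum_range_succ, Finset.sum_range_add_sum_Ico _ (by omega)]

theorem lattice [CharZero k] (N W : ℕ) (F : V2 k) (hE : En k N F = 0)
    (hF : ∀ a b, F a b ≠ 0 → ∑ i ∈ Finset.range N, (a i + b i) < W ∧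
      ∑ i ∈ Finset.range N, ((a i : ℤ) - b i) = 0)
    (a0 b0 : ℕ → ℕ) (h0 : F a0 b0 ≠ 0)
    (hmax : ∀ K < N, ∀ a b, (∀ i, K < i → a i = a0 i ∧ b i = b0 i) → b0 K < b K → F a b = 0)
    (K : ℕ) (hK : K < N) :
    ∑ i ∈ Finset.range (K+1), b0 i ≤ ∑ i ∈ Finset.range K, a0 i := by
  set w := a0 K + b0 K with hw
  set g : ℕ → V2 k := fun c a b => F (gl K c a0 a) (gl K (w - c) b0 b) with hg
  set Z : ℤ := ∑ i ∈ Finset.Ico (K+1) N, ((a0 i : ℤ) - b0 i) with hZ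
  have wt : ∀ c a b, c ≤ w → g c a b ≠ 0 → ∑ i ∈ Finset.range K, (a i + b i) < W ∧
      ∑ i ∈ Finset.range K, ((a i : ℤ) - b i) = (w : ℤ) - 2 * c - Z := by
    intro c a b hc h
    have := hF _ _ h
    rw [sum_split _ hK, sum_split _ hK, gl_eq, gl_eq] at this
    have e1 : ∑ i ∈ Finset.range K, (gl K c a0 a i + gl K (w - c) b0 b i) = ∑ i ∈ Finset.range K, (a i + b i) := by
      refine Finset.sum_congr rfl fun i hi => ?_
      rw [Finset.mem_range] at hi
      rw [gl_lt hi, gl_lt hi]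
    have e2 : ∑ i ∈ Finset.range K, ((gl K c a0 a i : ℤ) - gl K (w - c) b0 b i) = ∑ i ∈ Finset.range K, ((a i : ℤ) - b i) := by
      refine Finset.sum_congr rfl fun i hi => ?_
      rw [Finset.mem_range] at hi
      rw [gl_lt hi, gl_lt hi]
    have e3 : ∑ i ∈ Finset.Ico (K+1) N, ((gl K c a0 a i : ℤ) - gl K (w - c) b0 b i) = Z := by
      refine Finset.sum_congr rfl fun i hi => ?_
      rw [Finset.mem_Ico] at hi
      rw [gl_gt (by omega), gl_gt (by omega)]
    rw [e1, e2, e3] at this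
    push_cast [hc] at this
    omega
  have gz : ∀ c, c < a0 K → g c = 0 := by
    intro c hc
    funext a b
    refine hmax K hK _ _ ?_ ?_
    · intro i hi; rw [gl_gt hi, gl_gt hi]; exact ⟨rfl, rfl⟩
    · rw [gl_eq]; omega
  have step : ∀ c, c ≤ w → En k K (g c) = if 0 < c then
      (-(T (R := k) (-((w : ℤ) - 2 * (c-1 : ℕ) - Z)) * (T (-((c : ℤ) - 1)) * qn k (w - c + 1)))) • g (c-1) else 0 := by
    intro c hc
    funext a b
    have hh := congrFun (congrFun hE (gl K c a0 a)) (gl K (w-c) b0 b)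
    rw [En_apply, sum_split _ hK] at hh
    have t3 : ∑ i ∈ Finset.Ico (K+1) N, (if 0 < gl K c a0 a i then
        ct k i (gl K c a0 a) (gl K (w-c) b0 b) * F (Function.update (gl K c a0 a) i (gl K c a0 a i - 1))
          (Function.update (gl K (w-c) b0 b) i (gl K (w-c) b0 b i + 1)) else 0) = 0 := by
      refine Finset.sum_eq_zero fun i hi => ?_
      rw [Finset.mem_Ico] at hi
      split_ifs
      · rw [hmax i hi.2 _ _ ?_ ?_, mul_zero]
        · intro j hj
          rw [Function.update_of_ne (by omega), Function.update_of_ne (by omega), gl_gt (by omega), gl_gt (by omega)]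
          exact ⟨rfl, rfl⟩
        · rw [Function.update_self, gl_gt (by omega)]; omega
      · rfl
    have t1 : ∑ i ∈ Finset.range K, (if 0 < gl K c a0 a i then
        ct k i (gl K c a0 a) (gl K (w-c) b0 b) * F (Function.update (gl K c a0 a) i (gl K c a0 a i - 1))
          (Function.update (gl K (w-c) b0 b) i (gl K (w-c) b0 b i + 1)) else 0) = En k K (g c) a b := by
      rw [En_apply]
      refine Finset.sum_congr rfl fun i hi => ?_
      rw [Finset.mem_range] at hi
      rw [gl_lt hi, gl_lt hi, gl_upd hi, gl_upd hi]
      have : ct k i (gl K c a0 a) (gl K (w-c) b0 b) = ct k i a b := by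
        rw [ct, ct, gl_lt hi, gl_lt hi]
        congr 2
        refine Finset.sum_congr rfl fun j hj => ?_
        rw [Finset.mem_range] at hj
        rw [gl_lt (by omega), gl_lt (by omega)]
      rw [this]
    rw [t3, t1, gl_eq, gl_eq, gl_upd', gl_upd', add_zero, Pi.zero_apply, Pi.zero_apply] at hh
    rw [eq_neg_of_add_eq_zero_left hh]
    split_ifs with hc0
    · have e : w - c + 1 = w - (c-1) := by omega
      rw [Pi.smul_apply, Pi.smul_apply, smul_eq_mul, neg_mul, neg_inj, ct, gl_eq, gl_eq]
      have e2 : ∑ i ∈ Finset.range K, ((gl K (w - c) b0 b i : ℤ) - gl K c a0 a i) = - ∑ i ∈ Finset.range K, ((a i : ℤ) - b i) := by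
        rw [← Finset.sum_neg_distrib]
        refine Finset.sum_congr rfl fun i hi => ?_
        rw [Finset.mem_range] at hi
        rw [gl_lt hi, gl_lt hi]; ring
      rw [e2]
      show _ * F _ (gl K (w - c + 1) b0 b) = _ * F _ (gl K (w - (c-1)) b0 b)
      rw [e]
      by_cases hz : g (c-1) a b = 0
      · have hz' : F (gl K (c-1) a0 a) (gl K (w - (c-1)) b0 b) = 0 := hz
        rw [hz', mul_zero, mul_zero]
      · rw [(wt (c-1) a b (by omega) hz).2]
    · simp
  have pw : ∀ j, j ≤ w → ∃ C : kq k, C ≠ 0 ∧ (En k K ^ j) (g w) = C • g (w - j) := by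
    intro j
    induction j with
    | zero => intro _; exact ⟨1, one_ne_zero, by simp⟩
    | succ j ih =>
      intro hj
      obtain ⟨C, hC, hh⟩ := ih (by omega)
      rw [pow_succ', Module.End.mul_apply, hh, map_smul, step (w - j) (by omega), if_pos (by omega), smul_smul]
      refine ⟨_, ?_, rfl⟩
      exact mul_ne_zero hC (neg_ne_zero.mpr (mul_ne_zero (T_ne _) (mul_ne_zero (T_ne _) (qn_ne _))))
  obtain ⟨C, hC, hh⟩ := pw (b0 K) (by omega)
  have ew : w - b0 K = a0 K := by omega
  rw [ew] at hh
  have gne : g (a0 K) ≠ 0 := by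
    intro h
    apply h0
    have := congrFun (congrFun h a0) b0
    simp only [hg] at this
    rw [show w - a0 K = b0 K by omega, gl_self, gl_self] at this
    exact this
  have r1 : (En k K ^ (b0 K + 1)) (g w) = 0 := by
    rw [pow_succ', Module.End.mul_apply, hh, map_smul, step _ (by omega)]
    split_ifs with hc
    · rw [gz _ (by omega), smul_zero, smul_zero]
    · rw [smul_zero]
  have r2 : g w ≠ 0 := by
    intro h
    rw [h, map_zero] at hh
    exact (smul_ne_zero hC gne) hh.symm
  have key := Lem K W (b0 K + 1) _ (g w) (fun a b h => wt w a b le_rfl h) r2 r1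
  have h00 := (hF _ _ h0).2
  rw [sum_split _ hK, ← hZ, Finset.sum_sub_distrib] at h00
  rw [Finset.sum_range_succ]
  zify
  push_cast at key
  omega

end QG

namespace QG
variable {k : Type} [Field k]
open LaurentPolynomial (T)

/-- lattice exponents -/
structure Lat (m N c : ℕ) (e : Ex) : Prop where
  box : bx m N e = e
  col : ∀ j < m, ∑ i ∈ Finset.range N, e (i, j) = c
  lat : ∀ s K, s + 1 < m → K < N →
    ∑ i ∈ Finset.range (K+1), e (i, s+1) ≤ ∑ i ∈ Finset.range K, e (i, s)

/-- replace two columns -/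
def mk2 (s : ℕ) (e : Ex) (a b : ℕ → ℕ) : Ex :=
  fun p => if p.2 = s then a p.1 else if p.2 = s + 1 then b p.1 else e p

theorem mk2_l (s : ℕ) (e : Ex) (a b : ℕ → ℕ) (i : ℕ) : mk2 s e a b (i, s) = a i := by simp [mk2]
theorem mk2_r (s : ℕ) (e : Ex) (a b : ℕ → ℕ) (i : ℕ) : mk2 s e a b (i, s+1) = b i := by simp [mk2]
theorem mk2_mv (s : ℕ) (e : Ex) (a b : ℕ → ℕ) (i : ℕ) :
    mv' s (mk2 s e a b) i = mk2 s e (Function.update a i (a i - 1)) (Function.update b i (b i + 1)) := by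
  funext ⟨i', j⟩
  simp only [mv', mk2_l, mk2_r]
  by_cases h2 : j = s + 1
  · subst h2
    rw [mk2_r]
    by_cases h : i' = i
    · subst h; rw [Function.update_self, Function.update_self]
    · rw [Function.update_of_ne (by simp [h]), Function.update_of_ne (by simp [h]),
        Function.update_of_ne h, mk2_r]
  · rw [Function.update_of_ne (by simp [h2])]
    by_cases h1 : j = s
    · subst h1
      rw [mk2_l]
      by_cases h : i' = i
      · subst h; rw [Function.update_self, Function.update_self]
      · rw [Function.update_of_ne (by simp [h]), Function.update_of_ne h, mk2_l]
    · rw [Function.update_of_ne (by simp [h1])]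
      simp [mk2, h1, h2]

theorem coinv_lat [CharZero k] {m n : ℕ} {ρ : QMat k m n →ₐ[kq k] QMat k m n ⊗[kq k] QSL k m 0}
    (hρ : rhoqProp k m n ρ) {x : QMat k m n} (hx : ρ x = x ⊗ₜ[kq k] (1 : QSL k m 0))
    {e : Ex} (he : cf k m n x e ≠ 0) (hmax : ∀ e', cf k m n x e' ≠ 0 → ¬ elt e e') :
    ∃ c, Lat m (m+n) c e := by
  have hcol : ∀ s, s + 1 < m → ∑ i ∈ Finset.range (m+n), e (i, s+1) = ∑ i ∈ Finset.range (m+n), e (i, s) := by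
    intro s hs
    have := (coinv_E hρ hx hs).1 e he
    rw [Finset.sum_sub_distrib] at this
    zify
    omega
  refine ⟨∑ i ∈ Finset.range (m+n), e (i, 0), cf_box x e he, ?_, ?_⟩
  · intro j
    induction j with
    | zero => intro _; rfl
    | succ j ih => intro hj; rw [hcol j hj, ih (by omega)]
  · intro s K hs hK
    have hE := coinv_E hρ hx hs
    refine lattice (m+n)
      ((∑ e' ∈ (cf k m n x).support, ∑ i ∈ Finset.range (m+n), (e' (i, s) + e' (i, s+1))) + 1)
      (fun a b => cf k m n x (mk2 s e a b)) ?_ ?_ (fun i => e (i, s)) (fun i => e (i, s+1)) ?_ ?_ K hK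
    · funext a b
      have h := hE.2 (mk2 s e a b)
      rw [En_apply]
      refine Eq.trans ?_ h
      refine Finset.sum_congr rfl fun i _ => ?_
      simp only [mk2_l, mk2_r, mk2_mv, ct]
    · intro a b hab
      constructor
      · have : mk2 s e a b ∈ (cf k m n x).support := by simpa using hab
        have h2 := Finset.single_le_sum
          (f := fun e' : Ex => ∑ i ∈ Finset.range (m+n), (e' (i, s) + e' (i, s+1)))
          (fun i _ => Nat.zero_le _) this
        simp only [mk2_l, mk2_r] at h2
        omega
      · have h2 := hE.1 _ hab
        simp only [mk2_l, mk2_r] at h2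
        rw [Finset.sum_sub_distrib] at h2 ⊢
        omega
    · have : mk2 s e (fun i => e (i, s)) (fun i => e (i, s+1)) = e := by
        funext ⟨i, j⟩
        simp only [mk2]
        split_ifs with h h'
        · rw [h]
        · rw [h']
        · rfl
      rw [this]; exact he
    · intro K' hK' a b hag hb
      by_contra h
      refine hmax _ h ⟨(K', s+1), ?_, ?_⟩
      · rw [mk2_r]; exact hb
      · rintro ⟨i, j⟩ hij
        simp only [plt] at hij
        simp only [mk2]
        split_ifs with h1 h2
        · rw [h1]; exact ((hag i (by omega)).1).symm
        · rw [h2]; exact ((hag i (by omega)).2).symm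
        · rfl

/-- exponent of a term of a minor -/
def dS {m : ℕ} (r : Fin m → ℕ) (σ : Fin m → Fin m) : Ex := ∑ t, Pi.single (r t, (σ t : ℕ)) 1

theorem dS_apply {m : ℕ} (r : Fin m → ℕ) (σ : Fin m → Fin m) (i j : ℕ) :
    dS r σ (i, j) = ∑ t, if i = r t ∧ j = σ t then 1 else 0 := by
  rw [dS, Finset.sum_apply]
  refine Finset.sum_congr rfl fun t _ => ?_
  rw [Pi.single_apply]
  simp only [Prod.mk.injEq]

theorem dS_lt {m : ℕ} {r : Fin m → ℕ} (hr : StrictMono r) (σ : Equiv.Perm (Fin m)) (hσ : σ ≠ 1) :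
    elt (dS r σ) (dS r id) := by
  let S := (Finset.univ : Finset (Fin m)).filter (fun t => σ t ≠ t)
  have hS : S.Nonempty := by
    by_contra h
    apply hσ
    ext t
    by_contra h'
    apply h
    refine ⟨t, ?_⟩
    simp only [S, Finset.mem_filter, Finset.mem_univ, true_and]
    intro h2; apply h'; rw [h2]; rfl
  obtain ⟨t0, ht0, hm⟩ := Finset.exists_max_image S id hS
  have h1 : σ t0 ≠ t0 := by simpa [S] using ht0
  have h2 : ∀ t, t0 < t → σ t = t := by
    intro t ht
    by_contra h
    have := hm t (by simpa [S] using h)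
    exact absurd ht (not_lt.mpr this)
  have h3 : σ t0 < t0 := by
    rcases lt_or_gt_of_ne h1 with h | h
    · exact h
    · have := σ.injective (h2 _ h)
      exact absurd this h1
  refine ⟨(r t0, t0), ?_, ?_⟩
  · rw [dS_apply, dS_apply]
    apply Finset.sum_lt_sum
    · intro t _
      rw [if_neg]
      · exact Nat.zero_le _
      · rintro ⟨h4, h5⟩
        have := hr.injective h4
        subst this
        exact h1 (Fin.ext h5.symm)
    · refine ⟨t0, Finset.mem_univ _, ?_⟩
      rw [if_neg, if_pos ⟨rfl, rfl⟩]
      · exact Nat.zero_lt_one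
      · rintro ⟨_, h5⟩
        exact h1 (Fin.ext h5.symm)
  · rintro ⟨i, j⟩ hij
    simp only [plt] at hij
    rw [dS_apply, dS_apply]
    refine Finset.sum_congr rfl fun t _ => ?_
    rcases lt_trichotomy t t0 with h | h | h
    · have := hr h
      rw [if_neg (by omega), if_neg (by omega)]
    · subst h
      have : (σ t : ℕ) < t := h3
      rw [if_neg (by omega), if_neg (by simp only [id]; omega)]
    · rw [h2 t h]; rfl

theorem OL_ofFn {m : ℕ} (f : Fin m → EV k) (d : Fin m → Ex) (h : ∀ t, OL (f t) (d t)) :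
    OL (List.ofFn f).prod (∑ t, d t) := by
  induction m with
  | zero => simpa using OL.one
  | succ m ih =>
    rw [List.ofFn_succ, List.prod_cons, Fin.sum_univ_succ, add_comm (d 0)]
    exact (h 0).mul (ih _ _ (fun t => h t.succ))

theorem inv_one {m : ℕ} : inversions (⇑(1 : Equiv.Perm (Fin m))) = 0 := by
  rw [inversions, Finset.card_eq_zero, Finset.filter_eq_empty_iff]
  rintro p _ ⟨h1, h2⟩
  exact absurd h1 (not_lt.mpr (le_of_lt h2))

theorem OL_minor {m n : ℕ} {r : Fin m → ℕ} (hr : StrictMono r) (hb : ∀ t, r t < m + n) :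
    ∃ a ∈ QDeltaSub k m n, OL (rep k m n a) (dS r id) := by
  let f : Fin m → ℤ := fun t => (r t : ℤ) - m
  have hf : StrictMono f := by
    intro a b h
    have := hr h
    simp only [f]; omega
  have hI : (Finset.univ.image f).card = m := by
    rw [Finset.card_image_of_injective _ hf.injective]; simp
  have hsub : Finset.univ.image f ⊆ Finset.Icc (-(m : ℤ)) ((n : ℤ) - 1) := by
    intro z hz
    obtain ⟨t, _, rfl⟩ := Finset.mem_image.mp hz
    have := hb t
    simp only [Finset.mem_Icc, f]
    omega
  refine ⟨qMinor k m n _ hI hsub, Algebra.subset_adjoin ⟨_, hI, hsub, rfl⟩, ?_⟩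
  have hu := Finset.orderEmbOfFin_unique hI (f := f)
    (fun t => Finset.mem_image.mpr ⟨t, Finset.mem_univ _, rfl⟩) hf
  have e1 : qMinor k m n _ hI hsub = ∑ σ : Equiv.Perm (Fin m), qCoeff k (inversions ⇑σ) •
      (List.ofFn fun t : Fin m => gX k m n (r t) (σ t : ℕ)).prod := by
    rw [qMinor, qMinorG]
    refine Finset.sum_congr rfl fun σ _ => ?_
    congr 3
    funext t
    rw [gX_pos (hb t) (σ t).2]
    congr 1
    apply Subtype.ext
    exact (congrFun hu t).symm
  have e2 : rep k m n (qMinor k m n _ hI hsub) = ∑ σ : Equiv.Perm (Fin m), qCoeff k (inversions ⇑σ) •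
      (List.ofFn fun t : Fin m => bo (k := k) m (r t) (σ t : ℕ)).prod := by
    rw [e1, map_sum]
    refine Finset.sum_congr rfl fun σ _ => ?_
    rw [map_smul, map_list_prod, List.map_ofFn]
    congr 3
    funext t
    exact rep_gX (hb t) (σ t).2
  have e3 : ∀ σ : Equiv.Perm (Fin m), OL (List.ofFn fun t : Fin m => bo (k := k) m (r t) (σ t : ℕ)).prod (dS r σ) :=
    fun σ => OL_ofFn _ _ (fun t => bo_OL _ _ (σ t).2)
  rw [e2, ← Finset.add_sum_erase _ _ (Finset.mem_univ (1 : Equiv.Perm (Fin m)))]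
  apply OL.add
  · rw [inv_one, show qCoeff k 0 = 1 by simp [qCoeff], one_smul]
    exact e3 1
  · apply OLt.sum
    intro σ hσ
    exact (e3 σ).lt_smul (dS_lt hr σ (Finset.ne_of_mem_erase hσ)) _

theorem dS_id {m : ℕ} (r : Fin m → ℕ) (i j : ℕ) :
    dS r id (i, j) = if h : j < m then (if i = r ⟨j, h⟩ then 1 else 0) else 0 := by
  rw [dS_apply]
  split_ifs with h h'
  · rw [Finset.sum_eq_single ⟨j, h⟩]
    · rw [if_pos ⟨h', rfl⟩]
    · intro t _ ht
      rw [if_neg]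
      rintro ⟨_, h2⟩
      exact ht (Fin.ext h2.symm)
    · simp
  · refine Finset.sum_eq_zero fun t _ => ?_
    rw [if_neg]
    rintro ⟨h1, h2⟩
    apply h'
    rw [h1]
    congr 1
    exact Fin.ext h2.symm
  · refine Finset.sum_eq_zero fun t _ => ?_
    rw [if_neg]
    rintro ⟨_, h2⟩
    exact h (by rw [h2]; exact t.2)

theorem lat_real {m n : ℕ} (c : ℕ) : ∀ e, Lat m (m+n) c e →
    ∃ a ∈ QDeltaSub k m n, OL (rep k m n a) e := by
  induction c with
  | zero =>
    intro e he
    refine ⟨1, one_mem _, ?_⟩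
    have : e = 0 := by
      funext ⟨i, j⟩
      by_cases h : i < m + n ∧ j < m
      · have := (Finset.sum_eq_zero_iff.mp (he.col j h.2)) i (Finset.mem_range.mpr h.1)
        simpa using this
      · rw [← he.box]; exact if_neg h
    rw [this, map_one]
    exact OL.one
  | succ c ih =>
    intro e he
    have hex : ∀ j : Fin m, ∃ i, 0 < e (i, j) := by
      intro j
      by_contra h
      push Not at h
      have := he.col j j.2
      rw [Finset.sum_eq_zero (fun i _ => Nat.le_zero.mp (h i))] at this
      omega
    let r : Fin m → ℕ := fun j => Nat.find (hex j)
    have r1 : ∀ j, 0 < e (r j, j) := fun j => Nat.find_spec (hex j)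
    have r2 : ∀ (j : Fin m) i, i < r j → e (i, j) = 0 := fun j i h => by
      have := Nat.find_min (hex j) h
      omega
    have rb : ∀ j, r j < m + n := by
      intro j
      by_contra h
      have h1 := r1 j
      rw [← he.box] at h1
      have : bx m (m+n) e (r j, (j : ℕ)) = 0 := if_neg (fun hh => h hh.1)
      omega
    have rs : ∀ s (h : s + 1 < m), r ⟨s, by omega⟩ < r ⟨s+1, h⟩ := by
      intro s h
      by_contra hc
      have h1 := he.lat s (r ⟨s+1, h⟩) h (rb _)
      rw [Finset.sum_eq_zero (s := Finset.range (r ⟨s+1, h⟩))] at h1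
      · have h2 := r1 ⟨s+1, h⟩
        rw [Finset.sum_range_succ] at h1
        simp only at h2
        omega
      · intro i hi
        rw [Finset.mem_range] at hi
        exact r2 ⟨s, by omega⟩ i (by omega)
    have hr : StrictMono r := by
      have : ∀ d s (h : s + (d+1) < m), r ⟨s, by omega⟩ < r ⟨s+(d+1), h⟩ := by
        intro d
        induction d with
        | zero => intro s h; exact rs s h
        | succ d ihd =>
          intro s h
          exact lt_trans (ihd s (by omega)) (rs (s+(d+1)) (by omega))
      intro a b hab
      have hab' : (a : ℕ) < b := hab
      have h1 := this (b - a - 1) a (by omega)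
      have h2 : (⟨(a : ℕ) + ((b : ℕ) - a - 1 + 1), by omega⟩ : Fin m) = b := by
        apply Fin.ext
        simp only
        omega
      rw [h2] at h1
      exact h1
    let e' : Ex := fun p => e p - dS r id p
    have hle : ∀ p, dS r id p ≤ e p := by
      rintro ⟨i, j⟩
      rw [dS_id]
      split_ifs with h h'
      · have := r1 ⟨j, h⟩
        rw [← h'] at this
        exact this
      · exact Nat.zero_le _
      · exact Nat.zero_le _
    have hadd : e' + dS r id = e := by
      funext p
      exact Nat.sub_add_cancel (hle p)
    have hsum : ∀ K j (h : j < m), ∑ i ∈ Finset.range K, e (i, j) =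
        ∑ i ∈ Finset.range K, e' (i, j) + if r ⟨j, h⟩ < K then 1 else 0 := by
      intro K j h
      have : ∑ i ∈ Finset.range K, dS r id (i, j) = if r ⟨j, h⟩ < K then 1 else 0 := by
        simp only [dS_id, dif_pos h]
        rw [Finset.sum_ite_eq' (Finset.range K)]
        simp only [Finset.mem_range]
      rw [← this, ← Finset.sum_add_distrib]
      refine Finset.sum_congr rfl fun i _ => ?_
      exact (congrFun hadd (i, j)).symm
    have he' : Lat m (m+n) c e' := by
      refine ⟨?_, ?_, ?_⟩
      · funext p
        by_cases h : p.1 < m + n ∧ p.2 < m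
        · exact if_pos h
        · have h1 : e p = 0 := by rw [← he.box]; exact if_neg h
          have h2 : bx m (m+n) e' p = 0 := if_neg h
          rw [h2]
          simp [e', h1]
      · intro j hj
        have := he.col j hj
        rw [hsum _ j hj, if_pos (rb _)] at this
        omega
      · intro s K hs hK
        have h1 := he.lat s K hs hK
        have h2 := rs s hs
        rw [hsum _ (s+1) hs, hsum _ s (by omega)] at h1
        by_cases h3 : r ⟨s+1, hs⟩ < K + 1
        · rw [if_pos h3, if_pos (by omega)] at h1
          omega
        · rw [Finset.sum_eq_zero]
          · exact Nat.zero_le _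
          · intro i hi
            rw [Finset.mem_range] at hi
            have : e (i, s+1) = 0 := r2 ⟨s+1, hs⟩ i (by omega)
            simp [e', this]
    obtain ⟨a', ha', hO'⟩ := ih e' he'
    obtain ⟨D, hD, hOD⟩ := OL_minor (k := k) hr rb
    refine ⟨D * a', mul_mem hD ha', ?_⟩
    rw [map_mul, ← hadd]
    exact hOD.mul hO'

theorem exists_max {m N : ℕ} (S : Finset Ex) (hS : S.Nonempty) (hb : ∀ e ∈ S, bx m N e = e) :
    ∃ e ∈ S, ∀ e' ∈ S, e' = e ∨ elt e' e := by
  induction hS using Finset.Nonempty.cons_induction with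
  | singleton a => exact ⟨a, by simp, by simp⟩
  | cons a S h hS ih =>
    obtain ⟨e, he, hm⟩ := ih (fun e he => hb e (by simp [he]))
    rcases elt_tri (hb a (by simp)) (hb e (by simp [he])) with h1 | h1 | h1
    · refine ⟨e, by simp [he], ?_⟩
      intro e' he'
      rcases Finset.mem_cons.mp he' with h2 | h2
      · left; rw [h2, h1]
      · exact hm _ h2
    · refine ⟨e, by simp [he], ?_⟩
      intro e' he'
      rcases Finset.mem_cons.mp he' with h2 | h2
      · right; rw [h2]; exact h1
      · exact hm _ h2
    · refine ⟨a, by simp, ?_⟩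
      intro e' he'
      rcases Finset.mem_cons.mp he' with h2 | h2
      · left; exact h2
      · right
        rcases hm _ h2 with h3 | h3
        · rw [h3]; exact h1
        · exact elt_trans h3 h1

theorem coinv_delta_aux [CharZero k] {m n : ℕ} {ρ : QMat k m n →ₐ[kq k] QMat k m n ⊗[kq k] QSL k m 0}
    (hρ : rhoqProp k m n ρ) (e : {e : Ex // bx m (m+n) e = e}) : ∀ (x : QMat k m n),
    ρ x = x ⊗ₜ[kq k] (1 : QSL k m 0) →
    (∀ e', cf k m n x e' ≠ 0 → e' = e.1 ∨ elt e' e.1) → x ∈ QDeltaSub k m n := by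
  induction e using (elt_wf m (m+n)).induction with
  | _ e IH =>
  intro x hx hm
  -- a general element all of whose exponents lie strictly below `e`
  have low : ∀ y : QMat k m n, ρ y = y ⊗ₜ[kq k] (1 : QSL k m 0) →
      (∀ e', cf k m n y e' ≠ 0 → elt e' e.1) → y ∈ QDeltaSub k m n := by
    intro y hy hlt
    by_cases h0 : cf k m n y = 0
    · have : y = 0 := cf_inj (by rw [h0, map_zero])
      rw [this]; exact zero_mem _
    · obtain ⟨e1, h1, h2⟩ := exists_max (cf k m n y).support (Finsupp.support_nonempty_iff.mpr h0)
        (m := m) (N := m+n) (fun e' he' => cf_box y e' (by simpa using he'))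
      have h1' : cf k m n y e1 ≠ 0 := by simpa using h1
      exact IH ⟨e1, cf_box y e1 h1'⟩ (hlt _ h1') y hy (fun e' he' => h2 e' (by simpa using he'))
  by_cases h0 : cf k m n x e.1 = 0
  · refine low x hx ?_
    intro e' he'
    rcases hm e' he' with h | h
    · rw [h] at he'; exact absurd h0 he'
    · exact h
  · obtain ⟨c, hc⟩ := coinv_lat hρ hx h0 (by
      intro e' he' hlt
      rcases hm e' he' with h | h
      · rw [h] at hlt; exact elt_irrefl _ hlt
      · exact elt_irrefl _ (elt_trans h hlt))
    obtain ⟨a, ha, hO⟩ := lat_real (k := k) c e.1 hc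
    have hO0 := hO 0
    rw [zero_add, ← cf_apply] at hO0
    obtain ⟨⟨u, hu⟩, hO1⟩ := hO0
    have key : x + (-(cf k m n x e.1 * ↑u⁻¹)) • a ∈ QDeltaSub k m n := by
      refine low _ ?_ ?_
      · rw [map_add, map_smul, hx, delta_coinv hρ ha, TensorProduct.add_tmul, TensorProduct.smul_tmul']
      · intro e' he'
        rw [map_add, map_smul, Finsupp.add_apply, Finsupp.smul_apply, smul_eq_mul] at he'
        by_cases h1 : e' = e.1
        · exfalso; apply he'
          rw [h1, ← hu, neg_mul, mul_assoc, Units.inv_mul, mul_one, add_neg_cancel]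
        · by_cases h2 : cf k m n x e' = 0
          · have h3 : cf k m n a e' ≠ 0 := by
              intro h3; apply he'; rw [h2, h3, mul_zero, add_zero]
            exact (hO1 e' h3).resolve_left h1
          · exact (hm e' h2).resolve_left h1
    have := add_mem key (Subalgebra.smul_mem _ ha (cf k m n x e.1 * ↑u⁻¹))
    rwa [add_assoc, ← add_smul, neg_add_cancel, zero_smul, add_zero] at this

theorem coinv_delta [CharZero k] {m n : ℕ} {ρ : QMat k m n →ₐ[kq k] QMat k m n ⊗[kq k] QSL k m 0}
    (hρ : rhoqProp k m n ρ) {x : QMat k m n} (hx : ρ x = x ⊗ₜ[kq k] (1 : QSL k m 0)) :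
    x ∈ QDeltaSub k m n := by
  by_cases h0 : cf k m n x = 0
  · have : x = 0 := cf_inj (by rw [h0, map_zero])
    rw [this]; exact zero_mem _
  · obtain ⟨e1, h1, h2⟩ := exists_max (cf k m n x).support (Finsupp.support_nonempty_iff.mpr h0)
      (m := m) (N := m+n) (fun e' he' => cf_box x e' (by simpa using he'))
    have h1' : cf k m n x e1 ≠ 0 := by simpa using h1
    exact coinv_delta_aux hρ ⟨e1, cf_box x e1 h1'⟩ x hx (fun e' he' => h2 e' (by simpa using he'))

end QG

/-- over an algebraically closed field of characteristic 0, the quantum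
coactions `ρ^q_{(m,n)}` exist and are unique, and a compatible family `x ∈ k_q[M_∞]` is
coinvariant for all of them iff each component lies in the quantum grassmannian
`k_q[Δ_{m,n}]`; that is, `k_q[M_∞]^{k_q[SL_{∞,0}]} = k̂_q[Δ_∞]`. -/
theorem stmt19 (k : Type) [Field k] [IsAlgClosed k] [CharZero k] :
    (∀ m n : ℕ, 0 < m → 0 < n →
      ∃! ρ : QMat k m n →ₐ[kq k] QMat k m n ⊗[kq k] QSL k m 0, rhoqProp k m n ρ) ∧
    (∀ E : ∀ p q : PIdx, p ≤ q →
        (QMat k q.1.1 q.1.2 →ₐ[kq k] QMat k p.1.1 p.1.2),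
      EqSysProp k E →
      ∀ ρfam : ∀ p : PIdx, QMat k p.1.1 p.1.2 →ₐ[kq k]
        QMat k p.1.1 p.1.2 ⊗[kq k] QSL k p.1.1 0,
      (∀ p : PIdx, rhoqProp k p.1.1 p.1.2 (ρfam p)) →
      ∀ x : ↥(ringInvLim (fun p : PIdx => QMat k p.1.1 p.1.2)
        (fun p q h => (E p q h).toRingHom)),
        (∀ p : PIdx, ρfam p (x.1 p) =
          (x.1 p) ⊗ₜ[kq k] (1 : QSL k p.1.1 0)) ↔
        (∀ p : PIdx, x.1 p ∈ QDeltaSub k p.1.1 p.1.2)) := by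
  refine ⟨?_, ?_⟩
  · intro m n _ _
    obtain ⟨ρ, hρ⟩ := QG.rho_exists (k := k) m n
    exact ⟨ρ, hρ, fun ρ' h' => QG.rho_unique m n ρ' ρ h' hρ⟩
  · intro E _ ρfam hρ x
    constructor
    · intro h p
      exact QG.coinv_delta (hρ p) (h p)
    · intro h p
      exact QG.delta_coinv (hρ p) (h p)

end
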